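/- Let v be a valuation on the compact convex subsets of ℝ^n and define v_p(K) = 2^{np} v(2^{-p} K) for each natural number p. Suppose v is simple, continuous, and satisfies condition (*): v is uniformly bounded on polytopes contained in the unit ball, and there exists M > 0 such that for all small ε > 0, all polytopes P and affine isometries f with P, f(P) ⊂ B(0,ε), one has v(f(P)) = v(P)(1 + αε) with |α| ≤ M. Then for every n-simplex T contained in a small ball B(0,ε), the sequence v_p(T) converges, and its limit ṽ(T) equals v(T) · ∏_{i=1}^{∞} 1/(1 + 2^{1−i} α_i ε) for some sequence (α_i) with |α_i| ≤ M; the infinite product converges since ∑ 2^{1−i} M ε < ∞. -/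

import Mathlib

open MeasureTheory Metric Set Filter Pointwise

/-- A convex body of `ℝ^n`: a nonempty compact convex set. -/
def IsConvexBody {n : ℕ} (K : Set (EuclideanSpace ℝ (Fin n))) : Prop :=
  K.Nonempty ∧ IsCompact K ∧ Convex ℝ K

/-- A (compact convex) polytope: the convex hull of a finite set of points. -/
def IsPolytope {n : ℕ} (P : Set (EuclideanSpace ℝ (Fin n))) : Prop :=
  ∃ s : Finset (EuclideanSpace ℝ (Fin n)), P = convexHull ℝ (s : Set (EuclideanSpace ℝ (Fin n)))

/-- An `n`-simplex: convex hull of `n+1` affinely independent points. -/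
def IsSimplex {n : ℕ} (T : Set (EuclideanSpace ℝ (Fin n))) : Prop :=
  ∃ p : Fin (n + 1) → EuclideanSpace ℝ (Fin n),
    AffineIndependent ℝ p ∧ T = convexHull ℝ (Set.range p)


section PartA1

/-- Euclidean space. -/
abbrev EN (n : ℕ) := EuclideanSpace ℝ (Fin n)

/-- simple continuous valuations -/
structure SV {n : ℕ} (φ : Set (EN n) → ℝ) : Prop where
  empty : φ ∅ = 0
  val : ∀ K L : Set (EN n), IsConvexBody K → IsConvexBody L →
      Convex ℝ (K ∪ L) → φ (K ∪ L) = φ K + φ L - φ (K ∩ L)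
  simple : ∀ K : Set (EN n), IsConvexBody K → affineSpan ℝ K ≠ ⊤ → φ K = 0
  cont : ∀ (K : ℕ → Set (EN n)) (L : Set (EN n)),
      (∀ m, IsConvexBody (K m)) → IsConvexBody L →
      Tendsto (fun m => Metric.hausdorffDist (K m) L) atTop (nhds 0) →
      Tendsto (fun m => φ (K m)) atTop (nhds (φ L))

/-- Hausdorff convergence -/
def HC {n : ℕ} (K : ℕ → Set (EN n)) (L : Set (EN n)) : Prop :=
  Tendsto (fun m => Metric.hausdorffDist (K m) L) atTop (nhds 0)

variable {n : ℕ}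

lemma IsConvexBody.ne {K : Set (EN n)} (h : IsConvexBody K) : K.Nonempty := h.1
lemma IsConvexBody.cpt {K : Set (EN n)} (h : IsConvexBody K) : IsCompact K := h.2.1
lemma IsConvexBody.cvx {K : Set (EN n)} (h : IsConvexBody K) : Convex ℝ K := h.2.2

lemma hausdorff_fin {K L : Set (EN n)} (hK : IsConvexBody K) (hL : IsConvexBody L) :
    hausdorffEDist K L ≠ ⊤ :=
  hausdorffEDist_ne_top_of_nonempty_of_bounded hK.ne hL.ne hK.cpt.isBounded hL.cpt.isBounded

lemma hc_of_approx {K : ℕ → Set (EN n)} {L : Set (EN n)}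
    (h : ∀ r > 0, ∀ᶠ m in atTop, (∀ x ∈ K m, ∃ y ∈ L, dist x y ≤ r) ∧
      (∀ y ∈ L, ∃ x ∈ K m, dist y x ≤ r)) : HC K L := by
  unfold HC
  rw [Metric.tendsto_nhds]
  intro r hr
  filter_upwards [h (r / 2) (by positivity)] with m hm
  have := hausdorffDist_le_of_mem_dist (by positivity) hm.1 hm.2
  rw [Real.dist_eq, sub_zero, abs_of_nonneg hausdorffDist_nonneg]
  linarith

lemma HC.approx {K : ℕ → Set (EN n)} {L : Set (EN n)} (h : HC K L)
    (hK : ∀ m, IsConvexBody (K m)) (hL : IsConvexBody L) {r : ℝ} (hr : 0 < r) :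
    ∀ᶠ m in atTop, (∀ x ∈ K m, ∃ y ∈ L, dist x y < r) ∧
      (∀ y ∈ L, ∃ x ∈ K m, dist x y < r) := by
  have := (Metric.tendsto_nhds.1 h) r hr
  filter_upwards [this] with m hm
  rw [Real.dist_eq, sub_zero, abs_of_nonneg hausdorffDist_nonneg] at hm
  exact ⟨fun x hx => exists_dist_lt_of_hausdorffDist_lt hx hm (hausdorff_fin (hK m) hL),
    fun y hy => exists_dist_lt_of_hausdorffDist_lt' hy hm (hausdorff_fin (hK m) hL)⟩

lemma HC.comp {K : ℕ → Set (EN n)} {L : Set (EN n)} (h : HC K L) {s : ℕ → ℕ}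
    (hs : Tendsto s atTop atTop) : HC (fun m => K (s m)) L :=
  by unfold HC at *; exact h.comp hs

lemma HC.mem_of_tendsto {K : ℕ → Set (EN n)} {L : Set (EN n)} (h : HC K L)
    (hK : ∀ m, IsConvexBody (K m)) (hL : IsConvexBody L) {x : ℕ → EN n} {y : EN n}
    (hx : ∀ᶠ m in atTop, x m ∈ K m) (hxy : Tendsto x atTop (nhds y)) : y ∈ L := by
  rw [← hL.cpt.isClosed.closure_eq, Metric.mem_closure_iff]
  intro r hr
  have h1 := (Metric.tendsto_nhds.1 hxy) (r/2) (by positivity)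
  obtain ⟨m, h1, h2, h3⟩ := (h1.and (hx.and (h.approx hK hL (r := r/2) (by positivity)))).exists
  obtain ⟨z, hz, hz'⟩ := h3.1 _ h2
  refine ⟨z, hz, ?_⟩
  calc dist y z ≤ dist y (x m) + dist (x m) z := dist_triangle _ _ _
    _ < r := by rw [dist_comm y]; linarith

lemma HC.exists_seq {K : ℕ → Set (EN n)} {L : Set (EN n)} (h : HC K L)
    (hK : ∀ m, IsConvexBody (K m)) (hL : IsConvexBody L) {y : EN n} (hy : y ∈ L) :
    ∃ x : ℕ → EN n, (∀ m, x m ∈ K m) ∧ Tendsto x atTop (nhds y) := by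
  have : ∀ m, ∃ x ∈ K m, infDist y (K m) = dist y x :=
    fun m => (hK m).cpt.exists_infDist_eq_dist (hK m).ne y
  choose x hx hx' using this
  refine ⟨x, hx, ?_⟩
  rw [Metric.tendsto_nhds]
  intro r hr
  filter_upwards [h.approx hK hL hr] with m hm
  obtain ⟨z, hz, hz'⟩ := hm.2 y hy
  rw [dist_comm, ← hx' m]
  exact (infDist_le_dist_of_mem hz).trans_lt (by rwa [dist_comm])

/-- interior points of the limit eventually belong to the sequence -/
lemma mem_of_hausdorff {K L : Set (EN n)} (hK : IsConvexBody K) {r : ℝ} {x : EN n}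
    (hx : closedBall x r ⊆ L) (hr : 0 ≤ r)
    (h : ∀ y ∈ L, ∃ z ∈ K, dist z y < r) : x ∈ K := by
  by_contra hxK
  obtain ⟨f, u, h1, h2⟩ := geometric_hahn_banach_point_closed hK.cvx hK.cpt.isClosed hxK
  have hf : f ≠ 0 := by
    rintro rfl
    obtain ⟨k, hk⟩ := hK.ne
    have := h2 k hk
    simp at h1 this; linarith
  -- the Riesz representative
  set w := (InnerProductSpace.toDual ℝ (EN n)).symm f with hw
  have hfw : ∀ y, f y = inner ℝ w y := fun y => by
    rw [hw, InnerProductSpace.toDual_symm_apply]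
  have hw0 : w ≠ 0 := by
    intro h0
    apply hf
    ext y
    rw [hfw, h0]; simp
  have hwn : 0 < ‖w‖ := norm_pos_iff.2 hw0
  obtain ⟨z, hz, hzd⟩ := h (x - (r / ‖w‖) • w) (hx (by
    rw [mem_closedBall, dist_eq_norm]
    simp [norm_smul, abs_of_nonneg hr]
    rw [div_mul_cancel₀ _ hwn.ne']))
  have h3 := h2 z hz
  have h4 : f (z - (x - (r / ‖w‖) • w)) ≤ ‖w‖ * r := by
    rw [hfw]
    refine (real_inner_le_norm _ _).trans ?_
    rw [dist_eq_norm] at hzd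
    gcongr
  rw [map_sub, map_sub, map_smul, hfw w, real_inner_self_eq_norm_sq, smul_eq_mul] at h4
  have : r / ‖w‖ * ‖w‖ ^ 2 = ‖w‖ * r := by field_simp
  linarith

lemma HC.eventually_mem {K : ℕ → Set (EN n)} {L : Set (EN n)} (h : HC K L)
    (hK : ∀ m, IsConvexBody (K m)) (hL : IsConvexBody L) {x : EN n} (hx : x ∈ interior L) :
    ∀ᶠ m in atTop, x ∈ K m := by
  obtain ⟨r, hr, hrL⟩ := Metric.nhds_basis_closedBall.mem_iff.1 (mem_interior_iff_mem_nhds.1 hx)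
  filter_upwards [h.approx hK hL hr] with m hm
  exact mem_of_hausdorff (hK m) hrL hr.le hm.2

/-- Blaschke selection -/
lemma blaschke {K : ℕ → Set (EN n)} (hK : ∀ m, IsConvexBody (K m)) {C : Set (EN n)}
    (hC : IsCompact C) (hKC : ∀ m, K m ⊆ C) :
    ∃ L, IsConvexBody L ∧ L ⊆ C ∧ ∃ s : ℕ → ℕ, StrictMono s ∧ HC (fun m => K (s m)) L := by
  let F : ℕ → TopologicalSpace.NonemptyCompacts (EN n) := fun m => ⟨⟨K m, (hK m).cpt⟩, (hK m).ne⟩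
  have hcomp : IsCompact {L : TopologicalSpace.NonemptyCompacts (EN n) | (L : Set (EN n)) ⊆ C} :=
    TopologicalSpace.NonemptyCompacts.isCompact_subsets_of_isCompact hC
  obtain ⟨L, hL, s, hs, hlim⟩ := hcomp.tendsto_subseq (x := F) (fun m => hKC m)
  have hHC : HC (fun m => K (s m)) (L : Set (EN n)) := by
    have := tendsto_iff_dist_tendsto_zero.1 hlim
    exact this
  refine ⟨L, ⟨L.nonempty, L.isCompact, ?_⟩, hL, s, hs, hHC⟩
  have happ : ∀ y ∈ (L : Set (EN n)), ∃ x : ℕ → EN n, (∀ m, x m ∈ K (s m)) ∧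
      Tendsto x atTop (nhds y) := by
    intro y hy
    have : ∀ m, ∃ x ∈ K (s m), infDist y (K (s m)) = dist y x :=
      fun m => (hK _).cpt.exists_infDist_eq_dist (hK _).ne y
    choose x hx hx' using this
    refine ⟨x, hx, ?_⟩
    rw [Metric.tendsto_nhds]
    intro r hr
    filter_upwards [(Metric.tendsto_nhds.1 hHC) r hr] with m hm
    rw [Real.dist_eq, sub_zero, abs_of_nonneg hausdorffDist_nonneg] at hm
    obtain ⟨z, hz, hz'⟩ := exists_dist_lt_of_hausdorffDist_lt' hy hm
      (hausdorffEDist_ne_top_of_nonempty_of_bounded (hK _).ne L.nonempty (hK _).cpt.isBounded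
        L.isCompact.isBounded)
    rw [dist_comm, ← hx' m]
    exact (infDist_le_dist_of_mem hz).trans_lt (by rwa [dist_comm])
  intro x hx y hy a b ha hb hab
  obtain ⟨xs, h1, h2⟩ := happ x hx
  obtain ⟨ys, h3, h4⟩ := happ y hy
  have h5 : ∀ m, a • xs m + b • ys m ∈ K (s m) := fun m => (hK _).cvx (h1 m) (h3 m) ha hb hab
  have h6 : Tendsto (fun m => a • xs m + b • ys m) atTop (nhds (a • x + b • y)) :=
    (h2.const_smul a).add (h4.const_smul b)
  rw [← L.isCompact.isClosed.closure_eq, Metric.mem_closure_iff]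
  intro r hr
  have h7 := (Metric.tendsto_nhds.1 h6) (r/2) (by positivity)
  obtain ⟨m, h7, hm⟩ := (h7.and ((Metric.tendsto_nhds.1 hHC) (r/2) (by positivity))).exists
  rw [Real.dist_eq, sub_zero, abs_of_nonneg hausdorffDist_nonneg] at hm
  obtain ⟨z, hz, hz'⟩ := exists_dist_lt_of_hausdorffDist_lt (h5 m) hm
      (hausdorffEDist_ne_top_of_nonempty_of_bounded (hK _).ne L.nonempty (hK _).cpt.isBounded
        L.isCompact.isBounded)
  refine ⟨z, hz, ?_⟩
  calc dist _ z ≤ dist _ (a • xs m + b • ys m) + dist (a • xs m + b • ys m) z := dist_triangle _ _ _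
    _ < r := by rw [dist_comm (a • x + b • y)]; linarith

namespace SV
variable {φ : Set (EN n) → ℝ}

lemma zero_of_interior (h : SV φ) {K : Set (EN n)} (hc : IsCompact K) (hk : Convex ℝ K)
    (hi : interior K = ∅) : φ K = 0 := by
  rcases K.eq_empty_or_nonempty with rfl | hne
  · exact h.empty
  · refine h.simple K ⟨hne, hc, hk⟩ fun h' => ?_
    have := hk.interior_nonempty_iff_affineSpan_eq_top.2 h'
    rw [hi] at this
    exact this.ne_empty rfl

lemma val' (h : SV φ) {K L : Set (EN n)} (hK : IsCompact K) (hK' : Convex ℝ K)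
    (hL : IsCompact L) (hL' : Convex ℝ L) (hKL : Convex ℝ (K ∪ L)) :
    φ (K ∪ L) = φ K + φ L - φ (K ∩ L) := by
  rcases K.eq_empty_or_nonempty with rfl | hne
  · simp [h.empty]
  rcases L.eq_empty_or_nonempty with rfl | hne'
  · simp [h.empty]
  exact h.val K L ⟨hne, hK, hK'⟩ ⟨hne', hL, hL'⟩ hKL

lemma zero_of_hyperplane (h : SV φ) {K : Set (EN n)} (hc : IsCompact K) (hk : Convex ℝ K)
    {f : EN n →ₗ[ℝ] ℝ} (hf : f ≠ 0) {c : ℝ} (hK : ∀ x ∈ K, f x = c) : φ K = 0 := by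
  apply h.zero_of_interior hc hk
  by_contra hne
  obtain ⟨x, hx⟩ := Set.nonempty_iff_ne_empty.2 hne
  apply hf
  obtain ⟨r, hr, hrK⟩ := Metric.nhds_basis_ball.mem_iff.1 (mem_interior_iff_mem_nhds.1 hx)
  ext y
  have hxc := hK x (interior_subset hx)
  have hmem : x + (r / (2 * (‖y‖ + 1))) • y ∈ ball x r := by
    rw [mem_ball, dist_eq_norm, add_sub_cancel_left, norm_smul, Real.norm_eq_abs,
      abs_of_pos (by positivity), div_mul_eq_mul_div, div_lt_iff₀ (by positivity)]
    nlinarith [norm_nonneg y]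
  have := hK _ (hrK hmem)
  rw [map_add, hxc, map_smul, smul_eq_mul] at this
  have h2 : (r / (2 * (‖y‖ + 1))) ≠ 0 := by positivity
  have h3 : r / (2 * (‖y‖ + 1)) * f y = 0 := by linarith
  simpa [h2] using h3

lemma cut (h : SV φ) {K : Set (EN n)} (hc : IsCompact K) (hk : Convex ℝ K)
    {f : EN n →ₗ[ℝ] ℝ} (hf : f ≠ 0) (c : ℝ) :
    φ K = φ (K ∩ {x | f x ≤ c}) + φ (K ∩ {x | c ≤ f x}) := by
  have hcf : Continuous f := f.continuous_of_finiteDimensional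
  have e : K = (K ∩ {x | f x ≤ c}) ∪ (K ∩ {x | c ≤ f x}) := by
    ext x; simp only [mem_union, mem_inter_iff, mem_ofPred_eq]
    constructor
    · intro hx
      rcases le_total (f x) c with h | h <;> simp [hx, h]
    · rintro (h | h) <;> exact h.1
  have c1 : Convex ℝ {x | f x ≤ c} := convex_halfSpace_le f.isLinear c
  have c2 : Convex ℝ {x | c ≤ f x} := convex_halfSpace_ge f.isLinear c
  have k1 : IsClosed {x | f x ≤ c} := isClosed_le hcf continuous_const
  have k2 : IsClosed {x | c ≤ f x} := isClosed_le continuous_const hcf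
  have := h.val' (hc.inter_right k1) (hk.inter c1) (hc.inter_right k2) (hk.inter c2) (e ▸ hk)
  rw [← e] at this
  rw [this, h.zero_of_hyperplane (K := (K ∩ {x | f x ≤ c}) ∩ (K ∩ {x | c ≤ f x}))
    ((hc.inter_right k1).inter (hc.inter_right k2)) ((hk.inter c1).inter (hk.inter c2)) hf (c := c)]
  · ring
  · rintro x ⟨⟨-, h1⟩, -, h2⟩
    exact le_antisymm h1 h2

lemma bounded (h : SV φ) {C : Set (EN n)} (hC : IsCompact C) :
    ∃ B, 0 ≤ B ∧ ∀ K ⊆ C, IsCompact K → Convex ℝ K → |φ K| ≤ B := by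
  by_contra hcon
  push Not at hcon
  have : ∀ m : ℕ, ∃ K ⊆ C, IsConvexBody K ∧ (m : ℝ) < |φ K| := by
    intro m
    obtain ⟨K, h1, h2, h3, h4⟩ := hcon m (by positivity)
    refine ⟨K, h1, ⟨?_, h2, h3⟩, h4⟩
    by_contra hne
    rw [Set.not_nonempty_iff_eq_empty] at hne
    rw [hne, h.empty, abs_zero] at h4
    have : (0 : ℝ) ≤ m := by positivity
    linarith
  choose K h1 h2 h3 using this
  obtain ⟨L, hL, -, s, hs, hlim⟩ := blaschke h2 hC h1
  have h4 := (h.cont _ L (fun m => h2 (s m)) hL hlim).abs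
  have h5 : Tendsto (fun m => |φ (K (s m))|) atTop atTop := by
    refine tendsto_atTop_mono (fun m => (h3 (s m)).le) ?_
    exact tendsto_natCast_atTop_atTop.comp hs.tendsto_atTop
  exact not_tendsto_nhds_of_tendsto_atTop h5 _ h4

/-- continuity of intersections -/
lemma cap (h : SV φ) {K : Set (EN n)} (hK : IsCompact K) (hK' : Convex ℝ K) {Q : ℕ → Set (EN n)}
    {Q₀ : Set (EN n)} (hQ : ∀ m, IsConvexBody (Q m)) (hQ₀ : IsConvexBody Q₀) (hlim : HC Q Q₀) :
    Tendsto (fun m => φ (K ∩ Q m)) atTop (nhds (φ (K ∩ Q₀))) := by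
  have hKQc : IsCompact (K ∩ Q₀) := hK.inter hQ₀.cpt
  have hKQv : Convex ℝ (K ∩ Q₀) := hK'.inter hQ₀.cvx
  apply tendsto_of_subseq_tendsto
  intro ns hns
  have hlim' := hlim.comp hns
  by_cases hev : ∀ᶠ m in atTop, (K ∩ Q (ns m)).Nonempty
  · obtain ⟨N, hN⟩ := eventually_atTop.1 hev
    have hb : ∀ m, IsConvexBody (K ∩ Q (ns (m + N))) := fun m =>
      ⟨hN _ (by omega), hK.inter (hQ _).cpt, hK'.inter (hQ _).cvx⟩
    obtain ⟨L, hL, hLK, s, hs, hHC⟩ := blaschke hb hK (fun m => inter_subset_left)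
    refine ⟨fun m => s m + N, ?_⟩
    have h1 := h.cont _ L (fun m => hb (s m)) hL hHC
    have hst : Tendsto (fun m => s m + N) atTop atTop :=
      tendsto_atTop_mono (fun m => Nat.le_add_right _ _) hs.tendsto_atTop
    have hlim2 := hlim'.comp hst
    have hLQ : L ⊆ K ∩ Q₀ := by
      intro y hy
      refine ⟨hLK hy, ?_⟩
      obtain ⟨x, hx, hxy⟩ := hHC.exists_seq (fun m => hb (s m)) hL hy
      exact hlim2.mem_of_tendsto (fun m => hQ _) hQ₀ (Eventually.of_forall fun m => (hx m).2) hxy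
    have : φ L = φ (K ∩ Q₀) := by
      by_cases hi : interior (K ∩ Q₀) = ∅
      · rw [h.zero_of_interior hKQc hKQv hi, h.zero_of_interior hL.cpt hL.cvx]
        exact Set.subset_empty_iff.1 (hi ▸ interior_mono hLQ)
      · congr 1
        apply Subset.antisymm hLQ
        have hne := Set.nonempty_iff_ne_empty.2 hi
        have : closure (interior (K ∩ Q₀)) = K ∩ Q₀ := by
          rw [hKQv.closure_interior_eq_closure_of_nonempty_interior hne, hKQc.isClosed.closure_eq]
        rw [← this]
        apply closure_minimal _ hL.cpt.isClosed
        intro x hx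
        have hxQ : x ∈ interior Q₀ := interior_mono inter_subset_right hx
        have hev2 := hlim2.eventually_mem (fun m => hQ _) hQ₀ hxQ
        refine hHC.mem_of_tendsto (fun m => hb (s m)) hL (x := fun _ => x) ?_ tendsto_const_nhds
        filter_upwards [hev2] with m hm
        exact ⟨(interior_subset hx).1, hm⟩
    rw [← this]
    exact h1
  · have hfr : ∃ᶠ m in atTop, K ∩ Q (ns m) = ∅ := by
      simpa [Filter.Frequently, Set.not_nonempty_iff_eq_empty, Set.nonempty_iff_ne_empty] using hev
    obtain ⟨s, hs, hs'⟩ := extraction_of_frequently_atTop hfr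
    refine ⟨s, ?_⟩
    have : φ (K ∩ Q₀) = 0 := by
      apply h.zero_of_interior hKQc hKQv
      by_contra hi
      obtain ⟨x, hx⟩ := Set.nonempty_iff_ne_empty.2 hi
      have hxQ : x ∈ interior Q₀ := interior_mono inter_subset_right hx
      have hev2 := (hlim'.comp hs.tendsto_atTop).eventually_mem (fun m => hQ _) hQ₀ hxQ
      obtain ⟨m, hm⟩ := hev2.exists
      have : x ∈ K ∩ Q (ns (s m)) := ⟨(interior_subset hx).1, hm⟩
      rw [hs' m] at this
      exact this
    rw [this]
    refine tendsto_const_nhds.congr fun m => ?_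
    rw [hs' m, h.empty]

end SV

end PartA1

section PartA2

/-- translation invariant, even, simple continuous valuations -/
structure TE {n : ℕ} (φ : Set (EN n) → ℝ) : Prop extends SV φ where
  tr : ∀ K : Set (EN n), IsConvexBody K → ∀ t : EN n, φ (t +ᵥ K) = φ K
  even : ∀ K : Set (EN n), IsConvexBody K → φ (-K) = φ K

/-- vanishing on parallelotopes -/
def ZP {n : ℕ} (φ : Set (EN n) → ℝ) : Prop :=
  ∀ u : Fin n → EN n, φ (parallelepiped u) = 0

variable {n : ℕ}

lemma IsConvexBody.vadd {K : Set (EN n)} (h : IsConvexBody K) (t : EN n) :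
    IsConvexBody (t +ᵥ K) := ⟨h.ne.vadd_set, h.cpt.vadd t, h.cvx.vadd t⟩

lemma IsConvexBody.neg {K : Set (EN n)} (h : IsConvexBody K) :
    IsConvexBody (-K) := ⟨h.ne.neg, h.cpt.neg, h.cvx.neg⟩

lemma IsConvexBody.add {K L : Set (EN n)} (h : IsConvexBody K) (h' : IsConvexBody L) :
    IsConvexBody (K + L) := ⟨h.ne.add h'.ne, h.cpt.add h'.cpt, h.cvx.add h'.cvx⟩

lemma mem_vadd_iff {K : Set (EN n)} {t x : EN n} : x ∈ t +ᵥ K ↔ x - t ∈ K := by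
  rw [Set.mem_vadd_set_iff_neg_vadd_mem, vadd_eq_add, neg_add_eq_sub]

lemma TE.tr' {φ : Set (EN n) → ℝ} (h : TE φ) {K : Set (EN n)} (hc : IsCompact K)
    (hk : Convex ℝ K) (t : EN n) : φ (t +ᵥ K) = φ K := by
  rcases K.eq_empty_or_nonempty with rfl | hne
  · simp
  · exact h.tr K ⟨hne, hc, hk⟩ t

/-- splitting data of a space along a vector -/
structure Spl (n : ℕ) (u : EN (n + 1)) where
  L : EN n →ₗ[ℝ] EN (n + 1)
  π : EN (n + 1) →ₗ[ℝ] EN n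
  l : EN (n + 1) →ₗ[ℝ] ℝ
  πL : ∀ a, π (L a) = a
  πu : π u = 0
  lL : ∀ a, l (L a) = 0
  lu : l u = 1
  eq : ∀ x, L (π x) + l x • u = x

lemma exists_spl (u : EN (n + 1)) (hu : u ≠ 0) : Nonempty (Spl n u) := by
  have hun : ‖u‖ ≠ 0 := norm_ne_zero_iff.2 hu
  let l : EN (n + 1) →ₗ[ℝ] ℝ := (‖u‖ ^ 2)⁻¹ • (innerₗ (EN (n+1)) u)
  have lu : l u = 1 := by
    simp [l, hun]
  have hl : l ≠ 0 := by rintro h; rw [h] at lu; simp at lu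
  have hrank : Module.finrank ℝ (LinearMap.ker l) = n := by
    have h1 := LinearMap.finrank_range_add_finrank_ker l
    have h2 : LinearMap.range l = ⊤ := LinearMap.range_eq_top.2 (LinearMap.surjective hl)
    rw [h2] at h1
    simp at h1
    omega
  let e : EN n ≃ₗ[ℝ] LinearMap.ker l := LinearEquiv.ofFinrankEq _ _ (by simp [hrank])
  let p : EN (n + 1) →ₗ[ℝ] LinearMap.ker l :=
    LinearMap.codRestrict (LinearMap.ker l) (LinearMap.id - l.smulRight u) (by
      intro x; simp [lu])
  have hp : ∀ x, (p x : EN (n + 1)) = x - l x • u := fun x => rfl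
  refine ⟨⟨(LinearMap.ker l).subtype ∘ₗ e, e.symm.toLinearMap ∘ₗ p, l, ?_, ?_, ?_, lu, ?_⟩⟩
  · intro a
    have : p (e a : EN (n + 1)) = e a := by
      apply Subtype.ext
      rw [hp, LinearMap.mem_ker.1 (e a).2]; simp
    simp [this]
  · have : p u = 0 := by apply Subtype.ext; rw [hp, lu]; simp
    simp [this]
  · intro a; simp
  · intro x; simp [hp]

namespace Spl
variable {u : EN (n + 1)} (S : Spl n u)

lemma l_ne : S.l ≠ 0 := by intro h; have := S.lu; rw [h] at this; simp at this

/-- the prism over `A` -/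
def pri (d : ℝ) (A : Set (EN n)) : Set (EN (n + 1)) := {x | S.π x ∈ A ∧ 0 ≤ S.l x ∧ S.l x ≤ d}

lemma mem_pri {d : ℝ} {A : Set (EN n)} {x : EN (n + 1)} :
    x ∈ S.pri d A ↔ S.π x ∈ A ∧ 0 ≤ S.l x ∧ S.l x ≤ d := Iff.rfl

lemma πadd (a : EN n) (s : ℝ) : S.π (S.L a + s • u) = a := by simp [S.πL, S.πu]
lemma ladd (a : EN n) (s : ℝ) : S.l (S.L a + s • u) = s := by simp [S.lL, S.lu]

lemma pri_eq (d : ℝ) (A : Set (EN n)) :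
    S.pri d A = (fun p : EN n × ℝ => S.L p.1 + p.2 • u) '' (A ×ˢ Icc 0 d) := by
  ext x
  constructor
  · rintro ⟨h1, h2⟩
    exact ⟨(S.π x, S.l x), ⟨h1, h2⟩, S.eq x⟩
  · rintro ⟨⟨a, s⟩, ⟨h1, h2⟩, rfl⟩
    simp only [mem_pri, πadd, ladd]
    exact ⟨h1, h2⟩

lemma pri_body {d : ℝ} (hd : 0 ≤ d) {A : Set (EN n)} (hA : IsConvexBody A) :
    IsConvexBody (S.pri d A) := by
  have hL : Continuous S.L := S.L.continuous_of_finiteDimensional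
  refine ⟨?_, ?_, ?_⟩
  · rw [pri_eq]; exact (hA.ne.prod (nonempty_Icc.2 hd)).image _
  · rw [pri_eq]; exact (hA.cpt.prod isCompact_Icc).image (by fun_prop)
  · have : S.pri d A = S.π ⁻¹' A ∩ S.l ⁻¹' (Icc 0 d) := rfl
    rw [this]
    exact (hA.cvx.linear_preimage S.π).inter ((convex_Icc 0 d).linear_preimage S.l)

lemma pri_te {φ : Set (EN (n + 1)) → ℝ} (h : TE φ) {d : ℝ} (hd : 0 ≤ d) :
    TE (fun A => φ (S.pri d A)) := by
  have hL : Continuous S.L := S.L.continuous_of_finiteDimensional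
  have hπ : Continuous S.π := S.π.continuous_of_finiteDimensional
  refine ⟨⟨?_, ?_, ?_, ?_⟩, ?_, ?_⟩
  · have : S.pri d ∅ = ∅ := by ext x; simp [mem_pri]
    simp only [this, h.empty]
  · intro A B hA hB hAB
    have e1 : S.pri d (A ∪ B) = S.pri d A ∪ S.pri d B := by
      ext x; simp only [mem_pri, mem_union]; tauto
    have e2 : S.pri d (A ∩ B) = S.pri d A ∩ S.pri d B := by
      ext x; simp only [mem_pri, mem_inter_iff]; tauto
    have hb : IsConvexBody (A ∪ B) := ⟨hA.ne.inl, hA.cpt.union hB.cpt, hAB⟩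
    have := (S.pri_body hd hb).cvx
    rw [e1] at this
    simp only [e1, e2]
    exact h.val _ _ (S.pri_body hd hA) (S.pri_body hd hB) this
  · intro A hA hspan
    refine h.zero_of_interior (S.pri_body hd hA).cpt (S.pri_body hd hA).cvx ?_
    by_contra hne
    apply hspan
    rw [← hA.cvx.interior_nonempty_iff_affineSpan_eq_top]
    obtain ⟨x, hx⟩ := Set.nonempty_iff_ne_empty.2 hne
    refine ⟨S.π x, ?_⟩
    have hnb := mem_interior_iff_mem_nhds.1 hx
    rw [mem_interior_iff_mem_nhds]
    have hc : ContinuousAt (fun a => S.L a + S.l x • u) (S.π x) := by fun_prop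
    have : S.pri d A ∈ nhds (S.L (S.π x) + S.l x • u) := by rw [S.eq]; exact hnb
    filter_upwards [hc this] with a ha
    have := ha.1
    rwa [πadd] at this
  · intro K A hK hA hlim
    apply h.cont _ _ (fun m => S.pri_body hd (hK m)) (S.pri_body hd hA)
    have hlim : HC K A := hlim
    apply hc_of_approx
    intro r hr
    let L' := LinearMap.toContinuousLinearMap S.L
    have key : ∀ (a b : EN n) (s : ℝ), dist (S.L a + s • u) (S.L b + s • u) ≤ ‖L'‖ * dist a b := by
      intro a b s
      rw [dist_add_right]
      exact L'.lipschitz.dist_le_mul a b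
    have hpos : 0 < r / (‖L'‖ + 1) := by positivity
    have key2 : ∀ (a b : EN n) (s : ℝ), dist a b < r / (‖L'‖ + 1) →
        dist (S.L a + s • u) (S.L b + s • u) ≤ r := by
      intro a b s hab
      refine (key a b s).trans ?_
      rw [lt_div_iff₀ (by positivity)] at hab
      nlinarith [dist_nonneg (x := a) (y := b), norm_nonneg L']
    filter_upwards [hlim.approx hK hA hpos] with m hm
    constructor
    · rintro x ⟨h1, h2⟩
      obtain ⟨y, hy, hxy⟩ := hm.1 _ h1
      refine ⟨S.L y + S.l x • u, ?_, ?_⟩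
      · rw [mem_pri, πadd, ladd]; exact ⟨hy, h2⟩
      · have := key2 (S.π x) y (S.l x) hxy
        rwa [S.eq] at this
    · rintro x ⟨h1, h2⟩
      obtain ⟨y, hy, hxy⟩ := hm.2 _ h1
      refine ⟨S.L y + S.l x • u, ?_, ?_⟩
      · rw [mem_pri, πadd, ladd]; exact ⟨hy, h2⟩
      · have := key2 (S.π x) y (S.l x) (by rwa [dist_comm])
        rwa [S.eq] at this
  · intro A hA t
    have : S.pri d (t +ᵥ A) = S.L t +ᵥ S.pri d A := by
      ext x
      simp only [mem_pri, mem_vadd_iff, map_sub, S.πL, S.lL, sub_zero]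
    simp only [this]
    exact h.tr _ (S.pri_body hd hA) _
  · intro A hA
    have : S.pri d (-A) = (d • u) +ᵥ (-(S.pri d A)) := by
      ext x
      simp only [mem_pri, mem_vadd_iff, Set.mem_neg, map_neg, map_sub, map_smul, S.πu, S.lu,
        smul_eq_mul, mul_one, smul_zero, sub_zero]
      constructor <;> rintro ⟨h1, h2, h3⟩ <;> refine ⟨h1, ?_, ?_⟩ <;> linarith
    simp only [this]
    rw [h.tr _ (S.pri_body hd hA).neg, h.even _ (S.pri_body hd hA)]

lemma pri_zp {φ : Set (EN (n + 1)) → ℝ} (h : ZP φ) {d : ℝ} (hd : 0 ≤ d) :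
    ZP (fun A => φ (S.pri d A)) := by
  intro b
  have : S.pri d (parallelepiped b) = parallelepiped (Fin.cons (d • u) (S.L ∘ b)) := by
    ext x
    rw [pri_eq, parallelepiped_eq_sum_segment (Fin.cons (d • u) (S.L ∘ b)), Fin.sum_univ_succ]
    simp only [Fin.cons_zero, Fin.cons_succ]
    rw [← parallelepiped_eq_sum_segment (S.L ∘ b), ← image_parallelepiped]
    rw [Set.mem_add]
    constructor
    · rintro ⟨⟨a, s⟩, ⟨h1, h2⟩, rfl⟩
      refine ⟨s • u, ?_, S.L a, ⟨a, h1, rfl⟩, by simp [add_comm]⟩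
      rcases hd.eq_or_lt with rfl | hd'
      · have : s = 0 := le_antisymm h2.2 h2.1
        simp [this]
      · rw [segment_eq_image]
        refine ⟨s / d, ⟨div_nonneg h2.1 hd, (div_le_one hd').2 h2.2⟩, ?_⟩
        simp [smul_smul, hd'.ne']
    · rintro ⟨y, hy, _, ⟨a, ha, rfl⟩, rfl⟩
      rw [segment_eq_image] at hy
      obtain ⟨θ, hθ, rfl⟩ := hy
      refine ⟨(a, θ * d), ⟨ha, mul_nonneg hθ.1 hd, mul_le_of_le_one_left hd hθ.2⟩, ?_⟩
      simp [smul_smul, add_comm]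
  simp only [this]
  exact h _

end Spl

/-- sweeping -/
def swp (K : Set (EN n)) (u : EN n) (c : ℝ) : Set (EN n) := {x | ∃ s, 0 ≤ s ∧ s ≤ c ∧ x - s • u ∈ K}

lemma swp_body {K : Set (EN n)} (hK : IsConvexBody K) (u : EN n) {c : ℝ} (hc : 0 ≤ c) :
    IsConvexBody (swp K u c) := by
  have : swp K u c = K + (fun s : ℝ => s • u) '' Icc 0 c := by
    ext x
    rw [Set.mem_add]
    constructor
    · rintro ⟨s, h1, h2, h3⟩
      exact ⟨_, h3, _, ⟨s, ⟨h1, h2⟩, rfl⟩, by simp⟩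
    · rintro ⟨y, hy, _, ⟨s, hs, rfl⟩, rfl⟩
      exact ⟨s, hs.1, hs.2, by simpa using hy⟩
  rw [this]
  refine hK.add ⟨(nonempty_Icc.2 hc).image _, isCompact_Icc.image (by fun_prop), ?_⟩
  exact (convex_Icc 0 c).is_linear_image ((LinearMap.id (R := ℝ) (M := ℝ)).smulRight u).isLinear

lemma swp_zero (K : Set (EN n)) (u : EN n) : swp K u 0 = K := by
  ext x
  constructor
  · rintro ⟨s, h1, h2, h3⟩
    have : s = 0 := le_antisymm h2 h1
    simpa [this] using h3
  · intro h; exact ⟨0, le_rfl, le_rfl, by simpa using h⟩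

lemma swp_add {φ : Set (EN n) → ℝ} (h : TE φ) {K : Set (EN n)} (hK : IsConvexBody K) (u : EN n)
    {a b : ℝ} (ha : 0 ≤ a) (hb : 0 ≤ b) :
    φ (swp K u (a + b)) = φ (swp K u a) + φ (swp K u b) - φ K := by
  have e1 : swp K u (a + b) = swp K u a ∪ ((a • u) +ᵥ swp K u b) := by
    ext x
    simp only [mem_union, mem_vadd_iff]
    constructor
    · rintro ⟨s, h1, h2, h3⟩
      rcases le_total s a with hs | hs
      · exact Or.inl ⟨s, h1, hs, h3⟩
      · refine Or.inr ⟨s - a, by linarith, by linarith, ?_⟩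
        convert h3 using 1
        module
    · rintro (⟨s, h1, h2, h3⟩ | ⟨s, h1, h2, h3⟩)
      · exact ⟨s, h1, by linarith, h3⟩
      · refine ⟨s + a, by linarith, by linarith, ?_⟩
        convert h3 using 1
        module
  have e2 : swp K u a ∩ ((a • u) +ᵥ swp K u b) = (a • u) +ᵥ K := by
    ext x
    simp only [mem_inter_iff, mem_vadd_iff]
    constructor
    · rintro ⟨⟨s, h1, h2, h3⟩, ⟨s', h1', h2', h3'⟩⟩
      rcases h2.eq_or_lt with rfl | hlt
      · exact h3
      have hp : 0 < a + s' - s := by linarith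
      have := hK.cvx h3 h3' (a := s' / (a + s' - s)) (b := (a - s) / (a + s' - s))
        (div_nonneg h1' hp.le) (div_nonneg (by linarith) hp.le) (by field_simp; ring)
      convert this using 1
      have e : ∀ (c d : ℝ), c + d = 1 → d * s' - c * (a - s) = 0 →
        x - a • u = c • (x - s • u) + d • (x - a • u - s' • u) := by
        intro c d hcd hz
        have : c • (x - s • u) + d • (x - a • u - s' • u)
          = (c + d) • (x - a • u) - (d * s' - c * (a - s)) • u := by module
        rw [this, hcd, hz]; simp
      exact e _ _ (by field_simp; ring) (by field_simp; ring)
    · intro hx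
      exact ⟨⟨a, ha, le_rfl, hx⟩, ⟨0, le_rfl, hb, by simpa using hx⟩⟩
  have hc := (swp_body hK u (add_nonneg ha hb)).cvx
  rw [e1] at hc ⊢
  rw [h.val _ _ (swp_body hK u ha) ((swp_body hK u hb).vadd _) hc, e2, h.tr _ (swp_body hK u hb),
    h.tr _ hK]

/-- the induction hypothesis -/
def KlainHyp (n : ℕ) : Prop := ∀ φ : Set (EN n) → ℝ, TE φ → ZP φ → ∀ K, IsConvexBody K → φ K = 0

lemma swp_eq (IH : KlainHyp n) {φ : Set (EN (n + 1)) → ℝ} (h : TE φ) (hz : ZP φ)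
    {K : Set (EN (n + 1))} (hK : IsConvexBody K) (u : EN (n + 1)) {d : ℝ} (hd : 0 ≤ d) :
    φ (swp K u d) = φ K := by
  rcases eq_or_ne u 0 with rfl | hu
  · congr 1
    ext x
    simp only [swp, smul_zero, sub_zero]
    exact ⟨fun ⟨s, _, _, h⟩ => h, fun h => ⟨0, le_rfl, hd, h⟩⟩
  obtain ⟨S⟩ := exists_spl u hu
  have hlc : Continuous S.l := S.l.continuous_of_finiteDimensional
  have hπc : Continuous S.π := S.π.continuous_of_finiteDimensional
  obtain ⟨k0, hk0, hk0'⟩ := hK.cpt.exists_isMinOn hK.ne hlc.continuousOn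
  obtain ⟨k1, hk1, hk1'⟩ := hK.cpt.exists_isMaxOn hK.ne hlc.continuousOn
  set m0 := S.l k0
  set m1 := S.l k1
  have hm0 : ∀ k ∈ K, m0 ≤ S.l k := fun k hk => hk0' hk
  have hm1 : ∀ k ∈ K, S.l k ≤ m1 := fun k hk => hk1' hk
  set c := m1 - m0
  have hc : 0 ≤ c := by have := hm0 k1 hk1; simp only [c, m1]; linarith
  -- body of the projection
  have hA : IsConvexBody (S.π '' K) := ⟨hK.ne.image _, hK.cpt.image hπc, hK.cvx.linear_image S.π⟩
  have hmid0 : φ (S.pri d (S.π '' K)) = 0 :=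
    IH _ (S.pri_te h hd) (S.pri_zp hz hd) _ hA
  have hl : ∀ x s, S.l (x - s • u) = S.l x - s := fun x s => by simp [S.lu]
  set B := swp K u (c + d)
  have hB : IsConvexBody B := swp_body hK u (add_nonneg hc hd)
  have hC : IsConvexBody (swp K u c) := swp_body hK u hc
  have i1 : B ∩ {x | S.l x ≤ m1} = swp K u c ∩ {x | S.l x ≤ m1} := by
    ext x
    simp only [mem_inter_iff, mem_ofPred_eq]
    constructor
    · rintro ⟨⟨s, h1, h2, h3⟩, h4⟩
      refine ⟨⟨s, h1, ?_, h3⟩, h4⟩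
      have := hm0 _ h3
      rw [hl] at this
      simp only [c]; linarith
    · rintro ⟨⟨s, h1, h2, h3⟩, h4⟩
      exact ⟨⟨s, h1, by linarith, h3⟩, h4⟩
  have i2 : B ∩ {x | m1 ≤ S.l x} ∩ {x | S.l x ≤ m1 + d} = (m1 • u) +ᵥ (S.pri d (S.π '' K)) := by
    ext x
    simp only [mem_inter_iff, mem_ofPred_eq, mem_vadd_iff, Spl.mem_pri, hl]
    constructor
    · rintro ⟨⟨⟨s, h1, h2, h3⟩, h4⟩, h5⟩
      refine ⟨⟨_, h3, by simp [S.πu]⟩, by linarith, by linarith⟩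
    · rintro ⟨⟨k, hk, hkx⟩, h1, h2⟩
      have hkx : S.π k = S.π x := by simpa [S.πu] using hkx
      have a1 := hm0 k hk
      have a2 := hm1 k hk
      refine ⟨⟨⟨S.l x - S.l k, by linarith, by simp only [c]; linarith, ?_⟩, by linarith⟩, by linarith⟩
      have : x - (S.l x - S.l k) • u = k := by
        conv_lhs => rw [← S.eq x]
        conv_rhs => rw [← S.eq k]
        rw [hkx, S.ladd]; module
      rwa [this]
  have i3 : B ∩ {x | m1 ≤ S.l x} ∩ {x | m1 + d ≤ S.l x} =
      (d • u) +ᵥ (swp K u c ∩ {x | m1 ≤ S.l x}) := by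
    ext x
    simp only [mem_inter_iff, mem_ofPred_eq, mem_vadd_iff, hl]
    constructor
    · rintro ⟨⟨⟨s, h1, h2, h3⟩, h4⟩, h5⟩
      have := hm1 _ h3
      rw [hl] at this
      refine ⟨⟨s - d, by linarith, by linarith, ?_⟩, by linarith⟩
      convert h3 using 1; module
    · rintro ⟨⟨s, h1, h2, h3⟩, h4⟩
      refine ⟨⟨⟨s + d, by linarith, by linarith, ?_⟩, by linarith⟩, by linarith⟩
      convert h3 using 1; module
  have k2 : IsClosed {x | m1 ≤ S.l x} := isClosed_le continuous_const hlc
  have c2 : Convex ℝ {x | m1 ≤ S.l x} := convex_halfSpace_ge S.l.isLinear m1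
  have t1 := h.cut hB.cpt hB.cvx S.l_ne m1
  have t2 := h.cut (hB.cpt.inter_right k2) (hB.cvx.inter c2) S.l_ne (m1 + d)
  have t3 := h.cut hC.cpt hC.cvx S.l_ne m1
  rw [i2, i3, h.tr' (hC.cpt.inter_right k2) (hC.cvx.inter c2), h.tr _ (S.pri_body hd hA), hmid0] at t2
  rw [i1] at t1
  have t4 := swp_add h hK u hc hd
  change φ B = _ at t4
  linarith

lemma add_segment (IH : KlainHyp n) {φ : Set (EN (n + 1)) → ℝ} (h : TE φ) (hz : ZP φ)
    {K : Set (EN (n + 1))} (hK : IsConvexBody K) (u : EN (n + 1)) :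
    φ (K + segment ℝ (-u) u) = φ K := by
  have : K + segment ℝ (-u) u = (-u) +ᵥ swp K u 2 := by
    ext x
    rw [Set.mem_add, mem_vadd_iff]
    constructor
    · rintro ⟨k, hk, y, hy, rfl⟩
      rw [segment_eq_image] at hy
      obtain ⟨θ, hθ, rfl⟩ := hy
      refine ⟨2 * θ, by linarith [hθ.1], by linarith [hθ.2], ?_⟩
      convert hk using 1; module
    · rintro ⟨s, h1, h2, h3⟩
      refine ⟨_, h3, (s - 1) • u, ?_, by module⟩
      rw [segment_eq_image]
      refine ⟨s / 2, ⟨by linarith, by linarith⟩, by module⟩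
  rw [this, h.tr _ (swp_body hK u (by norm_num)), swp_eq IH h hz hK u (by norm_num)]

end PartA2

section PartA3

variable {n : ℕ}

lemma mem_hull_range {ι : Type*} [Fintype ι] {p : ι → EN n} {x : EN n} :
    x ∈ convexHull ℝ (range p) ↔ ∃ w : ι → ℝ, (∀ i, 0 ≤ w i) ∧ ∑ i, w i = 1 ∧ ∑ i, w i • p i = x := by
  classical
  have h1 : convexHull ℝ (range p) = (Fintype.linearCombination ℝ p) '' stdSimplex ℝ ι := by
    rw [← convexHull_rangle_single_eq_stdSimplex, LinearMap.image_convexHull, ← Set.range_comp]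
    congr 2
    ext1 i
    simp [Fintype.linearCombination_apply_single]
  rw [h1]
  constructor
  · rintro ⟨w, hw, rfl⟩
    exact ⟨w, hw.1, hw.2, by simp [Fintype.linearCombination_apply]⟩
  · rintro ⟨w, h1, h2, rfl⟩
    exact ⟨w, ⟨h1, h2⟩, by simp [Fintype.linearCombination_apply]⟩

lemma hull_body {ι : Type*} [Finite ι] [Nonempty ι] (p : ι → EN n) :
    IsConvexBody (convexHull ℝ (range p)) :=
  ⟨(range_nonempty p).convexHull, (finite_range p).isCompact_convexHull _, convex_convexHull ℝ _⟩

lemma hull_split {p : Fin (n + 1) → EN n} {i j : Fin (n + 1)} (hij : i ≠ j) {α β : ℝ} (hα : 0 < α)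
    (hβ : 0 ≤ β) (hαβ : α + β = 1) {w : Fin (n + 1) → ℝ} (hw : ∀ k, 0 ≤ w k) (hw1 : ∑ k, w k = 1)
    (h : w i * β ≤ w j * α) :
    ∑ k, w k • p k ∈ convexHull ℝ (range (Function.update p i (α • p i + β • p j))) := by
  rw [mem_hull_range]
  set q := α • p i + β • p j
  set c := w i * β / α
  have hc : 0 ≤ c := div_nonneg (mul_nonneg (hw i) hβ) hα.le
  have hcj : c ≤ w j := (div_le_iff₀ hα).2 h
  refine ⟨fun k => w k + (if k = i then c else 0) - (if k = j then c else 0), ?_, ?_, ?_⟩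
  · intro k
    by_cases hk : k = j
    · subst hk
      simp [hij.symm, hcj]
    · by_cases hk' : k = i
      · simp [hk, hk', hij]; have := hw i; linarith
      · simp [hk, hk', hw k]
  · simp [Finset.sum_add_distrib, Finset.sum_sub_distrib, hw1]
  · have e1 : ∀ k, Function.update p i q k = p k + if k = i then q - p i else 0 := by
      intro k
      by_cases hk : k = i
      · subst hk; simp
      · simp [hk]
    simp only [e1, smul_add, Finset.sum_add_distrib, sub_smul, add_smul, ite_smul, zero_smul,
      Finset.sum_sub_distrib, Finset.sum_ite_eq', Finset.mem_univ, if_true, smul_ite, smul_zero,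
      hij.symm, if_false]
    have e2 : w i • (q - p i) + c • p i + c • (q - p i) - c • p j = 0 := by
      simp only [q]
      have hβ' : β = 1 - α := by linarith
      have : w i • (α • p i + β • p j - p i) + c • p i + c • (α • p i + β • p j - p i) - c • p j
        = (c * α - w i * β) • (p i - p j) := by rw [hβ']; module
      rw [this]
      have : c * α - w i * β = 0 := by simp only [c]; field_simp; ring
      rw [this, zero_smul]
    rw [if_neg hij]
    clear_value q c
    refine sub_eq_zero.1 (Eq.trans ?_ e2)
    module

lemma hull_dep {φ : Set (EN n) → ℝ} (h : SV φ) {p : Fin (n + 1) → EN n}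
    (hp : ¬ AffineIndependent ℝ p) {D : Set (EN n)} (hD : IsClosed D) (hD' : Convex ℝ D) :
    φ (convexHull ℝ (range p) ∩ D) = 0 := by
  apply h.zero_of_interior ((hull_body p).cpt.inter_right hD) ((hull_body p).cvx.inter hD')
  by_contra hne
  obtain ⟨x, hx⟩ := Set.nonempty_iff_ne_empty.2 hne
  apply hp
  have h1 : affineSpan ℝ (range p) = ⊤ :=
    interior_convexHull_nonempty_iff_affineSpan_eq_top.1 ⟨x, interior_mono inter_subset_left hx⟩
  exact (affineIndependent_iff_finrank_vectorSpan_eq ℝ p (n := n) (by simp)).2 (by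
    rw [← direction_affineSpan, h1, AffineSubspace.direction_top, finrank_top, finrank_euclideanSpace_fin])

lemma poly_step {φ : Set (EN n) → ℝ} (h : SV φ) {D : Set (EN n)} (hD : IsClosed D)
    (hD' : Convex ℝ D) (h0 : ∀ p : Fin (n + 1) → EN n, φ (convexHull ℝ (range p) ∩ D) = 0)
    (f : EN n →ₗ[ℝ] ℝ) (c : ℝ) (p : Fin (n + 1) → EN n) :
    φ (convexHull ℝ (range p) ∩ (D ∩ {x | f x ≤ c})) = 0 := by
  classical
  have hfc : Continuous f := f.continuous_of_finiteDimensional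
  have cH : Convex ℝ {x | f x ≤ c} := convex_halfSpace_le f.isLinear c
  have cG : Convex ℝ {x | c ≤ f x} := convex_halfSpace_ge f.isLinear c
  have kH : IsClosed {x | f x ≤ c} := isClosed_le hfc continuous_const
  have kD := hD.inter kH
  have cD := hD'.inter cH
  rcases eq_or_ne f 0 with rfl | hf
  · by_cases hc : 0 ≤ c
    · have : {x : EN n | (0 : EN n →ₗ[ℝ] ℝ) x ≤ c} = univ := by ext x; simp [hc]
      rw [this, inter_univ]; exact h0 p
    · have : {x : EN n | (0 : EN n →ₗ[ℝ] ℝ) x ≤ c} = ∅ := by ext x; simpa using hc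
      rw [this, inter_empty, inter_empty, h.empty]
  induction hN : (Finset.univ.filter (fun k => f (p k) ≠ c)).card using Nat.strong_induction_on
    generalizing p with
  | _ N ih =>
  by_cases hind : AffineIndependent ℝ p
  swap
  · exact hull_dep h hind kD cD
  by_cases hneg : ∀ k, f (p k) ≤ c
  · have : convexHull ℝ (range p) ⊆ {x | f x ≤ c} := by
      apply convexHull_min _ cH
      rintro _ ⟨k, rfl⟩; exact hneg k
    rw [inter_comm D, ← inter_assoc, inter_eq_left.2 this]
    exact h0 p
  by_cases hpos : ∀ k, c ≤ f (p k)
  · have : convexHull ℝ (range p) ⊆ {x | c ≤ f x} := by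
      apply convexHull_min _ cG
      rintro _ ⟨k, rfl⟩; exact hpos k
    apply h.zero_of_hyperplane ((hull_body p).cpt.inter_right kD) ((hull_body p).cvx.inter cD) hf
      (c := c)
    rintro x ⟨h1, h2, h3⟩
    exact le_antisymm h3 (this h1)
  push Not at hneg hpos
  obtain ⟨j, hj⟩ := hneg
  obtain ⟨i, hi⟩ := hpos
  have hij : i ≠ j := by rintro rfl; linarith
  have hd : 0 < f (p j) - f (p i) := by linarith
  set α := (f (p j) - c) / (f (p j) - f (p i)) with hαd
  set β := (c - f (p i)) / (f (p j) - f (p i)) with hβd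
  have hα : 0 < α := div_pos (by linarith) hd
  have hβ : 0 < β := div_pos (by linarith) hd
  have hαβ : α + β = 1 := by rw [hαd, hβd]; field_simp; ring
  set q := α • p i + β • p j with hq
  have hfq : f q = c := by
    rw [hq, map_add, map_smul, map_smul, hαd, hβd, smul_eq_mul, smul_eq_mul]; field_simp; ring
  set p1 := Function.update p i q with hp1
  set p2 := Function.update p j q with hp2
  have hqS : q ∈ convexHull ℝ (range p) :=
    (convex_convexHull ℝ _) (subset_convexHull ℝ _ (mem_range_self i)) (subset_convexHull ℝ _ (mem_range_self j))
      hα.le hβ.le hαβ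
  have sub : ∀ l, convexHull ℝ (range (Function.update p l q)) ⊆ convexHull ℝ (range p) := by
    intro l
    apply convexHull_min _ (convex_convexHull ℝ _)
    rintro _ ⟨k, rfl⟩
    by_cases hk : k = l
    · subst hk; simpa using hqS
    · simpa [hk] using subset_convexHull ℝ _ (mem_range_self (f := p) k)
  have hcard : ∀ l, f (p l) ≠ c →
      (Finset.univ.filter (fun k => f (Function.update p l q k) ≠ c)).card < N := by
    intro l hl
    rw [← hN]
    apply Finset.card_lt_card
    rw [Finset.ssubset_iff_of_subset]
    · refine ⟨l, by simpa using hl, by simp [hfq]⟩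
    · intro k
      by_cases hk : k = l
      · subst hk; simp [hfq]
      · simp [hk]
  have z1 := ih _ (hcard i hi.ne) p1 rfl
  have z2 := ih _ (hcard j hj.ne') p2 rfl
  have hU : convexHull ℝ (range p) = convexHull ℝ (range p1) ∪ convexHull ℝ (range p2) := by
    apply Subset.antisymm
    · intro x hx
      obtain ⟨w, hw, hw1, rfl⟩ := mem_hull_range.1 hx
      rcases le_total (w i * β) (w j * α) with hle | hle
      · exact Or.inl (hull_split hij hα hβ.le hαβ hw hw1 hle)
      · right
        have := hull_split (p := p) hij.symm hβ hα.le (by linarith) hw hw1 hle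
        rwa [add_comm (β • p j)] at this
    · exact union_subset (sub i) (sub j)
  -- the separating function
  have htop : affineSpan ℝ (range p) = ⊤ := hind.affineSpan_eq_top_iff_card_eq_finrank_add_one.2 (by simp)
  let b : AffineBasis (Fin (n + 1)) ℝ (EN n) := ⟨p, hind, htop⟩
  let g : EN n →ᵃ[ℝ] ℝ := β • b.coord i - α • b.coord j
  have hbp : ∀ k, b k = p k := fun k => rfl
  have gi : g (p i) = β := by
    simp only [g, ← hbp]; simp [hij.symm]
  have gj : g (p j) = -α := by
    simp only [g, ← hbp]; simp [hij]
  have gk : ∀ k, k ≠ i → k ≠ j → g (p k) = 0 := by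
    intro k h1 h2
    simp only [g, ← hbp]; simp [h1.symm, h2.symm]
  have gq : g q = 0 := by
    have : g q = α * g (p i) + β * g (p j) := by
      have := Convex.combo_affine_apply (f := g) (x := p i) (y := p j) hαβ
      simpa [hq] using this
    rw [this, gi, gj]; ring
  have s1 : convexHull ℝ (range p1) ⊆ g ⁻¹' Iic 0 := by
    apply convexHull_min _ ((convex_Iic 0).affine_preimage g)
    rintro _ ⟨k, rfl⟩
    by_cases hk : k = i
    · subst hk; simp [hp1, gq]
    · by_cases hk' : k = j
      · subst hk'; simp [hp1, hk, gj, hα.le]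
      · simp [hp1, hk, gk k hk hk']
  have s2 : convexHull ℝ (range p2) ⊆ g ⁻¹' Ici 0 := by
    apply convexHull_min _ ((convex_Ici 0).affine_preimage g)
    rintro _ ⟨k, rfl⟩
    by_cases hk : k = j
    · subst hk; simp [hp2, gq]
    · by_cases hk' : k = i
      · subst hk'; simp [hp2, hk, gi, hβ.le]
      · simp [hp2, hk, gk k hk' hk]
  have hgl : g.linear ≠ 0 := by
    intro h0
    have := g.linearMap_vsub (p i) (p j)
    rw [h0, gi, gj] at this
    simp at this
    linarith
  rw [hU, union_inter_distrib_right]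
  have hcv : Convex ℝ (convexHull ℝ (range p1) ∩ (D ∩ {x | f x ≤ c}) ∪
      convexHull ℝ (range p2) ∩ (D ∩ {x | f x ≤ c})) := by
    rw [← union_inter_distrib_right, ← hU]
    exact (hull_body p).cvx.inter cD
  rw [h.val' ((hull_body p1).cpt.inter_right kD) ((hull_body p1).cvx.inter cD)
    ((hull_body p2).cpt.inter_right kD) ((hull_body p2).cvx.inter cD) hcv, z1, z2]
  rw [h.zero_of_hyperplane (((hull_body p1).cpt.inter_right kD).inter ((hull_body p2).cpt.inter_right kD))
    (((hull_body p1).cvx.inter cD).inter ((hull_body p2).cvx.inter cD)) hgl (c := - g 0)]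
  · simp
  · rintro x ⟨⟨h1, -⟩, h2, -⟩
    have e1 : g x = 0 := le_antisymm (s1 h1) (s2 h2)
    have := g.linearMap_vsub x 0
    rw [e1] at this
    simpa using this

lemma hc_of_antitone {K : ℕ → Set (EN n)} {L : Set (EN n)} (hK : ∀ m, IsCompact (K m))
    (ha : Antitone K) (hL : ⋂ m, K m = L) : HC K L := by
  apply hc_of_approx
  intro r hr
  obtain ⟨N, hN⟩ := exists_subset_nhds_of_isCompact' (V := K) (U := thickening r L)
    ha.directed_ge hK (fun m => (hK m).isClosed) (by
      rw [hL]; intro x hx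
      exact isOpen_thickening.mem_nhds (self_subset_thickening hr L hx))
  filter_upwards [eventually_ge_atTop N] with m hm
  constructor
  · intro x hx
    obtain ⟨y, hy, hxy⟩ := mem_thickening_iff.1 (hN (ha hm hx))
    exact ⟨y, hy, hxy.le⟩
  · intro y hy
    rw [← hL] at hy
    exact ⟨y, mem_iInter.1 hy m, by simp [hr.le]⟩

/-- an intersection of halfspaces -/
def hsp (d : ℕ → EN n) (c : ℕ → ℝ) : ℕ → Set (EN n)
  | 0 => univ
  | (m + 1) => hsp d c m ∩ {x | innerₗ (EN n) (d m) x ≤ c m}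

lemma mem_hsp {d : ℕ → EN n} {c : ℕ → ℝ} {m : ℕ} {x : EN n} :
    x ∈ hsp d c m ↔ ∀ k < m, inner ℝ (d k) x ≤ c k := by
  induction m with
  | zero => simp [hsp]
  | succ m ih =>
    simp only [hsp, mem_inter_iff, ih, mem_ofPred_eq, innerₗ_apply_apply]
    constructor
    · rintro ⟨h1, h2⟩ k hk
      rcases Nat.lt_succ_iff_lt_or_eq.1 hk with h | rfl
      · exact h1 k h
      · exact h2
    · intro h
      exact ⟨fun k hk => h k (by omega), h m (by omega)⟩

lemma hsp_closed {d : ℕ → EN n} {c : ℕ → ℝ} {m : ℕ} : IsClosed (hsp d c m) ∧ Convex ℝ (hsp d c m) := by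
  induction m with
  | zero => exact ⟨isClosed_univ, convex_univ⟩
  | succ m ih =>
    exact ⟨ih.1.inter (isClosed_le (LinearMap.continuous_of_finiteDimensional _) continuous_const),
      ih.2.inter (convex_halfSpace_le (LinearMap.isLinear _) _)⟩

lemma zero_of_simplex {φ : Set (EN n) → ℝ} (h : SV φ)
    (h0 : ∀ p : Fin (n + 1) → EN n, AffineIndependent ℝ p → φ (convexHull ℝ (range p)) = 0)
    {K : Set (EN n)} (hK : IsConvexBody K) : φ K = 0 := by
  have h1 : ∀ d c m, ∀ p : Fin (n + 1) → EN n, φ (convexHull ℝ (range p) ∩ hsp d c m) = 0 := by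
    intro d c m
    induction m with
    | zero =>
      intro p
      by_cases hp : AffineIndependent ℝ p
      · simpa [hsp] using h0 p hp
      · exact hull_dep h hp isClosed_univ convex_univ
    | succ m ih =>
      intro p
      exact poly_step h hsp_closed.1 hsp_closed.2 ih _ _ p
  -- big simplex
  obtain ⟨p, hp⟩ : ∃ p : Fin (n + 1) → EN n, K ⊆ convexHull ℝ (range p) := by
    obtain ⟨b⟩ : Nonempty (AffineBasis (Fin (n + 1)) ℝ (EN n)) :=
      AffineBasis.exists_affineBasis_of_finiteDimensional (by simp)
    have hb := b.centroid_mem_interior_convexHull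
    set z := Finset.univ.centroid ℝ b
    obtain ⟨r, hr, hrb⟩ := Metric.nhds_basis_ball.mem_iff.1 (mem_interior_iff_mem_nhds.1 hb)
    obtain ⟨R, hR, hKR⟩ := hK.cpt.isBounded.subset_ball_lt 0 0
    refine ⟨fun k => (R / r) • (b k - z), ?_⟩
    intro x hx
    have hxm : z + (r / R) • x ∈ ball z r := by
      have := hKR hx
      rw [mem_ball_zero_iff] at this
      rw [mem_ball, dist_eq_norm, add_sub_cancel_left, norm_smul, Real.norm_eq_abs,
        abs_of_pos (by positivity), div_mul_eq_mul_div, div_lt_iff₀ hR]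
      gcongr
    obtain ⟨w, hw, hw1, hwx⟩ := mem_hull_range.1 (hrb hxm)
    refine mem_hull_range.2 ⟨w, hw, hw1, ?_⟩
    have : ∑ i, w i • (R / r) • (b i - z) = (R / r) • (∑ i, w i • b i - (∑ i, w i) • z) := by
      simp only [smul_sub, Finset.sum_sub_distrib, Finset.smul_sum, Finset.sum_smul, smul_smul, mul_comm]
    rw [this, hwx, hw1, one_smul, add_sub_cancel_left, smul_smul]
    field_simp
    simp
  -- support function
  let d : ℕ → EN n := TopologicalSpace.denseSeq (EN n)
  have hcont : ∀ y : EN n, Continuous fun x : EN n => inner ℝ y x := fun y => by fun_prop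
  have hmax : ∀ y : EN n, ∃ k ∈ K, ∀ x ∈ K, (inner ℝ y x : ℝ) ≤ inner ℝ y k := fun y => by
    obtain ⟨k, hk, hk'⟩ := hK.cpt.exists_isMaxOn hK.ne (hcont y).continuousOn
    exact ⟨k, hk, fun x hx => hk' hx⟩
  choose s hs hs' using hmax
  let c : ℕ → ℝ := fun m => inner ℝ (d m) (s (d m))
  have hKsub : ∀ m, K ⊆ convexHull ℝ (range p) ∩ hsp d c m := fun m x hx =>
    ⟨hp hx, mem_hsp.2 fun k _ => hs' _ x hx⟩
  have hinter : ⋂ m, (convexHull ℝ (range p) ∩ hsp d c m) = K := by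
    apply Subset.antisymm
    · intro x hx
      by_contra hxK
      obtain ⟨f, u, h1, h2⟩ := geometric_hahn_banach_closed_point hK.cvx hK.cpt.isClosed hxK
      set w := (InnerProductSpace.toDual ℝ (EN n)).symm f with hw
      have hfw : ∀ y, f y = inner ℝ w y := fun y => by
        rw [hw, InnerProductSpace.toDual_symm_apply]
      obtain ⟨R, hR, hKR⟩ := (hK.cpt.isBounded.union (Bornology.isBounded_singleton (x := x))).subset_ball_lt 0 0
      have hgap : 0 < f x - u := by linarith
      obtain ⟨m, hm⟩ := (TopologicalSpace.denseRange_denseSeq (EN n)).exists_dist_lt w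
        (ε := (f x - u) / (2 * R)) (by positivity)
      have hxm := mem_hsp.1 (mem_iInter.1 hx (m + 1)).2 m (by omega)
      have hk := hs (d m)
      set k := s (d m)
      have e1 := h1 k hk
      rw [hfw] at e1
      have e2 : inner ℝ (d m) (x - k) ≤ 0 := by
        rw [inner_sub_right]; simp only [c] at hxm; linarith
      have e3 : inner ℝ (w - d m) (x - k) ≤ ‖w - d m‖ * ‖x - k‖ := real_inner_le_norm _ _
      have e4 : ‖x - k‖ ≤ 2 * R := by
        have a1 := hKR (Or.inl hk)
        have a2 := hKR (Or.inr (mem_singleton x))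
        rw [mem_ball_zero_iff] at a1 a2
        have := norm_sub_le x k
        linarith
      rw [dist_eq_norm] at hm
      have e5 : ‖w - d m‖ * ‖x - k‖ < f x - u := by
        rw [lt_div_iff₀ (by positivity)] at hm
        have : ‖w - d m‖ * ‖x - k‖ ≤ ‖w - d m‖ * (2 * R) := by gcongr
        linarith
      rw [inner_sub_left, inner_sub_right, inner_sub_right] at e3
      rw [inner_sub_right] at e2
      rw [hfw x] at e5
      linarith
    · exact subset_iInter hKsub
  have hb : ∀ m, IsConvexBody (convexHull ℝ (range p) ∩ hsp d c m) := fun m =>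
    ⟨hK.ne.mono (hKsub m), (hull_body p).cpt.inter_right hsp_closed.1,
      (hull_body p).cvx.inter hsp_closed.2⟩
  have hlim := hc_of_antitone (fun m => (hb m).cpt) (fun a b hab => by
    apply inter_subset_inter_right
    intro x hx
    rw [mem_hsp] at hx ⊢
    exact fun k hk => hx k (by omega)) hinter
  have := h.cont _ K hb hK hlim
  simp only [h1] at this
  exact (tendsto_nhds_unique this tendsto_const_nhds)

end PartA3

section PartS4

variable {n : ℕ}

lemma step_S {φ : Set (EN (n + 1)) → ℝ} (h : TE φ) (hz : ZP φ)
    (hs : ∀ K, IsConvexBody K → -K = K → φ K = 0) (p : Fin (n + 1 + 1) → EN (n + 1))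
    (hp : AffineIndependent ℝ p) : φ (convexHull ℝ (range p)) = 0 := by
  have hli : LinearIndependent ℝ (fun i : Fin (n + 1) => p i.succ - p 0) := by
    have := (affineIndependent_iff_linearIndependent_vsub ℝ p 0).1 hp
    let e : Fin (n + 1) ↪ {x : Fin (n + 1 + 1) // x ≠ 0} :=
      ⟨fun i => ⟨i.succ, Fin.succ_ne_zero i⟩, fun a b hab => by simpa using hab⟩
    exact this.comp e e.injective
  set u : Fin (n + 1) → EN (n + 1) := fun i => p i.succ - p 0 with hu
  let b := basisOfLinearIndependentOfCardEqFinrank hli (by simp)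
  have hb : ∀ i, b i = u i := fun i => by simp [b]
  let l : EN (n + 1) →ₗ[ℝ] ℝ := ∑ i, b.coord i
  have hl : ∀ x, l x = ∑ i, b.coord i x := fun x => by simp [l]
  have hcu : ∀ i j, b.coord i (u j) = if j = i then 1 else 0 := by
    intro i j
    rw [← hb, b.coord_apply, b.repr_self, Finsupp.single_apply]
  have hcs : ∀ (t : Fin (n + 1) → ℝ) i, b.coord i (∑ j, t j • u j) = t i := by
    intro t i
    rw [map_sum]
    simp [hcu, -Module.Basis.coord_apply]
  have hsum : ∀ x, ∑ i, b.coord i x • u i = x := fun x => by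
    simp only [← hb]; exact b.sum_repr x
  have hl0 : l ≠ 0 := by
    intro h0
    have : l (u 0) = 0 := by rw [h0]; rfl
    rw [hl] at this
    simp [hcu, -Module.Basis.coord_apply] at this
  have hQ : ∀ x, x ∈ parallelepiped u ↔ ∀ i, 0 ≤ b.coord i x ∧ b.coord i x ≤ 1 := by
    intro x
    rw [mem_parallelepiped_iff]
    constructor
    · rintro ⟨t, ht, rfl⟩ i
      rw [hcs]; exact ⟨ht.1 i, ht.2 i⟩
    · intro hx
      exact ⟨fun i => b.coord i x, ⟨fun i => (hx i).1, fun i => (hx i).2⟩, (hsum x).symm⟩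
  set Q := parallelepiped u
  have hQc : IsCompact Q := by
    have : Q = (fun t : Fin (n+1) → ℝ => ∑ i, t i • u i) '' Icc 0 1 := rfl
    rw [this]
    exact isCompact_Icc.image (by fun_prop)
  have hQv : Convex ℝ Q := convex_parallelepiped u
  have lc : Continuous l := l.continuous_of_finiteDimensional
  have kle : ∀ c, IsClosed {x | l x ≤ c} := fun c => isClosed_le lc continuous_const
  have kge : ∀ c, IsClosed {x | c ≤ l x} := fun c => isClosed_le continuous_const lc
  have cle : ∀ c, Convex ℝ {x | l x ≤ c} := fun c => convex_halfSpace_le l.isLinear c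
  have cge : ∀ c, Convex ℝ {x | c ≤ l x} := fun c => convex_halfSpace_ge l.isLinear c
  set T := Q ∩ {x | l x ≤ 1} with hT
  set R := Q ∩ {x | 1 ≤ l x} with hR
  have hTm : ∀ x, x ∈ T ↔ (∀ i, 0 ≤ b.coord i x) ∧ l x ≤ 1 := by
    intro x
    rw [hT, mem_inter_iff, hQ]
    constructor
    · rintro ⟨h1, h2⟩; exact ⟨fun i => (h1 i).1, h2⟩
    · rintro ⟨h1, h2⟩
      refine ⟨fun i => ⟨h1 i, ?_⟩, h2⟩
      rw [hl] at h2
      exact (Finset.single_le_sum (f := fun i => b.coord i x) (fun i _ => h1 i) (Finset.mem_univ i)).trans h2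
  have h0T : (0 : EN (n + 1)) ∈ T := by rw [hTm]; simp
  have hTb : IsConvexBody T := ⟨⟨0, h0T⟩, hQc.inter_right (kle 1), hQv.inter (cle 1)⟩
  have hhull : convexHull ℝ (range p) = p 0 +ᵥ T := by
    ext x
    rw [mem_vadd_iff, hTm, mem_hull_range]
    have key : ∀ w : Fin (n + 1 + 1) → ℝ, ∑ i, w i = 1 →
        ∑ i, w i • p i = p 0 + ∑ i : Fin (n + 1), w i.succ • u i := by
      intro w hw
      rw [Fin.sum_univ_succ] at hw ⊢
      simp only [hu, smul_sub, Finset.sum_sub_distrib, ← Finset.sum_smul]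
      have : w 0 = 1 - ∑ i : Fin (n + 1), w i.succ := by linarith
      rw [this]; module
    constructor
    · rintro ⟨w, hw, hw1, rfl⟩
      rw [key w hw1, add_sub_cancel_left]
      refine ⟨fun i => by rw [hcs]; exact hw _, ?_⟩
      rw [hl]; simp only [hcs]
      rw [Fin.sum_univ_succ] at hw1
      have := hw 0
      linarith
    · rintro ⟨h1, h2⟩
      rw [hl] at h2
      have hw1 : ∑ i, (Fin.cons (1 - ∑ i, b.coord i (x - p 0)) (fun i => b.coord i (x - p 0)) :
          Fin (n + 1 + 1) → ℝ) i = 1 := by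
        rw [Fin.sum_univ_succ]; simp only [Fin.cons_zero, Fin.cons_succ]; ring
      refine ⟨_, ?_, hw1, ?_⟩
      · intro i
        refine Fin.cases ?_ (fun i => ?_) i
        · simp only [Fin.cons_zero]; linarith
        · simp only [Fin.cons_succ]; exact h1 i
      · rw [key _ hw1]; simp only [Fin.cons_succ, hsum]; abel
  rw [hhull, h.tr _ hTb]
  have hcut := h.cut hQc hQv hl0 1
  rw [hz u] at hcut
  change 0 = φ T + φ R at hcut
  have hlu : ∀ x, l (∑ i, u i - x) = (n + 1 : ℝ) - l x := by
    intro x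
    rw [map_sub]
    congr 1
    rw [hl]
    have : ∀ i, b.coord i (∑ j, u j) = 1 := fun i => by
      have := hcs (fun _ => 1) i
      simpa only [one_smul] using this
    simp only [this]; simp
  have hcu2 : ∀ x i, b.coord i (∑ i, u i - x) = 1 - b.coord i x := by
    intro x i
    rw [map_sub]
    congr 1
    have := hcs (fun _ => 1) i
    simpa only [one_smul] using this
  have hQs : ∀ x, ∑ i, u i - x ∈ Q ↔ x ∈ Q := by
    intro x
    rw [hQ, hQ]
    simp only [hcu2]
    constructor
    · intro h i; have := h i; constructor <;> linarith
    · intro h i; have := h i; constructor <;> linarith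
  rcases Nat.eq_zero_or_pos n with rfl | hn
  · have : φ R = 0 := by
      apply h.zero_of_hyperplane (hQc.inter_right (kge 1)) (hQv.inter (cge 1)) hl0 (c := 1)
      rintro x ⟨h1, h2⟩
      refine le_antisymm ?_ h2
      rw [hl]; simpa using ((hQ x).1 h1 0).2
    linarith
  have hn1 : (1 : ℝ) ≤ n := by exact_mod_cast hn
  have hcut2 := h.cut (hQc.inter_right (kge 1)) (hQv.inter (cge 1)) hl0 n
  set s : EN (n + 1) := ∑ i, u i with hsd
  have e1 : R ∩ {x | (n : ℝ) ≤ l x} = s +ᵥ (-T) := by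
    ext x
    rw [mem_vadd_iff, Set.mem_neg, neg_sub, hT, hR]
    simp only [mem_inter_iff, mem_ofPred_eq, hlu, hQs]
    constructor
    · rintro ⟨⟨h1, h2⟩, h3⟩; exact ⟨h1, by linarith⟩
    · rintro ⟨h1, h2⟩; exact ⟨⟨h1, by linarith⟩, by linarith⟩
  have e2 : φ (R ∩ {x | l x ≤ n}) = 0 := by
    set m := R ∩ {x | l x ≤ n} with hm
    have hmc : IsCompact m := (hQc.inter_right (kge 1)).inter_right (kle n)
    have hmv : Convex ℝ m := (hQv.inter (cge 1)).inter (cle n)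
    have hms : ∀ x, s - x ∈ m ↔ x ∈ m := by
      intro x
      rw [hm, hR]
      simp only [mem_inter_iff, mem_ofPred_eq, hlu, hQs]
      constructor
      · rintro ⟨⟨h1, h2⟩, h3⟩; exact ⟨⟨h1, by linarith⟩, by linarith⟩
      · rintro ⟨⟨h1, h2⟩, h3⟩; exact ⟨⟨h1, by linarith⟩, by linarith⟩
    rcases m.eq_empty_or_nonempty with he | hne
    · rw [he, h.empty]
    have hmb : IsConvexBody m := ⟨hne, hmc, hmv⟩
    rw [← h.tr m hmb (-((1 / 2 : ℝ) • s))]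
    refine hs _ (hmb.vadd _) ?_
    ext x
    rw [Set.mem_neg, mem_vadd_iff, mem_vadd_iff, ← hms]
    have : s - (-x - -((1 / 2 : ℝ) • s)) = x - -((1 / 2 : ℝ) • s) := by module
    rw [this]
  change φ R = _ at hcut2
  rw [e1, e2, h.tr _ hTb.neg, h.even _ hTb] at hcut2
  linarith

end PartS4

section PartG1

variable {n : ℕ}

/-- bounded sublinear functions -/
structure SL {n : ℕ} (f : EN n → ℝ) : Prop where
  add : ∀ x y, f (x + y) ≤ f x + f y
  smul : ∀ c : ℝ, 0 ≤ c → ∀ x, f (c • x) = c * f x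
  bd : ∃ C : ℝ, ∀ x, f x ≤ C * ‖x‖

/-- the convex body with a given support function -/
def bod {n : ℕ} (f : EN n → ℝ) : Set (EN n) := {y | ∀ x, inner ℝ x y ≤ f x}

lemma mem_bod {f : EN n → ℝ} {y : EN n} : y ∈ bod f ↔ ∀ x, inner ℝ x y ≤ f x := Iff.rfl

lemma SL.zero {f : EN n → ℝ} (h : SL f) : f 0 = 0 := by
  have := h.smul 0 le_rfl 0
  simpa using this

lemma bod_attain {f : EN n → ℝ} (h : SL f) (x : EN n) : ∃ y ∈ bod f, inner ℝ x y = f x := by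
  have key : ∃ g : EN n →ₗ[ℝ] ℝ, g x = f x ∧ ∀ z, g z ≤ f z := by
    have H : ∀ c : ℝ, c • x = 0 → (RingHom.id ℝ) c • f x = 0 := by
      intro c hc
      rcases smul_eq_zero.1 hc with rfl | rfl
      · simp
      · simp [h.zero]
    obtain ⟨g, hg, hg'⟩ := exists_extension_of_le_sublinear (LinearPMap.mkSpanSingleton' x (f x) H) f
      (fun c hc x => h.smul c hc.le x) h.add (by
        rintro ⟨z, hz⟩
        obtain ⟨c, rfl⟩ := Submodule.mem_span_singleton.1 hz
        rw [LinearPMap.mkSpanSingleton'_apply]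
        simp only [RingHom.id_apply, smul_eq_mul]
        rcases le_total 0 c with hc | hc
        · rw [h.smul c hc]
        · have e1 := h.smul (-c) (by linarith) x
          have e2 := h.add (c • x) ((-c) • x)
          rw [← add_smul, add_neg_cancel, zero_smul, h.zero, e1] at e2
          linarith)
    refine ⟨g, ?_, hg'⟩
    have := hg ⟨x, Submodule.mem_span_singleton_self x⟩
    exact this.trans (LinearPMap.mkSpanSingleton'_apply_self x (f x) H _)
  obtain ⟨g, h1, h2⟩ := key
  let gc : StrongDual ℝ (EN n) := LinearMap.toContinuousLinearMap g
  refine ⟨(InnerProductSpace.toDual ℝ (EN n)).symm gc, fun z => ?_, ?_⟩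
  · rw [real_inner_comm, InnerProductSpace.toDual_symm_apply]; exact h2 z
  · rw [real_inner_comm, InnerProductSpace.toDual_symm_apply]; exact h1

lemma bod_body {f : EN n → ℝ} (h : SL f) : IsConvexBody (bod f) := by
  refine ⟨?_, ?_, ?_⟩
  · obtain ⟨y, hy, -⟩ := bod_attain h 0; exact ⟨y, hy⟩
  · apply Metric.isCompact_of_isClosed_isBounded
    · have : bod f = ⋂ x, {y | inner ℝ x y ≤ f x} := by ext y; simp [mem_bod]
      rw [this]
      exact isClosed_iInter fun x => isClosed_le (by fun_prop) continuous_const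
    · obtain ⟨C, hC⟩ := h.bd
      refine (isBounded_closedBall (x := (0 : EN n)) (r := |C|)).subset ?_
      intro y hy
      rw [mem_closedBall_zero_iff]
      have h1 := (hy y).trans (hC y)
      rw [real_inner_self_eq_norm_sq] at h1
      by_contra hlt
      push Not at hlt
      have := le_abs_self C
      have := abs_nonneg C
      nlinarith
  · have : bod f = ⋂ x, {y | inner ℝ x y ≤ f x} := by ext y; simp [mem_bod]
    rw [this]
    exact convex_iInter fun x => convex_halfSpace_le (innerₗ (EN n) x).isLinear _

lemma bod_eq {f : EN n → ℝ} {K : Set (EN n)} (hK : IsConvexBody K)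
    (h1 : ∀ y ∈ K, ∀ x, inner ℝ x y ≤ f x) (h2 : ∀ x, ∃ y ∈ K, inner ℝ x y = f x) : bod f = K := by
  apply Subset.antisymm
  · intro y hy
    by_contra hyK
    obtain ⟨g, u, e1, e2⟩ := geometric_hahn_banach_closed_point hK.cvx hK.cpt.isClosed hyK
    set w := (InnerProductSpace.toDual ℝ (EN n)).symm g with hw
    have hgw : ∀ z, g z = inner ℝ w z := fun z => by
      rw [hw, InnerProductSpace.toDual_symm_apply]
    obtain ⟨z, hz, hz'⟩ := h2 w
    have := e1 z hz
    rw [hgw] at this e2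
    have := hy w
    linarith
  · exact fun y hy x => h1 y hy x

lemma SL.add' {f g : EN n → ℝ} (hf : SL f) (hg : SL g) : SL (fun x => f x + g x) := by
  refine ⟨fun x y => ?_, fun c hc x => ?_, ?_⟩
  · have := hf.add x y; have := hg.add x y; linarith
  · rw [hf.smul c hc, hg.smul c hc]; ring
  · obtain ⟨C, hC⟩ := hf.bd
    obtain ⟨D, hD⟩ := hg.bd
    exact ⟨C + D, fun x => by have := hC x; have := hD x; linarith⟩

lemma SL.smul' {f : EN n → ℝ} (hf : SL f) {c : ℝ} (hc : 0 ≤ c) : SL (fun x => c * f x) := by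
  refine ⟨fun x y => ?_, fun d hd x => ?_, ?_⟩
  · rw [← mul_add]; exact mul_le_mul_of_nonneg_left (hf.add x y) hc
  · rw [hf.smul d hd]; ring
  · obtain ⟨C, hC⟩ := hf.bd
    exact ⟨c * C, fun x => by rw [mul_assoc]; exact mul_le_mul_of_nonneg_left (hC x) hc⟩

lemma SL.norm : SL (fun x : EN n => ‖x‖) :=
  ⟨norm_add_le, fun c hc x => by rw [norm_smul, Real.norm_of_nonneg hc], ⟨1, fun x => by simp⟩⟩

lemma bod_add {f g : EN n → ℝ} (hf : SL f) (hg : SL g) :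
    bod (fun x => f x + g x) = bod f + bod g := by
  apply bod_eq ((bod_body hf).add (bod_body hg))
  · rintro _ ⟨y, hy, z, hz, rfl⟩ x
    simp only [inner_add_right]
    exact add_le_add (hy x) (hz x)
  · intro x
    obtain ⟨y, hy, hy'⟩ := bod_attain hf x
    obtain ⟨z, hz, hz'⟩ := bod_attain hg x
    exact ⟨y + z, add_mem_add hy hz, by rw [inner_add_right, hy', hz']⟩

lemma bod_dist {f g : EN n → ℝ} (hg : SL g) {η : ℝ} (hη : 0 ≤ η)
    (h : ∀ x, f x ≤ g x + η * ‖x‖) {y : EN n} (hy : y ∈ bod f) : ∃ z ∈ bod g, dist y z ≤ η := by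
  have : y ∈ bod (fun x => g x + η * ‖x‖) := fun x => (hy x).trans (h x)
  rw [bod_add hg (SL.norm.smul' hη)] at this
  obtain ⟨z, hz, w, hw, rfl⟩ := this
  refine ⟨z, hz, ?_⟩
  have := hw w
  rw [real_inner_self_eq_norm_sq] at this
  simp only [dist_eq_norm, add_sub_cancel_left]
  by_contra hlt
  push Not at hlt
  nlinarith

lemma bod_hc {F : ℕ → EN n → ℝ} {f : EN n → ℝ} (hF : ∀ m, SL (F m)) (hf : SL f)
    (h : ∀ η > 0, ∀ᶠ m in atTop, ∀ x, |F m x - f x| ≤ η * ‖x‖) :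
    HC (fun m => bod (F m)) (bod f) := by
  apply hc_of_approx
  intro r hr
  filter_upwards [h r hr] with m hm
  exact ⟨fun x hx => bod_dist hf hr.le (fun z => by have := (abs_le.1 (hm z)).2; linarith) hx,
    fun x hx => bod_dist (hF m) hr.le (fun z => by have := (abs_le.1 (hm z)).1; linarith) hx⟩

/-- support function -/
noncomputable def sup {n : ℕ} (K : Set (EN n)) (x : EN n) : ℝ := sSup ((fun y => inner ℝ x y) '' K)

lemma sup_attain {K : Set (EN n)} (hK : IsConvexBody K) (x : EN n) :
    (∃ y ∈ K, inner ℝ x y = sup K x) ∧ ∀ y ∈ K, inner ℝ x y ≤ sup K x := by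
  have hc : IsCompact ((fun y => (inner ℝ x y : ℝ)) '' K) := hK.cpt.image (by fun_prop)
  obtain ⟨y, hy, h⟩ := hc.sSup_mem (hK.ne.image _)
  exact ⟨⟨y, hy, h⟩, fun y hy => le_csSup hc.bddAbove ⟨y, hy, rfl⟩⟩

lemma sup_sl {K : Set (EN n)} (hK : IsConvexBody K) : SL (sup K) := by
  refine ⟨fun x y => ?_, fun c hc x => ?_, ?_⟩
  · obtain ⟨z, hz, h⟩ := (sup_attain hK (x + y)).1
    rw [← h, inner_add_left]
    exact add_le_add ((sup_attain hK x).2 z hz) ((sup_attain hK y).2 z hz)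
  · apply le_antisymm
    · obtain ⟨z, hz, h⟩ := (sup_attain hK (c • x)).1
      rw [← h, real_inner_smul_left]
      exact mul_le_mul_of_nonneg_left ((sup_attain hK x).2 z hz) hc
    · obtain ⟨z, hz, h⟩ := (sup_attain hK x).1
      rw [← h, ← real_inner_smul_left]
      exact (sup_attain hK _).2 z hz
  · obtain ⟨C, hC⟩ := hK.cpt.isBounded.subset_closedBall 0
    refine ⟨C, fun x => ?_⟩
    obtain ⟨z, hz, h⟩ := (sup_attain hK x).1
    rw [← h]
    have := hC hz
    rw [mem_closedBall_zero_iff] at this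
    calc inner ℝ x z ≤ ‖x‖ * ‖z‖ := real_inner_le_norm _ _
      _ ≤ ‖x‖ * C := by gcongr
      _ = C * ‖x‖ := mul_comm _ _

lemma bod_sup {K : Set (EN n)} (hK : IsConvexBody K) : bod (sup K) = K :=
  bod_eq hK (fun y hy x => (sup_attain hK x).2 y hy) (fun x => (sup_attain hK x).1)

lemma sl_abs (w : EN n) : SL (fun x => |inner ℝ x w|) := by
  refine ⟨fun x y => ?_, fun c hc x => ?_, ⟨‖w‖, fun x => ?_⟩⟩
  · simp only [inner_add_left]; exact abs_add_le _ _
  · simp only [real_inner_smul_left, abs_mul, abs_of_nonneg hc]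
  · rw [mul_comm]; exact abs_real_inner_le_norm x w

lemma bod_segment (w : EN n) : bod (fun x => |inner ℝ x w|) = segment ℝ (-w) w := by
  apply bod_eq
  · exact ⟨⟨w, right_mem_segment _ _ _⟩, by
      rw [← convexHull_pair]; exact (Set.toFinite _).isCompact_convexHull _, convex_segment _ _⟩
  · rintro y ⟨a, b, ha, hb, hab, rfl⟩ x
    rw [inner_add_right, real_inner_smul_right, real_inner_smul_right, inner_neg_right]
    have h1 := le_abs_self (inner ℝ x w)
    have h2 := neg_abs_le (inner ℝ x w)
    nlinarith
  · intro x
    rcases le_total 0 (inner ℝ x w) with h | h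
    · exact ⟨w, right_mem_segment _ _ _, (abs_of_nonneg h).symm⟩
    · exact ⟨-w, left_mem_segment _ _ _, by rw [inner_neg_right, abs_of_nonpos h]⟩

/-- functions which can be added without changing the value of `φ`. -/
structure ZS (φ : Set (EN n) → ℝ) (f : EN n → ℝ) : Prop where
  sl : SL f
  eq : ∀ c : ℝ, 0 ≤ c → ∀ K, IsConvexBody K → φ (K + bod (fun x => c * f x)) = φ K

lemma ZS.smul {φ : Set (EN n) → ℝ} {f : EN n → ℝ} (h : ZS φ f) {c : ℝ} (hc : 0 ≤ c) :
    ZS φ (fun x => c * f x) :=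
  ⟨h.sl.smul' hc, fun d hd K hK => by
    simp only [← mul_assoc]; exact h.eq _ (mul_nonneg hd hc) K hK⟩

lemma ZS.add {φ : Set (EN n) → ℝ} {f g : EN n → ℝ} (hf : ZS φ f) (hg : ZS φ g) :
    ZS φ (fun x => f x + g x) :=
  ⟨hf.sl.add' hg.sl, fun d hd K hK => by
    simp only [mul_add]
    rw [bod_add (hf.sl.smul' hd) (hg.sl.smul' hd), ← add_assoc,
      hg.eq d hd _ (hK.add (bod_body (hf.sl.smul' hd))), hf.eq d hd K hK]⟩

lemma ZS.zero {φ : Set (EN n) → ℝ} : ZS φ (fun _ => 0) := by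
  have hb : bod (fun _ : EN n => (0 : ℝ)) = {0} :=
    bod_eq ⟨singleton_nonempty _, isCompact_singleton, convex_singleton _⟩
      (fun y hy x => by rw [mem_singleton_iff.1 hy]; simp) (fun x => ⟨0, rfl, by simp⟩)
  exact ⟨⟨by simp, by simp, ⟨0, by simp⟩⟩, fun d hd K hK => by simp [hb]⟩

lemma ZS.sum {φ : Set (EN n) → ℝ} {ι : Type*} (s : Finset ι) {f : ι → EN n → ℝ}
    (hf : ∀ i ∈ s, ZS φ (f i)) : ZS φ (fun x => ∑ i ∈ s, f i x) := by
  classical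
  induction s using Finset.induction_on with
  | empty => simpa using ZS.zero
  | insert a s ha ih =>
    simp only [Finset.sum_insert ha]
    exact (hf a (Finset.mem_insert_self _ _)).add
      (ih fun i hi => hf i (Finset.mem_insert_of_mem hi))

lemma ZS.lim {φ : Set (EN n) → ℝ} (hφ : SV φ) {F : ℕ → EN n → ℝ} {f : EN n → ℝ}
    (hF : ∀ m, ZS φ (F m)) (hf : SL f)
    (h : ∀ η > 0, ∀ᶠ m in atTop, ∀ x, |F m x - f x| ≤ η * ‖x‖) : ZS φ f := by
  refine ⟨hf, fun c hc K hK => ?_⟩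
  have e : ∀ g : EN n → ℝ, SL g → K + bod (fun x => c * g x) = bod (fun x => sup K x + c * g x) := by
    intro g hg
    rw [bod_add (sup_sl hK) (hg.smul' hc), bod_sup hK]
  have s : ∀ g : EN n → ℝ, SL g → SL (fun x => sup K x + c * g x) := fun g hg =>
    (sup_sl hK).add' (hg.smul' hc)
  have hl : HC (fun m => K + bod (fun x => c * F m x)) (K + bod (fun x => c * f x)) := by
    rw [e f hf]
    simp only [fun m => e (F m) (hF m).sl]
    apply bod_hc (fun m => s _ (hF m).sl) (s f hf)
    intro η hη
    filter_upwards [h (η / (c + 1)) (by positivity)] with m hm x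
    have e1 : sup K x + c * F m x - (sup K x + c * f x) = c * (F m x - f x) := by ring
    rw [e1, abs_mul, abs_of_nonneg hc]
    calc c * |F m x - f x| ≤ c * (η / (c + 1) * ‖x‖) := by gcongr; exact hm x
      _ = (c / (c + 1)) * (η * ‖x‖) := by field_simp
      _ ≤ 1 * (η * ‖x‖) := by
        gcongr
        rw [div_le_one (by positivity)]; linarith
      _ = _ := one_mul _
  have hlim := hφ.cont _ _ (fun m => hK.add (bod_body ((hF m).sl.smul' hc)))
    (hK.add (bod_body (hf.smul' hc))) hl
  simp only [fun m => (hF m).eq c hc K hK] at hlim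
  exact tendsto_nhds_unique hlim tendsto_const_nhds |>.symm ▸ rfl

lemma ZS.segment (IH : KlainHyp n) {φ : Set (EN (n + 1)) → ℝ} (h : TE φ) (hz : ZP φ)
    (w : EN (n + 1)) : ZS φ (fun x => |inner ℝ x w|) := by
  refine ⟨sl_abs w, fun c hc K hK => ?_⟩
  have : (fun x : EN (n + 1) => c * |inner ℝ x w|) = fun x => |inner ℝ x (c • w)| := by
    ext x; rw [real_inner_smul_right, abs_mul, abs_of_nonneg hc]
  rw [this, bod_segment]
  exact add_segment IH h hz hK _

end PartG1

section PartG2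

open MeasureTheory Metric Set Filter Pointwise ProbabilityTheory

variable {n : ℕ}

lemma charFunDual_gauss (v : NNReal) (L : StrongDual ℝ ℝ) :
    charFunDual (gaussianReal 0 v) L = Complex.exp (-(v * (L 1) ^ 2 / 2 : ℝ)) := by
  rw [charFunDual_eq_charFun_map_one]
  have : (gaussianReal 0 v).map L = gaussianReal 0 (NNReal.mk ((L 1) ^ 2) (sq_nonneg _) * v) := by
    have h2 : (L : ℝ → ℝ) = fun x => L 1 * x := by
      ext x
      have := L.map_smul x 1
      simp at this
      rw [this]; ring
    rw [h2, gaussianReal_map_const_mul]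
    simp
  rw [this, charFun_gaussianReal]
  congr 1
  push_cast
  simp
  ring

lemma charFunDual_std {ι : Type*} [Fintype ι] [DecidableEq ι] (L : StrongDual ℝ (EuclideanSpace ℝ ι)) :
    charFunDual (stdGaussian (EuclideanSpace ℝ ι)) L =
      Complex.exp (-((∑ i, (L (EuclideanSpace.single i 1)) ^ 2) / 2 : ℝ)) := by
  rw [charFunDual_stdGaussian, ← Complex.ofReal_pow, (EuclideanSpace.basisFun ι ℝ).norm_dual]
  congr 1
  simp [neg_div]

/-- matrices -/
abbrev MN (n : ℕ) := EuclideanSpace ℝ (Fin n × Fin n)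

/-- skew matrix action -/
noncomputable def Sk (B : MN n) (x : EN n) : EN n :=
  WithLp.toLp 2 (fun k => (Real.sqrt 2)⁻¹ * ∑ l, (B (k, l) - B (l, k)) * x l)

lemma Sk_apply (B : MN n) (x : EN n) (k : Fin n) :
    Sk B x k = (Real.sqrt 2)⁻¹ * ∑ l, (B (k, l) - B (l, k)) * x l := rfl

lemma Sk_add (B : MN n) (x y : EN n) : Sk B (x + y) = Sk B x + Sk B y := by
  ext k; simp [Sk_apply, mul_add, Finset.sum_add_distrib]

lemma Sk_smul (B : MN n) (c : ℝ) (x : EN n) : Sk B (c • x) = c • Sk B x := by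
  ext k; simp only [Sk_apply, PiLp.smul_apply, smul_eq_mul, Finset.mul_sum]
  exact Finset.sum_congr rfl fun _ _ => by ring

lemma Sk_add_left (B C : MN n) (x : EN n) : Sk (B + C) x = Sk B x + Sk C x := by
  ext k; simp only [Sk_apply, PiLp.add_apply, ← mul_add, ← Finset.sum_add_distrib]
  congr 1; exact Finset.sum_congr rfl fun _ _ => by ring

lemma Sk_smul_left (B : MN n) (c : ℝ) (x : EN n) : Sk (c • B) x = c • Sk B x := by
  ext k; simp only [Sk_apply, PiLp.smul_apply, smul_eq_mul, Finset.mul_sum]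
  exact Finset.sum_congr rfl fun _ _ => by ring

/-- `B ↦ Sk B x` as a continuous linear map -/
noncomputable def SkL (x : EN n) : MN n →L[ℝ] EN n :=
  LinearMap.toContinuousLinearMap
    { toFun := fun B => Sk B x
      map_add' := fun B C => Sk_add_left B C x
      map_smul' := fun c B => Sk_smul_left B c x }

lemma SkL_apply (x : EN n) (B : MN n) : SkL x B = Sk B x := rfl

lemma Sk_single (i j : Fin n) (x : EN n) : Sk (EuclideanSpace.single (i, j) 1) x =
    (Real.sqrt 2)⁻¹ • (x j • EuclideanSpace.single i 1 - x i • EuclideanSpace.single j 1) := by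
  ext k
  simp only [Sk_apply, PiLp.smul_apply, PiLp.sub_apply, smul_eq_mul, PiLp.single_apply, Prod.mk.injEq,
    sub_mul, Finset.sum_sub_distrib]
  congr 2
  · by_cases h : k = i <;> simp [h]
  · by_cases h : k = j <;> simp [h]

lemma quad_id (ξ x : Fin n → ℝ) (hx : ∑ i, x i ^ 2 = 1) :
    (∑ i, ξ i * x i) ^ 2 + ∑ p : Fin n × Fin n, ((Real.sqrt 2)⁻¹ * (x p.2 * ξ p.1 - x p.1 * ξ p.2)) ^ 2
      = ∑ i, ξ i ^ 2 := by
  have h2 : ((Real.sqrt 2)⁻¹) ^ 2 = 1 / 2 := by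
    rw [inv_pow, Real.sq_sqrt (by norm_num)]; norm_num
  simp only [mul_pow, h2, ← Finset.mul_sum]
  rw [Fintype.sum_prod_type]
  have e : ∀ i j : Fin n, (x j * ξ i - x i * ξ j) ^ 2 =
      ξ i ^ 2 * x j ^ 2 + x i ^ 2 * ξ j ^ 2 - 2 * ((ξ i * x i) * (ξ j * x j)) := fun i j => by ring
  simp only [e, Finset.sum_sub_distrib, Finset.sum_add_distrib, ← Finset.mul_sum, ← Finset.sum_mul, hx]
  ring

lemma dual_expand {ι : Type*} [Fintype ι] [DecidableEq ι] {F : Type*} [NormedAddCommGroup F]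
    [NormedSpace ℝ F] (L : EuclideanSpace ℝ ι →L[ℝ] F) (y : EuclideanSpace ℝ ι) :
    L y = ∑ i, y i • L (EuclideanSpace.single i 1) := by
  conv_lhs => rw [← (EuclideanSpace.basisFun ι ℝ).sum_repr y]
  simp

/-- the two gaussian spaces -/
noncomputable abbrev gam (n : ℕ) : Measure (ℝ × MN n) :=
  (gaussianReal 0 1).prod (stdGaussian (MN n))

/-- product of two gaussians -/
noncomputable abbrev gam2 (n : ℕ) : Measure (EN n × EN n) :=
  (stdGaussian (EN n)).prod (stdGaussian (EN n))

/-- random matrix -/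
noncomputable def AM (ω : ℝ × MN n) (x : EN n) : EN n := ω.1 • x + Sk ω.2 x

/-- lhs map -/
noncomputable def lawL (x : EN n) : (ℝ × MN n) × ℝ →L[ℝ] EN n × ℝ :=
  (((ContinuousLinearMap.fst ℝ ℝ (MN n)).smulRight x +
    (SkL x).comp (ContinuousLinearMap.snd ℝ ℝ (MN n))).comp (ContinuousLinearMap.fst ℝ _ ℝ)).prod
   ((ContinuousLinearMap.fst ℝ ℝ (MN n)).comp (ContinuousLinearMap.fst ℝ _ ℝ) -
    ContinuousLinearMap.snd ℝ _ ℝ)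

lemma lawL_apply (x : EN n) (ω : (ℝ × MN n) × ℝ) : lawL x ω = (AM ω.1 x, ω.1.1 - ω.2) := rfl

/-- rhs map -/
noncomputable def lawR (s : ℝ) (x : EN n) : EN n × EN n →L[ℝ] EN n × ℝ :=
  (ContinuousLinearMap.fst ℝ (EN n) (EN n)).prod
   ((innerSL ℝ x).comp (ContinuousLinearMap.fst ℝ (EN n) (EN n) + s • ContinuousLinearMap.snd ℝ _ _))

lemma lawR_apply (s : ℝ) (x : EN n) (ω : EN n × EN n) :
  lawR s x ω = (ω.1, inner ℝ x (ω.1 + s • ω.2)) := rfl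

lemma law_eq (v : NNReal) {x : EN n} (hx : ‖x‖ = 1) :
    ((gam n).prod (gaussianReal 0 v)).map (lawL x) = (gam2 n).map (lawR (Real.sqrt v) x) := by
  apply Measure.ext_of_charFunDual
  ext L
  rw [charFunDual_map, charFunDual_map, charFunDual_prod, charFunDual_prod, charFunDual_prod,
    charFunDual_gauss, charFunDual_gauss, charFunDual_std, charFunDual_std, charFunDual_std,
    ← Complex.exp_add, ← Complex.exp_add, ← Complex.exp_add]
  congr 1
  norm_cast
  set ξ : Fin n → ℝ := fun i => L (EuclideanSpace.single i 1, 0) with hξ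
  set η : ℝ := L (0, 1) with hη
  have hL : ∀ y s, L (y, s) = ∑ i, y i * ξ i + s * η := by
    intro y s
    have : (y, s) = (y, (0:ℝ)) + s • ((0 : EN n), (1:ℝ)) := by simp
    rw [this, map_add, map_smul, hη, smul_eq_mul]
    congr 1
    have := dual_expand (L.comp (ContinuousLinearMap.inl ℝ (EN n) ℝ)) y
    simpa using this
  have hx2 : ∑ i, x i ^ 2 = 1 := by
    rw [← EuclideanSpace.real_norm_sq_eq, hx]; norm_num
  simp only [ContinuousLinearMap.comp_apply, ContinuousLinearMap.inl_apply,
    ContinuousLinearMap.inr_apply, lawL_apply, lawR_apply, hL]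
  have q := quad_id ξ x hx2
  have f1 : ∀ p : Fin n × Fin n, ∑ i, (AM ((0:ℝ), (EuclideanSpace.single p 1 : MN n)) x) i * ξ i =
      (Real.sqrt 2)⁻¹ * (x p.2 * ξ p.1 - x p.1 * ξ p.2) := by
    rintro ⟨i, j⟩
    simp only [AM, zero_smul, zero_add, Sk_single]
    simp [sub_mul, Finset.sum_sub_distrib, mul_assoc, ← Finset.mul_sum, mul_sub]
  have f2 : ∑ i, (AM ((1:ℝ), (0 : MN n)) x) i * ξ i = ∑ i, ξ i * x i := by
    have : Sk (0 : MN n) x = 0 := (SkL x).map_zero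
    simp [AM, this, mul_comm]
  have f3 : AM (0 : ℝ × MN n) x = 0 := by
    have : Sk (0 : MN n) x = 0 := (SkL x).map_zero
    simp [AM, this]
  have f4 : ∀ s : ℝ, ∑ i, (ξ i + s * x i) ^ 2 = ∑ i, ξ i ^ 2 + 2 * s * (∑ i, ξ i * x i) + s ^ 2 := by
    intro s
    have : ∀ i, (ξ i + s * x i) ^ 2 = ξ i ^ 2 + 2 * s * (ξ i * x i) + s ^ 2 * x i ^ 2 := fun i => by ring
    simp only [this, Finset.sum_add_distrib, ← Finset.mul_sum, hx2]; ring
  have hv : Real.sqrt v ^ 2 = v := Real.sq_sqrt v.2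
  have g1 : ∀ i : Fin n, (inner ℝ x (EuclideanSpace.single i 1 : EN n) : ℝ) = x i := fun i => by
    simp [EuclideanSpace.inner_single_right]
  have g2 : ∀ i : Fin n, ∑ k, (EuclideanSpace.single i 1 : EN n) k * ξ k = ξ i := fun i => by simp
  simp only [f1, f2, f3, g2, smul_zero, add_zero, zero_add, sub_zero, zero_sub, one_mul, zero_mul,
    g1, real_inner_smul_right, Prod.fst_zero, Prod.snd_zero, PiLp.zero_apply, Finset.sum_const_zero,
    Prod.mk_zero_zero]
  have f5 := f4 η
  simp only [mul_comm η] at f5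
  rw [f5]
  simp only [mul_pow, ← Finset.sum_mul, ← Finset.mul_sum, hx2, hv]
  have q' := q
  simp only [mul_pow, ← Finset.mul_sum] at q'
  rw [← q']
  push_cast
  ring

end PartG2

section PartG3

open MeasureTheory Metric Set Filter Pointwise ProbabilityTheory

variable {n : ℕ}

/-- restrictions to the ball of ZS functions -/
def ZSet (φ : Set (EN n) → ℝ) : Set (C(closedBall (0 : EN n) 1, ℝ)) :=
  {F | ∃ f, ZS φ f ∧ ∀ x : closedBall (0 : EN n) 1, F x = f x}

lemma ZSet_convex (φ : Set (EN n) → ℝ) : Convex ℝ (ZSet φ) := by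
  rintro F ⟨f, hf, hF⟩ G ⟨g, hg, hG⟩ a b ha hb -
  refine ⟨fun x => a * f x + b * g x, (hf.smul ha).add (hg.smul hb), fun x => ?_⟩
  simp [hF, hG]

lemma unit_mem (x : EN n) : ‖x‖⁻¹ • x ∈ closedBall (0 : EN n) 1 := by
  rw [mem_closedBall_zero_iff, norm_smul, norm_inv, norm_norm]
  exact inv_mul_le_one

lemma SL.scale {f : EN n → ℝ} (h : SL f) (x : EN n) : f x = ‖x‖ * f (‖x‖⁻¹ • x) := by
  rw [← h.smul _ (norm_nonneg x)]
  by_cases hx : x = 0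
  · simp [hx]
  · rw [smul_inv_smul₀ (norm_ne_zero_iff.2 hx)]

lemma ZSet_closed {φ : Set (EN n) → ℝ} (hφ : SV φ) : IsClosed (ZSet φ) := by
  apply IsSeqClosed.isClosed
  intro F G hF hG
  choose f hf hFf using hF
  set g : EN n → ℝ := fun x => ‖x‖ * G ⟨‖x‖⁻¹ • x, unit_mem x⟩ with hg
  have hd : Tendsto (fun m => ‖F m - G‖) atTop (nhds 0) := by
    have := tendsto_iff_norm_sub_tendsto_zero.1 hG
    exact this
  have key : ∀ m x, |f m x - g x| ≤ ‖F m - G‖ * ‖x‖ := by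
    intro m x
    rw [(hf m).sl.scale x, ← hFf m ⟨_, unit_mem x⟩, hg]
    simp only
    rw [← mul_sub, abs_mul, abs_of_nonneg (norm_nonneg x), mul_comm]
    exact mul_le_mul_of_nonneg_right ((F m - G).norm_coe_le_norm ⟨_, unit_mem x⟩) (norm_nonneg x)
  have lim : ∀ x, Tendsto (fun m => f m x) atTop (nhds (g x)) := by
    intro x
    rw [tendsto_iff_norm_sub_tendsto_zero]
    refine squeeze_zero (fun m => norm_nonneg _) (fun m => key m x) ?_
    simpa using hd.mul_const ‖x‖
  have hsl : SL g := by
    refine ⟨fun x y => ?_, fun c hc x => ?_, ⟨‖G‖, fun x => ?_⟩⟩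
    · exact le_of_tendsto_of_tendsto' (lim _) ((lim x).add (lim y)) fun m => (hf m).sl.add x y
    · have h1 := lim (c • x)
      have h2 := (lim x).const_mul c
      simp only [(hf _).sl.smul c hc] at h1
      exact tendsto_nhds_unique h1 h2
    · simp only [hg]
      rw [mul_comm]
      exact mul_le_mul_of_nonneg_right ((le_abs_self _).trans (G.norm_coe_le_norm ⟨_, unit_mem x⟩))
        (norm_nonneg x)
  refine ⟨g, ZS.lim hφ hf hsl fun η hη => ?_, fun x => ?_⟩
  · filter_upwards [hd.eventually (gt_mem_nhds hη)] with m hm x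
    exact (key m x).trans (mul_le_mul_of_nonneg_right hm.le (norm_nonneg x))
  · have h1 := lim x
    simp only [← hFf] at h1
    have h2 : Tendsto (fun m => F m x) atTop (nhds (G x)) :=
      ((continuous_eval_const x).tendsto G).comp hG
    exact tendsto_nhds_unique h2 h1

/-- curry -/
noncomputable def absC (n : ℕ) : C(EN n, C(closedBall (0 : EN n) 1, ℝ)) :=
  ContinuousMap.curry ⟨fun p : EN n × closedBall (0 : EN n) 1 => |inner ℝ (p.2 : EN n) p.1|, by fun_prop⟩

lemma absC_apply (w : EN n) (x : closedBall (0 : EN n) 1) : absC n w x = |inner ℝ (x : EN n) w| := rfl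

lemma ZS.integral {φ : Set (EN n) → ℝ} (hφ : SV φ)
    (hz : ∀ w : EN n, ZS φ (fun x => |inner ℝ x w|))
    {Ω : Type*} [MeasurableSpace Ω] {μ : Measure Ω} [IsProbabilityMeasure μ] {W : Ω → EN n}
    (hW : Integrable W μ) : ZS φ (fun x => ∫ ω, |inner ℝ x (W ω)| ∂μ) := by
  have hWint : Integrable (fun ω => absC n (W ω)) μ := by
    refine Integrable.mono hW ((absC n).continuous.comp_aestronglyMeasurable hW.1) ?_
    refine Eventually.of_forall fun ω => ?_
    rw [ContinuousMap.norm_le _ (norm_nonneg _)]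
    intro x
    rw [absC_apply, Real.norm_eq_abs, abs_abs]
    refine (abs_real_inner_le_norm _ _).trans ?_
    have : ‖(x : EN n)‖ ≤ 1 := mem_closedBall_zero_iff.1 x.2
    exact mul_le_of_le_one_left (norm_nonneg _) this
  have hmem : ∫ ω, absC n (W ω) ∂μ ∈ ZSet φ :=
    (ZSet_convex φ).integral_mem (ZSet_closed hφ)
      (Eventually.of_forall fun ω => ⟨_, hz (W ω), fun x => rfl⟩) hWint
  obtain ⟨f, hf, h⟩ := hmem
  have e : ∀ x ∈ closedBall (0 : EN n) 1, f x = ∫ ω, |inner ℝ x (W ω)| ∂μ := by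
    intro x hx
    rw [← h ⟨x, hx⟩, ContinuousMap.integral_apply hWint]
    rfl
  have : (fun x => ∫ ω, |inner ℝ x (W ω)| ∂μ) = f := by
    ext x
    rw [hf.sl.scale x, e _ (unit_mem x), ← integral_const_mul]
    congr 1
    ext ω
    rw [real_inner_smul_left, abs_mul, abs_of_nonneg (inv_nonneg.2 (norm_nonneg x)), ← mul_assoc]
    by_cases hx : x = 0
    · simp [hx]
    · rw [mul_inv_cancel₀ (norm_ne_zero_iff.2 hx), one_mul]
  rw [this]; exact hf

/-- differences of `ZS` functions -/
def DZ (φ : Set (EN n) → ℝ) (f : EN n → ℝ) : Prop :=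
  ∃ g h, ZS φ g ∧ ZS φ h ∧ ∀ x, f x = g x - h x

lemma ZS.dz {φ : Set (EN n) → ℝ} {f : EN n → ℝ} (h : ZS φ f) : DZ φ f :=
  ⟨f, fun _ => 0, h, ZS.zero, fun x => by simp⟩

lemma DZ.add {φ : Set (EN n) → ℝ} {f g : EN n → ℝ} (hf : DZ φ f) (hg : DZ φ g) :
    DZ φ (fun x => f x + g x) := by
  obtain ⟨a, b, ha, hb, e⟩ := hf
  obtain ⟨c, d, hc, hd, e'⟩ := hg
  exact ⟨_, _, ha.add hc, hb.add hd, fun x => by simp only [e, e']; ring⟩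

lemma DZ.smul {φ : Set (EN n) → ℝ} {f : EN n → ℝ} (hf : DZ φ f) (c : ℝ) :
    DZ φ (fun x => c * f x) := by
  obtain ⟨a, b, ha, hb, e⟩ := hf
  rcases le_total 0 c with h | h
  · exact ⟨_, _, ha.smul h, hb.smul h, fun x => by simp only [e]; ring⟩
  · exact ⟨_, _, hb.smul (neg_nonneg.2 h), ha.smul (neg_nonneg.2 h), fun x => by simp only [e]; ring⟩

lemma DZ.sum {φ : Set (EN n) → ℝ} {ι : Type*} (s : Finset ι) {f : ι → EN n → ℝ}
    (hf : ∀ i ∈ s, DZ φ (f i)) : DZ φ (fun x => ∑ i ∈ s, f i x) := by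
  classical
  induction s using Finset.induction_on with
  | empty => simpa using ZS.zero.dz
  | insert a s ha ih =>
    simp only [Finset.sum_insert ha]
    exact (hf a (Finset.mem_insert_self _ _)).add (ih fun i hi => hf i (Finset.mem_insert_of_mem hi))

lemma DZ.vanish {φ : Set (EN n) → ℝ} {f : EN n → ℝ} (h0 : φ {0} = 0) (hf : DZ φ f) (hs : SL f) :
    φ (bod f) = 0 := by
  obtain ⟨a, b, ha, hb, e⟩ := hf
  have h1 := hb.eq 1 zero_le_one _ (bod_body hs)
  simp only [one_mul] at h1
  rw [← bod_add hs hb.sl] at h1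
  have : (fun x => f x + b x) = a := by ext x; rw [e]; ring
  rw [this] at h1
  have h2 := ha.eq 1 zero_le_one {0} ⟨singleton_nonempty _, isCompact_singleton, convex_singleton _⟩
  simp only [one_mul, singleton_add, zero_add, image_id'] at h2
  rw [← h1, h2, h0]

end PartG3

section PartG4

open MeasureTheory Metric Set Filter Pointwise ProbabilityTheory

variable {n : ℕ}

/-- weight density -/
noncomputable def qm (m : ℕ) (b : ℝ) : ℝ := Real.exp (-b ^ 2) * (1 - Real.exp (-b ^ 2)) ^ m

lemma qm_nonneg (m : ℕ) (b : ℝ) : 0 ≤ qm m b := by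
  have : Real.exp (-b ^ 2) ≤ 1 := Real.exp_le_one_iff.2 (by nlinarith [sq_nonneg b])
  exact mul_nonneg (Real.exp_pos _).le (pow_nonneg (by linarith) _)

lemma qm_le (m : ℕ) (b : ℝ) : qm m b ≤ Real.exp (-b ^ 2) := by
  have : Real.exp (-b ^ 2) ≤ 1 := Real.exp_le_one_iff.2 (by nlinarith [sq_nonneg b])
  exact mul_le_of_le_one_right (Real.exp_pos _).le (pow_le_one₀ (by linarith)
    (by linarith [Real.exp_pos (-b ^ 2)]))

lemma qm_cont (m : ℕ) : Continuous (qm m) := by unfold qm; fun_prop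

lemma exp_int : Integrable (fun b : ℝ => Real.exp (-b ^ 2)) := by
  simpa using integrable_exp_neg_mul_sq (b := 1) one_pos

lemma qm_int (m : ℕ) : Integrable (qm m) := by
  refine exp_int.mono (qm_cont m).aestronglyMeasurable (Eventually.of_forall fun b => ?_)
  rw [Real.norm_of_nonneg (qm_nonneg m b), Real.norm_of_nonneg (Real.exp_pos _).le]
  exact qm_le m b

/-- weight -/
noncomputable def wm (m : ℕ) (t : ℝ) : ℝ := ∫ b, max (|t| - |b|) 0 * qm m b

lemma wm_int (m : ℕ) (t : ℝ) : Integrable (fun b => max (|t| - |b|) 0 * qm m b) := by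
  refine ((qm_int m).const_mul |t|).mono ?_ (Eventually.of_forall fun b => ?_)
  · exact (((by fun_prop : Continuous fun b : ℝ => max (|t| - |b|) 0)).mul
      (qm_cont m)).aestronglyMeasurable
  · rw [norm_mul, norm_mul]
    refine mul_le_mul_of_nonneg_right ?_ (norm_nonneg _)
    rw [Real.norm_of_nonneg (le_max_right _ _), Real.norm_of_nonneg (abs_nonneg _)]
    exact max_le (by linarith [abs_nonneg b]) (abs_nonneg t)

lemma wm_nonneg (m : ℕ) (t : ℝ) : 0 ≤ wm m t :=
  integral_nonneg fun b => mul_nonneg (le_max_right _ _) (qm_nonneg m b)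

lemma wm_le (m : ℕ) (t : ℝ) : wm m t ≤ (∫ b, qm m b) * |t| := by
  rw [mul_comm, ← integral_const_mul]
  refine integral_mono (wm_int m t) ((qm_int m).const_mul _) fun b => ?_
  exact mul_le_mul_of_nonneg_right (max_le (by linarith [abs_nonneg b]) (abs_nonneg t)) (qm_nonneg m b)

lemma wm_cont (m : ℕ) : Continuous (wm m) := by
  rw [continuous_iff_continuousAt]
  intro t₀
  refine continuousAt_of_dominated (bound := fun b => (|t₀| + 1) * qm m b) ?_ ?_ ?_ ?_
  · exact Eventually.of_forall fun t => (wm_int m t).1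
  · have : ∀ᶠ t in nhds t₀, |t| < |t₀| + 1 :=
      (continuous_abs.tendsto t₀).eventually (gt_mem_nhds (by linarith))
    filter_upwards [this] with t ht
    refine Eventually.of_forall fun b => ?_
    rw [norm_mul, Real.norm_of_nonneg (qm_nonneg m b), Real.norm_of_nonneg (le_max_right _ _)]
    exact mul_le_mul_of_nonneg_right (max_le (by linarith [abs_nonneg b]) (by positivity)) (qm_nonneg m b)
  · exact (qm_int m).const_mul _
  · exact Eventually.of_forall fun b => by fun_prop

lemma shift_int (m : ℕ) (t : ℝ) : Integrable (fun b => (|t - b| - |b|) * qm m b) := by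
  refine ((qm_int m).const_mul |t|).mono ?_ (Eventually.of_forall fun b => ?_)
  · exact (((by fun_prop : Continuous fun b : ℝ => |t - b| - |b|)).mul
      (qm_cont m)).aestronglyMeasurable
  · rw [norm_mul, norm_mul]
    refine mul_le_mul_of_nonneg_right ?_ (norm_nonneg _)
    rw [Real.norm_eq_abs, Real.norm_eq_abs, abs_abs]
    have := abs_abs_sub_abs_le (t - b) (-b)
    simpa using this

lemma wm_eq (m : ℕ) (t : ℝ) : wm m t = ∫ b, (|t - b| - |b|) * qm m b := by
  have h1 : ∫ b, (|t - b| - |b|) * qm m b = ∫ b, (|t + b| - |b|) * qm m b := by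
    rw [← integral_neg_eq_self]
    congr 1; ext b
    simp [qm]
  have h2 : Integrable (fun b => (|t + b| - |b|) * qm m b) := by
    have := (shift_int m t).comp_neg
    simpa [qm] using this
  have h3 : ∫ b, (|t - b| - |b|) * qm m b + (|t + b| - |b|) * qm m b = 2 * wm m t := by
    rw [wm, ← integral_const_mul]
    congr 1; ext b
    have : |t - b| + |t + b| = 2 * max |t| |b| := by
      rcases le_total |t| |b| with h | h
      · rw [max_eq_right h]
        rcases abs_cases t with ⟨h1, h1'⟩ | ⟨h1, h1'⟩ <;> rcases abs_cases b with ⟨h2, h2'⟩ | ⟨h2, h2'⟩ <;>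
        rcases abs_cases (t - b) with ⟨h3, h3'⟩ | ⟨h3, h3'⟩ <;>
        rcases abs_cases (t + b) with ⟨h4, h4'⟩ | ⟨h4, h4'⟩ <;> linarith
      · rw [max_eq_left h]
        rcases abs_cases t with ⟨h1, h1'⟩ | ⟨h1, h1'⟩ <;> rcases abs_cases b with ⟨h2, h2'⟩ | ⟨h2, h2'⟩ <;>
        rcases abs_cases (t - b) with ⟨h3, h3'⟩ | ⟨h3, h3'⟩ <;>
        rcases abs_cases (t + b) with ⟨h4, h4'⟩ | ⟨h4, h4'⟩ <;> linarith
    have h5 : max (|t| - |b|) 0 = max |t| |b| - |b| := by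
      rcases le_total |t| |b| with h | h
      · rw [max_eq_right h, max_eq_right (by linarith)]; ring
      · rw [max_eq_left h, max_eq_left (by linarith)]
    rw [h5, ← add_mul, ← mul_assoc]
    congr 1
    linarith
  rw [integral_add (shift_int m t) h2, ← h1] at h3
  linarith

/-- variances -/
noncomputable def vj (j : ℕ) : NNReal := (2 * (j + 1))⁻¹

/-- coefficients -/
noncomputable def cj (m j : ℕ) : ℝ := (-1) ^ j * (m.choose j) * Real.sqrt (2 * Real.pi * vj j)

lemma vj_pos (j : ℕ) : 0 < vj j := by unfold vj; positivity

lemma pdf_vj (j : ℕ) (b : ℝ) :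
    Real.sqrt (2 * Real.pi * vj j) * gaussianPDFReal 0 (vj j) b = Real.exp (-b ^ 2) ^ (j + 1) := by
  have hv : (0:ℝ) < vj j := vj_pos j
  have : Real.sqrt (2 * Real.pi * vj j) ≠ 0 := (Real.sqrt_pos.2 (by positivity)).ne'
  rw [gaussianPDFReal, mul_inv_cancel_left₀ this, ← Real.exp_nat_mul]
  congr 1
  rw [sub_zero]
  have e : (vj j : ℝ) = (2 * ((j:ℝ) + 1))⁻¹ := by unfold vj; push_cast; ring
  rw [e]
  push_cast
  field_simp

lemma qm_expand (m : ℕ) (b : ℝ) :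
    qm m b = ∑ j ∈ Finset.range (m + 1), cj m j * gaussianPDFReal 0 (vj j) b := by
  have : (1 - Real.exp (-b ^ 2)) ^ m = (-Real.exp (-b ^ 2) + 1) ^ m := by ring
  rw [qm, this, add_pow, Finset.mul_sum]
  refine Finset.sum_congr rfl fun j _ => ?_
  rw [cj, mul_assoc ((-1) ^ j * (m.choose j : ℝ)), pdf_vj, neg_pow]
  ring

lemma gauss_id (v : NNReal) : Integrable (fun b : ℝ => b) (gaussianReal 0 v) :=
  (memLp_one_iff_integrable.1 (memLp_id_gaussianReal' (μ := 0) (v := v) 1 (by simp)))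

lemma wm_gauss (m : ℕ) (t : ℝ) : wm m t =
    ∑ j ∈ Finset.range (m + 1), cj m j * ∫ b, (|t - b| - |b|) ∂(gaussianReal 0 (vj j)) := by
  rw [wm_eq]
  simp only [qm_expand, Finset.mul_sum]
  rw [integral_finsetSum]
  · refine Finset.sum_congr rfl fun j _ => ?_
    rw [integral_gaussianReal_eq_integral_smul (vj_pos j).ne', ← integral_const_mul]
    congr 1; ext b
    simp only [smul_eq_mul]; ring
  · intro j _
    have h1 : Integrable (fun b => |t - b| - |b|) (gaussianReal 0 (vj j)) :=
      (((integrable_const t).sub (gauss_id _)).abs).sub (gauss_id _).abs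
    rw [gaussianReal_of_var_ne_zero _ (vj_pos j).ne'] at h1
    have h2 := (integrable_withDensity_iff_integrable_smul' (measurable_gaussianPDF _ _)
      (Eventually.of_forall fun x => by simp [gaussianPDF])).1 h1
    have h3 := h2.const_mul (cj m j)
    refine h3.congr (Eventually.of_forall fun b => ?_)
    simp only [smul_eq_mul, toReal_gaussianPDF]; ring

lemma wm_gint (m : ℕ) : Integrable (wm m) (gaussianReal 0 1) := by
  refine ((gauss_id 1).abs.const_mul (∫ b, qm m b)).mono (wm_cont m).aestronglyMeasurable
    (Eventually.of_forall fun t => ?_)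
  rw [Real.norm_of_nonneg (wm_nonneg m t)]
  exact (wm_le m t).trans (le_abs_self _)

lemma wm_gint' (m : ℕ) : Integrable (fun t => |t| * wm m t) (gaussianReal 0 1) := by
  have h2 : Integrable (fun t : ℝ => t ^ 2) (gaussianReal 0 1) :=
    (memLp_id_gaussianReal' (μ := 0) (v := 1) 2 (by simp)).integrable_sq
  refine (h2.const_mul (∫ b, qm m b)).mono
    (continuous_abs.mul (wm_cont m)).aestronglyMeasurable (Eventually.of_forall fun t => ?_)
  rw [Real.norm_of_nonneg (mul_nonneg (abs_nonneg t) (wm_nonneg m t))]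
  refine le_trans ?_ (le_abs_self _)
  rw [← sq_abs]
  nlinarith [wm_le m t, abs_nonneg t]

lemma wm_conc {η : ℝ} (hη : 0 < η) : ∃ m, 0 < ∫ t, |t| * wm m t ∂(gaussianReal 0 1) ∧
    ∫ t, wm m t ∂(gaussianReal 0 1) ≤ η * ∫ t, |t| * wm m t ∂(gaussianReal 0 1) := by
  obtain ⟨L, hL1, hL⟩ : ∃ L : ℝ, 1 ≤ L ∧ 1 / L ≤ η / 2 :=
    ⟨max 1 (2 / η), le_max_left _ _, by
      rw [div_le_iff₀ (by positivity)]
      calc 1 = η / 2 * (2 / η) := by field_simp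
        _ ≤ _ := by gcongr; exact le_max_right _ _⟩
  have hL0 : 0 < L := by linarith
  set ρ := 1 - Real.exp (-L ^ 2) with hρ
  set σ := 1 - Real.exp (-(2 * L) ^ 2) with hσ
  have hρ0 : 0 ≤ ρ := by
    have : Real.exp (-L ^ 2) ≤ 1 := Real.exp_le_one_iff.2 (by nlinarith)
    linarith
  have hρσ : ρ < σ := by
    have : Real.exp (-(2 * L) ^ 2) < Real.exp (-L ^ 2) := Real.exp_lt_exp.2 (by nlinarith)
    linarith
  have hσ0 : 0 < σ := by linarith
  set κ := Real.exp (-(2 * L + 1) ^ 2) with hκ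
  have hκ0 : 0 < κ := Real.exp_pos _
  have up : ∀ m t, wm m t ≤ 2 * L ^ 2 * ρ ^ m + (1 / L) * (|t| * wm m t) := by
    intro m t
    rcases le_or_gt |t| L with h | h
    · have : wm m t ≤ ∫ b, indicator (Icc (-L) L) (fun _ => L * ρ ^ m) b := by
        refine integral_mono (wm_int m t) ?_ fun b => ?_
        · rw [integrable_indicator_iff measurableSet_Icc]
          exact integrableOn_const (by simp)
        · by_cases hb : b ∈ Icc (-L) L
          · rw [indicator_of_mem hb]
            have hb2 : b ^ 2 ≤ L ^ 2 := sq_le_sq' hb.1 hb.2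
            have e1 : Real.exp (-L ^ 2) ≤ Real.exp (-b ^ 2) := Real.exp_le_exp.2 (by linarith)
            have e2 : Real.exp (-b ^ 2) ≤ 1 := Real.exp_le_one_iff.2 (by nlinarith [sq_nonneg b])
            have e3 : qm m b ≤ ρ ^ m := by
              unfold qm
              refine (mul_le_of_le_one_left (pow_nonneg (by linarith) _) e2).trans ?_
              exact pow_le_pow_left₀ (by linarith) (by linarith) _
            exact mul_le_mul (max_le (by linarith [abs_nonneg b]) hL0.le) e3 (qm_nonneg _ _) hL0.le
          · rw [indicator_of_notMem hb]
            have : L ≤ |b| := by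
              by_contra hc
              push Not at hc
              exact hb ⟨(abs_lt.1 hc).1.le, (abs_lt.1 hc).2.le⟩
            simp only
            rw [max_eq_right (by linarith), zero_mul]
      rw [integral_indicator measurableSet_Icc, setIntegral_const] at this
      simp only [Measure.real, Real.volume_Icc, smul_eq_mul] at this
      rw [ENNReal.toReal_ofReal (by linarith)] at this
      have h3 : 0 ≤ (1 / L) * (|t| * wm m t) :=
        mul_nonneg (by positivity) (mul_nonneg (abs_nonneg _) (wm_nonneg _ _))
      linarith
    · have h1 : wm m t ≤ (1 / L) * (|t| * wm m t) := by
        rw [← mul_assoc]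
        refine le_mul_of_one_le_left (wm_nonneg _ _) ?_
        rw [one_div, inv_mul_eq_div, le_div_iff₀ hL0]; linarith
      have : 0 ≤ 2 * L ^ 2 * ρ ^ m := by positivity
      linarith
  have lo : ∀ m t, indicator (Icc (2 * L + 2) (2 * L + 3)) (fun _ => κ * σ ^ m) t ≤ |t| * wm m t := by
    intro m t
    by_cases ht : t ∈ Icc (2 * L + 2) (2 * L + 3)
    · rw [indicator_of_mem ht]
      have h1 : κ * σ ^ m ≤ wm m t := by
        have : ∫ b, indicator (Icc (2 * L) (2 * L + 1)) (fun _ => κ * σ ^ m) b ≤ wm m t := by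
          refine integral_mono ?_ (wm_int m t) fun b => ?_
          · rw [integrable_indicator_iff measurableSet_Icc]
            exact integrableOn_const (by simp)
          · by_cases hb : b ∈ Icc (2 * L) (2 * L + 1)
            · rw [indicator_of_mem hb]
              have b0 : 0 ≤ b := by linarith [hb.1]
              have e1 : κ ≤ Real.exp (-b ^ 2) := Real.exp_le_exp.2 (by nlinarith [hb.2])
              have e2 : Real.exp (-b ^ 2) ≤ Real.exp (-(2 * L) ^ 2) :=
                Real.exp_le_exp.2 (by nlinarith [hb.1])
              have e3 : κ * σ ^ m ≤ qm m b :=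
                mul_le_mul e1 (pow_le_pow_left₀ hσ0.le (by linarith) _) (by positivity)
                  (Real.exp_pos _).le
              refine e3.trans (le_mul_of_one_le_left (qm_nonneg _ _) (le_max_of_le_left ?_))
              rw [abs_of_nonneg b0, abs_of_nonneg (by linarith [ht.1])]
              linarith [hb.2, ht.1]
            · rw [indicator_of_notMem hb]
              exact mul_nonneg (le_max_right _ _) (qm_nonneg m b)
        rw [integral_indicator measurableSet_Icc, setIntegral_const] at this
        simpa [Measure.real, Real.volume_Icc] using this
      refine h1.trans (le_mul_of_one_le_left (wm_nonneg _ _) ?_)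
      exact le_trans (by linarith [ht.1]) (le_abs_self t)
    · rw [indicator_of_notMem ht]
      exact mul_nonneg (abs_nonneg _) (wm_nonneg _ _)
  set N := (gaussianReal 0 1).real (Icc (2 * L + 2) (2 * L + 3)) with hN
  have hN0 : 0 < N := by
    rw [hN, Measure.real, ENNReal.toReal_pos_iff]
    refine ⟨?_, measure_lt_top _ _⟩
    rw [pos_iff_ne_zero]
    intro h0
    have := (gaussianReal_absolutelyContinuous' 0 (v := 1) one_ne_zero) h0
    simp at this
    linarith
  have D : ∀ m, N * (κ * σ ^ m) ≤ ∫ t, |t| * wm m t ∂(gaussianReal 0 1) := by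
    intro m
    have := integral_mono (μ := gaussianReal 0 1) ?_ (wm_gint' m) (lo m)
    · rw [integral_indicator measurableSet_Icc, setIntegral_const] at this
      simpa using this
    · rw [integrable_indicator_iff measurableSet_Icc]
      exact integrableOn_const (by simp)
  have U : ∀ m, ∫ t, wm m t ∂(gaussianReal 0 1) ≤ 2 * L ^ 2 * ρ ^ m +
      (1 / L) * ∫ t, |t| * wm m t ∂(gaussianReal 0 1) := by
    intro m
    have := integral_mono (μ := gaussianReal 0 1) (wm_gint m)
      ((integrable_const (2 * L ^ 2 * ρ ^ m)).add ((wm_gint' m).const_mul (1 / L))) (up m)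
    rw [integral_add' (integrable_const _) ((wm_gint' m).const_mul (1 / L))] at this
    simpa [integral_const_mul] using this
  have lim : Tendsto (fun m : ℕ => (ρ / σ) ^ m) atTop (nhds 0) :=
    tendsto_pow_atTop_nhds_zero_of_lt_one (by positivity) ((div_lt_one hσ0).2 hρσ)
  have hpos : 0 < η / 2 * (N * κ) / (2 * L ^ 2) := by positivity
  obtain ⟨m, hm⟩ := (lim.eventually (gt_mem_nhds hpos)).exists
  refine ⟨m, lt_of_lt_of_le (by positivity) (D m), ?_⟩
  rw [div_pow, div_lt_iff₀ (by positivity), div_mul_eq_mul_div, lt_div_iff₀ (by positivity)] at hm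
  have d := D m
  have u := U m
  have d0 : 0 ≤ ∫ t, |t| * wm m t ∂(gaussianReal 0 1) := le_trans (by positivity) d
  have := mul_le_mul_of_nonneg_right hL d0
  nlinarith

end PartG4

section PartG5

open MeasureTheory Metric Set Filter Pointwise ProbabilityTheory

variable {n : ℕ}

lemma SL.lip {h : EN n → ℝ} (hh : SL h) : ∃ C : ℝ, 0 ≤ C ∧ ∀ x y, |h x - h y| ≤ C * ‖x - y‖ := by
  obtain ⟨C, hC⟩ := hh.bd
  have hC' : ∀ x, h x ≤ |C| * ‖x‖ := fun x =>
    (hC x).trans (mul_le_mul_of_nonneg_right (le_abs_self C) (norm_nonneg x))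
  refine ⟨|C|, abs_nonneg C, fun x y => ?_⟩
  have h1 := hh.add (x - y) y
  have h2 := hh.add (y - x) x
  have h3 := hC' (x - y)
  have h4 := hC' (y - x)
  rw [norm_sub_rev] at h4
  rw [sub_add_cancel] at h1 h2
  rw [abs_le]; constructor <;> linarith

lemma AM_add (ω : ℝ × MN n) (x y : EN n) : AM ω (x + y) = AM ω x + AM ω y := by
  simp only [AM, Sk_add, smul_add]; abel

lemma AM_smul (ω : ℝ × MN n) (c : ℝ) (x : EN n) : AM ω (c • x) = c • AM ω x := by
  simp only [AM, Sk_smul, smul_add, smul_comm c]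

lemma Sk_bound (n : ℕ) : ∃ κ : ℝ, 0 ≤ κ ∧ ∀ (B : MN n) (x : EN n), ‖Sk B x‖ ≤ κ * ‖B‖ * ‖x‖ := by
  let T : EN n →ₗ[ℝ] (MN n →L[ℝ] EN n) :=
    { toFun := SkL
      map_add' := fun x y => by ext1 B; exact Sk_add B x y
      map_smul' := fun c x => by ext1 B; exact Sk_smul B c x }
  let T' := LinearMap.toContinuousLinearMap T
  refine ⟨‖T'‖, T'.opNorm_nonneg, fun B x => ?_⟩
  have h1 := T'.le_opNorm x
  have h2 := (SkL x).le_opNorm B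
  calc ‖Sk B x‖ ≤ ‖SkL x‖ * ‖B‖ := h2
    _ ≤ ‖T'‖ * ‖x‖ * ‖B‖ := mul_le_mul_of_nonneg_right h1 (norm_nonneg B)
    _ = _ := by ring

/-- `ω ↦ AM ω x` is continuous linear -/
noncomputable def AML (x : EN n) : ℝ × MN n →L[ℝ] EN n :=
  (ContinuousLinearMap.fst ℝ ℝ (MN n)).smulRight x +
    (SkL x).comp (ContinuousLinearMap.snd ℝ ℝ (MN n))

lemma AML_apply (x : EN n) (ω : ℝ × MN n) : AML x ω = AM ω x := rfl

lemma AM_cont (x : EN n) : Continuous fun ω : ℝ × MN n => AM ω x := (AML x).continuous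

lemma gauss_sq {E : Type*} [NormedAddCommGroup E] [NormedSpace ℝ E] [MeasurableSpace E] [BorelSpace E]
    [CompleteSpace E] [SecondCountableTopology E] (μ : Measure E) [IsGaussian μ] :
    Integrable (fun x => ‖x‖ ^ 2) μ := by
  have := (IsGaussian.memLp_id μ 2 (by simp)).integrable_norm_pow (by norm_num)
  simpa using this

lemma law_int (v : NNReal) {x : EN n} (hx : ‖x‖ = 1) {F : EN n × ℝ → ℝ} (hF : Continuous F) :
    ∫ ω, F (AM ω.1 x, ω.1.1 - ω.2) ∂((gam n).prod (gaussianReal 0 v)) =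
      ∫ ω, F (ω.1, inner ℝ x (ω.1 + Real.sqrt v • ω.2)) ∂(gam2 n) := by
  have h1 := integral_map (μ := (gam n).prod (gaussianReal 0 v)) (φ := lawL x)
    (lawL x).continuous.aemeasurable (f := F) hF.aestronglyMeasurable
  have h2 := integral_map (μ := gam2 n) (φ := lawR (Real.sqrt v) x)
    (lawR _ x).continuous.aemeasurable (f := F) hF.aestronglyMeasurable
  rw [law_eq v hx, h2] at h1
  exact h1.symm

lemma hom_ext {f g : EN n → ℝ} (hf : ∀ c : ℝ, 0 ≤ c → ∀ x, f (c • x) = c * f x)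
    (hg : ∀ c : ℝ, 0 ≤ c → ∀ x, g (c • x) = c * g x) (h : ∀ x, ‖x‖ = 1 → f x = g x) : f = g := by
  ext x
  by_cases hx : x = 0
  · have a := hf 0 le_rfl 0
    have b := hg 0 le_rfl 0
    simp at a b
    rw [hx, a, b]
  · have hn : ‖x‖ ≠ 0 := norm_ne_zero_iff.2 hx
    have : x = ‖x‖ • (‖x‖⁻¹ • x) := by rw [smul_inv_smul₀ hn]
    rw [this, hf _ (norm_nonneg x), hg _ (norm_nonneg x), h]
    rw [norm_smul, norm_inv, norm_norm, inv_mul_cancel₀ hn]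

section GZ
variable {φ : Set (EN n) → ℝ} {h : EN n → ℝ}

lemma SL.abs_le {C : ℝ} (hh : SL h) (hC : ∀ x y, |h x - h y| ≤ C * ‖x - y‖) (x : EN n) :
    |h x| ≤ C * ‖x‖ := by
  have := hC x 0
  simpa [hh.zero] using this

lemma SL.cont (hh : SL h) : Continuous h := by
  obtain ⟨C, hC0, hC⟩ := hh.lip
  exact (LipschitzWith.of_dist_le_mul (K := ⟨C, hC0⟩) fun x y => by
    rw [Real.dist_eq, dist_eq_norm]; exact hC x y).continuous

lemma SL.nonneg (hh : SL h) (he : ∀ x, h (-x) = h x) (x : EN n) : 0 ≤ h x := by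
  have := hh.add x (-x)
  rw [add_neg_cancel, hh.zero, he] at this
  linarith

lemma intA (hh : SL h) (v : NNReal) (x : EN n) :
    Integrable (fun ω : (ℝ × MN n) × ℝ => h (AM ω.1 x) * |ω.1.1 - ω.2|)
      ((gam n).prod (gaussianReal 0 v)) := by
  obtain ⟨C, hC0, hC⟩ := hh.lip
  refine ((gauss_sq ((gam n).prod (gaussianReal 0 v))).const_mul (C * ‖AML x‖ * 2)).mono ?_
    (Eventually.of_forall fun ω => ?_)
  · exact ((hh.cont.comp ((AM_cont x).comp continuous_fst)).mul (by fun_prop)).aestronglyMeasurable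
  · rw [norm_mul, Real.norm_eq_abs, Real.norm_eq_abs, abs_abs]
    have a1 : ‖ω.1‖ ≤ ‖ω‖ := norm_fst_le ω
    have a2 : ‖ω.1.1‖ ≤ ‖ω‖ := (norm_fst_le ω.1).trans a1
    have a3 : ‖ω.2‖ ≤ ‖ω‖ := norm_snd_le ω
    have b1 : |h (AM ω.1 x)| ≤ C * (‖AML x‖ * ‖ω‖) :=
      (hh.abs_le hC _).trans (mul_le_mul_of_nonneg_left (((AML x).le_opNorm ω.1).trans
        (mul_le_mul_of_nonneg_left a1 (norm_nonneg _))) hC0)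
    have b2 : |ω.1.1 - ω.2| ≤ 2 * ‖ω‖ := by
      have := norm_sub_le ω.1.1 ω.2
      rw [Real.norm_eq_abs] at this
      linarith
    refine (mul_le_mul b1 b2 (abs_nonneg _) (by positivity)).trans ?_
    refine le_trans (le_of_eq ?_) (le_abs_self _)
    ring

lemma intB (hh : SL h) (x : EN n) : Integrable (fun ω : ℝ × MN n => h (AM ω x)) (gam n) := by
  obtain ⟨C, hC0, hC⟩ := hh.lip
  have : Integrable (fun ω : ℝ × MN n => AM ω x) (gam n) :=
    (AML x).integrable_comp (IsGaussian.integrable_id (μ := gam n))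
  refine (this.norm.const_mul C).mono (hh.cont.comp (AM_cont x)).aestronglyMeasurable
    (Eventually.of_forall fun ω => ?_)
  exact (hh.abs_le hC _).trans (le_abs_self _)

lemma gzA (hφ : SV φ) (hz : ∀ w : EN n, ZS φ (fun x => |inner ℝ x w|)) (hh : SL h)
    (he : ∀ x, h (-x) = h x) (v : NNReal) :
    ZS φ (fun x => ∫ ω, h (AM ω.1 x) * |ω.1.1 - ω.2| ∂((gam n).prod (gaussianReal 0 v))) := by
  obtain ⟨C, hC0, hC⟩ := hh.lip
  set W : EN n × EN n → EN n := fun ω => h ω.1 • (ω.1 + Real.sqrt v • ω.2) with hW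
  have hWi : Integrable W (gam2 n) := by
    refine ((gauss_sq (gam2 n)).const_mul (C * (1 + Real.sqrt v))).mono ?_
      (Eventually.of_forall fun ω => ?_)
    · exact ((hh.cont.comp continuous_fst).smul (by fun_prop)).aestronglyMeasurable
    · have a1 : ‖ω.1‖ ≤ ‖ω‖ := norm_fst_le ω
      have a3 : ‖ω.2‖ ≤ ‖ω‖ := norm_snd_le ω
      rw [hW, norm_smul]
      have b1 : ‖h ω.1‖ ≤ C * ‖ω‖ := (hh.abs_le hC _).trans (mul_le_mul_of_nonneg_left a1 hC0)
      have b2 : ‖ω.1 + Real.sqrt v • ω.2‖ ≤ (1 + Real.sqrt v) * ‖ω‖ := by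
        refine (norm_add_le _ _).trans ?_
        rw [norm_smul, Real.norm_of_nonneg (Real.sqrt_nonneg _), add_mul, one_mul]
        gcongr
      refine (mul_le_mul b1 b2 (norm_nonneg _) (by positivity)).trans ?_
      refine le_trans (le_of_eq ?_) (le_abs_self _)
      ring
  have key := ZS.integral hφ hz hWi
  have : (fun x => ∫ ω, h (AM ω.1 x) * |ω.1.1 - ω.2| ∂((gam n).prod (gaussianReal 0 v))) =
      fun x => ∫ ω, |inner ℝ x (W ω)| ∂(gam2 n) := by
    apply hom_ext
    · intro c hc x
      rw [← integral_const_mul]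
      congr 1; ext ω
      rw [AM_smul, hh.smul c hc, mul_assoc]
    · exact key.sl.smul
    · intro x hx
      have := law_int v hx (F := fun p => h p.1 * |p.2|)
        ((hh.cont.comp continuous_fst).mul (by fun_prop))
      simp only at this
      rw [this]
      congr 1; ext ω
      rw [hW]
      simp only
      rw [real_inner_smul_right, abs_mul, abs_of_nonneg (hh.nonneg he _)]
  rw [this]; exact key

lemma gzB (hh : SL h) : ∃ c : ℝ, ∀ x, ∫ ω, h (AM ω x) ∂(gam n) = c * ‖x‖ := by
  refine ⟨∫ ω, h ω.1 ∂(gam2 n), fun x => ?_⟩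
  have : (fun x => ∫ ω, h (AM ω x) ∂(gam n)) = fun x => (∫ ω, h ω.1 ∂(gam2 n)) * ‖x‖ := by
    apply hom_ext
    · intro c hc x
      rw [← integral_const_mul]
      congr 1; ext ω
      rw [AM_smul, hh.smul c hc]
    · intro c hc x
      rw [norm_smul, Real.norm_of_nonneg hc]; ring
    · intro x hx
      have := law_int 1 hx (F := fun p => h p.1) (hh.cont.comp continuous_fst)
      simp only at this
      rw [integral_fun_fst (μ := gam n) (ν := gaussianReal 0 1) (fun ω => h (AM ω x))] at this
      simp at this
      rw [hx, mul_one, this]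
  exact congrFun this x

lemma gzC (hφ : SV φ) (hz : ∀ w : EN n, ZS φ (fun x => |inner ℝ x w|)) :
    ZS φ (fun x => ‖x‖) := by
  set W : EN n × EN n → EN n := fun ω => (ω.1 + (1:ℝ) • ω.2) with hW
  have hWi : Integrable W (gam2 n) := by
    have := (ContinuousLinearMap.fst ℝ (EN n) (EN n) + (1:ℝ) • ContinuousLinearMap.snd ℝ _ _).integrable_comp
      (IsGaussian.integrable_id (μ := gam2 n))
    exact this
  have key := ZS.integral hφ hz hWi
  set c := ∫ ω : (ℝ × MN n) × ℝ, |ω.1.1 - ω.2| ∂((gam n).prod (gaussianReal 0 1)) with hc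
  have hci : Integrable (fun ω : (ℝ × MN n) × ℝ => |ω.1.1 - ω.2|) ((gam n).prod (gaussianReal 0 1)) := by
    have := (((ContinuousLinearMap.fst ℝ ℝ (MN n)).comp (ContinuousLinearMap.fst ℝ _ ℝ) -
      ContinuousLinearMap.snd ℝ _ ℝ)).integrable_comp
      (IsGaussian.integrable_id (μ := (gam n).prod (gaussianReal 0 1)))
    exact this.abs
  have hc0 : 0 < c := by
    rw [hc, integral_pos_iff_support_of_nonneg (fun ω => abs_nonneg _) hci]
    rw [pos_iff_ne_zero]
    intro h0
    have : ∀ᵐ ω : (ℝ × MN n) × ℝ ∂((gam n).prod (gaussianReal 0 1)), ω.1.1 - ω.2 = 0 := by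
      rw [ae_iff]
      convert h0 using 2
      ext ω; simp
    have h1 := Measure.ae_ae_of_ae_prod this
    obtain ⟨ω, hω⟩ := h1.exists
    have h2 : ∀ᵐ b ∂(gaussianReal 0 1), b ≠ ω.1 := by
      have := nullSingletonClass_gaussianReal (μ := 0) (v := 1) one_ne_zero
      rw [ae_iff]; simp
    obtain ⟨b, hb1, hb2⟩ := (hω.and h2).exists
    exact hb2 (by linarith)
  have e : (fun x => ∫ ω, |inner ℝ x (W ω)| ∂(gam2 n)) = fun x => c * ‖x‖ := by
    apply hom_ext key.sl.smul
    · intro c hc x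
      rw [norm_smul, Real.norm_of_nonneg hc]; ring
    · intro x hx
      have := law_int 1 hx (F := fun p => |p.2|) (by fun_prop)
      simp only [NNReal.coe_one, Real.sqrt_one] at this
      rw [hx, mul_one, hc, this]
  rw [e] at key
  have := key.smul (inv_nonneg.2 hc0.le)
  simpa [← mul_assoc, inv_mul_cancel₀ hc0.ne'] using this

lemma intH (hh : SL h) (m : ℕ) (x : EN n) :
    Integrable (fun ω : ℝ × MN n => h (AM ω x) * wm m ω.1) (gam n) := by
  obtain ⟨C, hC0, hC⟩ := hh.lip
  have hq : 0 ≤ ∫ b, qm m b := integral_nonneg (qm_nonneg m)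
  refine ((gauss_sq (gam n)).const_mul (C * ‖AML x‖ * (∫ b, qm m b))).mono ?_
    (Eventually.of_forall fun ω => ?_)
  · exact ((hh.cont.comp (AM_cont x)).mul ((wm_cont m).comp continuous_fst)).aestronglyMeasurable
  · rw [norm_mul, Real.norm_eq_abs, Real.norm_eq_abs, abs_of_nonneg (wm_nonneg m _)]
    have b1 : |h (AM ω x)| ≤ C * (‖AML x‖ * ‖ω‖) :=
      (hh.abs_le hC _).trans (mul_le_mul_of_nonneg_left ((AML x).le_opNorm ω) hC0)
    have b2 : wm m ω.1 ≤ (∫ b, qm m b) * ‖ω‖ :=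
      (wm_le m ω.1).trans (mul_le_mul_of_nonneg_left (norm_fst_le ω) hq)
    refine (mul_le_mul b1 b2 (wm_nonneg m _) (by positivity)).trans ?_
    refine le_trans (le_of_eq ?_) (le_abs_self _)
    ring

lemma gzH_sl (hh : SL h) (m : ℕ) : SL (fun x => ∫ ω, h (AM ω x) * wm m ω.1 ∂(gam n)) := by
  obtain ⟨C, hC0, hC⟩ := hh.lip
  obtain ⟨κ, hκ0, hκ⟩ := Sk_bound n
  have ad : ∀ x y, ∫ ω, h (AM ω (x + y)) * wm m ω.1 ∂(gam n) ≤ ∫ ω, h (AM ω x) * wm m ω.1 ∂(gam n)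
      + ∫ ω, h (AM ω y) * wm m ω.1 ∂(gam n) := by
    intro x y
    rw [← integral_add (intH hh m x) (intH hh m y)]
    refine integral_mono (intH hh m _) ((intH hh m x).add (intH hh m y)) fun ω => ?_
    simp only
    rw [← add_mul, AM_add]
    exact mul_le_mul_of_nonneg_right (hh.add _ _) (wm_nonneg _ _)
  have sm : ∀ c : ℝ, 0 ≤ c → ∀ x, ∫ ω, h (AM ω (c • x)) * wm m ω.1 ∂(gam n) =
      c * ∫ ω, h (AM ω x) * wm m ω.1 ∂(gam n) := by
    intro c hc x
    rw [← integral_const_mul]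
    congr 1; ext ω
    rw [AM_smul, hh.smul c hc, mul_assoc]
  refine ⟨ad, sm, ?_⟩
  have hq : 0 ≤ ∫ b, qm m b := integral_nonneg (qm_nonneg m)
  refine ⟨∫ ω : ℝ × MN n, C * (1 + κ) * (∫ b, qm m b) * ‖ω‖ ^ 2 ∂(gam n), fun x => ?_⟩
  rw [← integral_mul_const]
  refine integral_mono (intH hh m x) (((gauss_sq (gam n)).const_mul _).mul_const _) fun ω => ?_
  simp only
  have b1 : h (AM ω x) ≤ C * ((1 + κ) * ‖ω‖ * ‖x‖) := by
    refine (le_abs_self _).trans ((hh.abs_le hC _).trans (mul_le_mul_of_nonneg_left ?_ hC0))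
    refine (norm_add_le _ _).trans ?_
    rw [norm_smul]
    have a1 : ‖ω.1‖ ≤ ‖ω‖ := norm_fst_le ω
    have a3 : ‖ω.2‖ ≤ ‖ω‖ := norm_snd_le ω
    have := hκ ω.2 x
    calc ‖ω.1‖ * ‖x‖ + ‖Sk ω.2 x‖ ≤ ‖ω‖ * ‖x‖ + κ * ‖ω‖ * ‖x‖ := by
          refine add_le_add (by gcongr) (this.trans (by gcongr))
      _ = _ := by ring
  have b2 : wm m ω.1 ≤ (∫ b, qm m b) * ‖ω‖ :=
      (wm_le m ω.1).trans (mul_le_mul_of_nonneg_left (norm_fst_le ω) hq)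
  refine (mul_le_mul b1 b2 (wm_nonneg m _) (by positivity)).trans (le_of_eq ?_)
  ring

lemma gzH_dz (hφ : SV φ) (hz : ∀ w : EN n, ZS φ (fun x => |inner ℝ x w|)) (hh : SL h)
    (he : ∀ x, h (-x) = h x) (m : ℕ) : DZ φ (fun x => ∫ ω, h (AM ω x) * wm m ω.1 ∂(gam n)) := by
  obtain ⟨c, hc⟩ := gzB hh
  have e : (fun x => ∫ ω, h (AM ω x) * wm m ω.1 ∂(gam n)) = fun x =>
      ∑ j ∈ Finset.range (m + 1), cj m j *
        (∫ ω, h (AM ω.1 x) * |ω.1.1 - ω.2| ∂((gam n).prod (gaussianReal 0 (vj j))) +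
          (-(c * ∫ b, |b| ∂(gaussianReal 0 (vj j)))) * ‖x‖) := by
    ext x
    have i2 : ∀ j, Integrable (fun ω : (ℝ × MN n) × ℝ => h (AM ω.1 x) * |ω.2|)
        ((gam n).prod (gaussianReal 0 (vj j))) := fun j =>
      (intB hh x).mul_prod (gauss_id (vj j)).abs
    have i1 : ∀ j, Integrable (fun ω : (ℝ × MN n) × ℝ => h (AM ω.1 x) * (|ω.1.1 - ω.2| - |ω.2|))
        ((gam n).prod (gaussianReal 0 (vj j))) := fun j => by
      simp only [mul_sub]
      exact (intA hh (vj j) x).sub (i2 j)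
    have e1 : ∀ ω : ℝ × MN n, h (AM ω x) * wm m ω.1 = ∑ j ∈ Finset.range (m + 1), cj m j *
        ∫ b, h (AM ω x) * (|ω.1 - b| - |b|) ∂(gaussianReal 0 (vj j)) := by
      intro ω
      rw [wm_gauss, Finset.mul_sum]
      refine Finset.sum_congr rfl fun j _ => ?_
      rw [integral_const_mul]; ring
    simp only [e1]
    rw [integral_finsetSum _ fun j _ => ((i1 j).integral_prod_left).const_mul _]
    refine Finset.sum_congr rfl fun j _ => ?_
    rw [integral_const_mul]
    congr 1
    rw [← integral_prod _ (i1 j)]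
    simp only [mul_sub]
    rw [integral_sub (intA hh (vj j) x) (i2 j)]
    rw [integral_prod_mul (μ := gam n) (ν := gaussianReal 0 (vj j)) (fun ω => h (AM ω x)) (fun b => |b|), hc x]
    ring
  rw [e]
  exact DZ.sum _ fun j _ => ((gzA hφ hz hh he (vj j)).dz.add ((gzC hφ hz).dz.smul _)).smul _

lemma gzH_close (hh : SL h) (he : ∀ x, h (-x) = h x) : ∃ A : ℝ, 0 ≤ A ∧ ∀ m x,
    |∫ ω, h (AM ω x) * wm m ω.1 ∂(gam n) - (∫ t, |t| * wm m t ∂(gaussianReal 0 1)) * h x| ≤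
      A * (∫ t, wm m t ∂(gaussianReal 0 1)) * ‖x‖ := by
  obtain ⟨C, hC0, hC⟩ := hh.lip
  obtain ⟨κ, hκ0, hκ⟩ := Sk_bound n
  refine ⟨C * κ * ∫ B, ‖B‖ ∂(stdGaussian (MN n)), by positivity, fun m x => ?_⟩
  have i1 : Integrable (fun ω : ℝ × MN n => (|ω.1| * wm m ω.1) * h x) (gam n) :=
    ((wm_gint' m).comp_fst _).mul_const _
  have i2 : Integrable (fun ω : ℝ × MN n => wm m ω.1 * ‖ω.2‖) (gam n) :=
    (wm_gint m).mul_prod (IsGaussian.integrable_id (μ := stdGaussian (MN n))).norm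
  have e1 : (∫ t, |t| * wm m t ∂(gaussianReal 0 1)) * h x =
      ∫ ω, (|ω.1| * wm m ω.1) * h x ∂(gam n) := by
    rw [integral_mul_const, integral_fun_fst (μ := gaussianReal 0 1) (ν := stdGaussian (MN n))
      (fun t => |t| * wm m t)]
    simp
  have e2 : C * κ * (∫ B, ‖B‖ ∂(stdGaussian (MN n))) * (∫ t, wm m t ∂(gaussianReal 0 1)) * ‖x‖ =
      ∫ ω : ℝ × MN n, C * κ * ‖x‖ * (wm m ω.1 * ‖ω.2‖) ∂(gam n) := by
    rw [integral_const_mul, integral_prod_mul (μ := gaussianReal 0 1) (ν := stdGaussian (MN n))]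
    ring
  rw [e1, e2, ← integral_sub (intH hh m x) i1]
  refine (abs_integral_le_integral_abs).trans (integral_mono ((intH hh m x).sub i1).abs
    (i2.const_mul _) fun ω => ?_)
  simp only
  have ht : h (ω.1 • x) = |ω.1| * h x := by
    rcases le_total 0 ω.1 with ht | ht
    · rw [hh.smul _ ht, abs_of_nonneg ht]
    · rw [← he, ← neg_smul, hh.smul _ (neg_nonneg.2 ht), abs_of_nonpos ht]
  have : h (AM ω x) * wm m ω.1 - |ω.1| * wm m ω.1 * h x = (h (AM ω x) - h (ω.1 • x)) * wm m ω.1 := by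
    rw [ht]; ring
  rw [this, abs_mul, abs_of_nonneg (wm_nonneg m _)]
  have b := hC (AM ω x) (ω.1 • x)
  rw [AM, add_sub_cancel_left] at b
  have b' := b.trans (mul_le_mul_of_nonneg_left (hκ ω.2 x) hC0)
  refine (mul_le_mul_of_nonneg_right b' (wm_nonneg m _)).trans (le_of_eq ?_)
  ring

lemma gz (hφ : SV φ) (h0 : φ {0} = 0) (hz : ∀ w : EN n, ZS φ (fun x => |inner ℝ x w|))
    (hh : SL h) (he : ∀ x, h (-x) = h x) : φ (bod h) = 0 := by
  obtain ⟨A, hA0, hA⟩ := gzH_close hh he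
  have ch : ∀ k : ℕ, ∃ m, 0 < ∫ t, |t| * wm m t ∂(gaussianReal 0 1) ∧
    ∫ t, wm m t ∂(gaussianReal 0 1) ≤ (1 / ((k:ℝ) + 1)) * ∫ t, |t| * wm m t ∂(gaussianReal 0 1) :=
    fun k => wm_conc (by positivity)
  choose m hD hm using ch
  set D : ℕ → ℝ := fun k => ∫ t, |t| * wm (m k) t ∂(gaussianReal 0 1) with hDdef
  set F : ℕ → EN n → ℝ := fun k x => (D k)⁻¹ * ∫ ω, h (AM ω x) * wm (m k) ω.1 ∂(gam n) with hF
  have Fs : ∀ k, SL (F k) := fun k => (gzH_sl hh (m k)).smul' (inv_nonneg.2 (hD k).le)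
  have Fz : ∀ k, φ (bod (F k)) = 0 := fun k =>
    DZ.vanish h0 ((gzH_dz hφ hz hh he (m k)).smul _) (Fs k)
  have hc : HC (fun k => bod (F k)) (bod h) := by
    apply bod_hc Fs hh
    intro η hη
    have lim : Tendsto (fun k : ℕ => A * (1 / ((k:ℝ) + 1))) atTop (nhds 0) := by
      simpa using tendsto_one_div_add_atTop_nhds_zero_nat.const_mul A
    filter_upwards [lim.eventually (gt_mem_nhds hη)] with k hk x
    have hDk : 0 < D k := hD k
    have : F k x - h x = (D k)⁻¹ * (∫ ω, h (AM ω x) * wm (m k) ω.1 ∂(gam n) - D k * h x) := by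
      rw [hF, mul_sub, inv_mul_cancel_left₀ hDk.ne']
    rw [this, abs_mul, abs_of_pos (inv_pos.2 hDk), inv_mul_le_iff₀ hDk]
    refine (hA (m k) x).trans ?_
    have := mul_le_mul_of_nonneg_left (hm k) hA0
    have h3 := mul_le_mul_of_nonneg_right this (norm_nonneg x)
    refine h3.trans ?_
    have h4 : A * (1 / ((k:ℝ) + 1)) * (D k * ‖x‖) ≤ η * (D k * ‖x‖) :=
      mul_le_mul_of_nonneg_right hk.le (by positivity)
    refine le_trans (le_of_eq ?_) (h4.trans (le_of_eq ?_))
    · simp only [hDdef]; ring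
    · ring
  have := hφ.cont _ _ (fun k => bod_body (Fs k)) (bod_body hh) hc
  simp only [Fz] at this
  exact tendsto_nhds_unique this tendsto_const_nhds

end GZ

end PartG5

section PartA5

variable {n : ℕ}

lemma sup_even {K : Set (EN n)} (hK : IsConvexBody K) (hs : -K = K) (x : EN n) :
    sup K (-x) = sup K x := by
  have key : ∀ x, sup K (-x) ≤ sup K x := by
    intro x
    obtain ⟨y, hy, e⟩ := (sup_attain hK (-x)).1
    rw [← e, inner_neg_left, ← inner_neg_right]
    refine (sup_attain hK x).2 _ ?_
    rw [← hs]; exact Set.neg_mem_neg.2 hy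
  refine le_antisymm (key x) ?_
  have := key (-x)
  rwa [neg_neg] at this

lemma klain_all : ∀ n, KlainHyp n
  | 0 => by
    intro φ h hz K hK
    have : K = parallelepiped (fun i : Fin 0 => (0 : EN 0)) := by
      have h1 : ∀ s : Set (EN 0), s.Nonempty → s = univ := fun s hs => by
        ext x
        obtain ⟨y, hy⟩ := hs
        simp [Subsingleton.elim x y, hy]
      rw [h1 K hK.ne, h1 (parallelepiped _) ⟨0, mem_parallelepiped_iff _ _ |>.2 ⟨0, by simp, by simp⟩⟩]
    rw [this]; exact hz _
  | n + 1 => by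
    intro φ h hz K hK
    have IH := klain_all n
    refine zero_of_simplex h.toSV (fun p hp => step_S h hz ?_ p hp) hK
    intro K hK hs
    have h0 : φ {0} = 0 := by
      apply h.zero_of_interior isCompact_singleton (convex_singleton _)
      exact interior_singleton 0
    have := gz h.toSV h0 (fun w => ZS.segment IH h hz w) (sup_sl hK) (sup_even hK hs)
    rwa [bod_sup hK] at this

/-- box -/
def box (a : Fin n → ℝ) : Set (EN n) := {x | ∀ i, 0 ≤ x i ∧ x i ≤ a i}

lemma coord_ne (i : Fin n) : (EuclideanSpace.proj i : EN n →L[ℝ] ℝ).toLinearMap ≠ 0 := by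
  intro h
  have := LinearMap.congr_fun h (EuclideanSpace.single i 1)
  simp at this

lemma box_cpt (a b : Fin n → ℝ) : IsCompact {x : EN n | ∀ i, a i ≤ x i ∧ x i ≤ b i} := by
  have : {x : EN n | ∀ i, a i ≤ x i ∧ x i ≤ b i} =
      (EuclideanSpace.equiv (Fin n) ℝ).toHomeomorph ⁻¹' (Icc a b) := by
    ext x
    simp only [mem_ofPred_eq, mem_preimage, mem_Icc, Pi.le_def]
    exact forall_and
  rw [this, Homeomorph.isCompact_preimage]
  exact isCompact_Icc

lemma box_cvx (a b : Fin n → ℝ) : Convex ℝ {x : EN n | ∀ i, a i ≤ x i ∧ x i ≤ b i} := by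
  have : {x : EN n | ∀ i, a i ≤ x i ∧ x i ≤ b i} =
      (EuclideanSpace.equiv (Fin n) ℝ).toLinearEquiv.toLinearMap ⁻¹' (Icc a b) := by
    ext x
    simp only [mem_ofPred_eq, mem_preimage, mem_Icc, Pi.le_def]
    exact forall_and
  rw [this]
  exact (convex_Icc a b).linear_preimage _

lemma box_body {a : Fin n → ℝ} (ha : ∀ i, 0 ≤ a i) : IsConvexBody (box a) :=
  ⟨⟨0, fun i => by simp [ha i]⟩, box_cpt 0 a, box_cvx 0 a⟩

lemma additive_zero {g : ℝ → ℝ} (hadd : ∀ s t, 0 ≤ s → 0 ≤ t → g (s + t) = g s + g t)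
    {B : ℝ} (hb : ∀ s, 0 ≤ s → s ≤ 1 → |g s| ≤ B) (h1 : g 1 = 0) {s : ℝ} (hs : 0 ≤ s) : g s = 0 := by
  have g0 : g 0 = 0 := by
    have := hadd 0 0 le_rfl le_rfl
    simp at this; exact this
  have hk : ∀ (k : ℕ) s, 0 ≤ s → g (k * s) = k * g s := by
    intro k s hs
    induction k with
    | zero => simp [g0]
    | succ k ih =>
      push_cast
      rw [add_mul, one_mul, hadd _ _ (by positivity) hs, ih]; ring
  have hB : ∀ k : ℕ, k * |g s| ≤ B := by
    intro k
    have e : (k : ℝ) * s = (⌊(k:ℝ) * s⌋₊ : ℝ) * 1 + ((k:ℝ) * s - ⌊(k:ℝ) * s⌋₊) := by ring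
    have hp : (0:ℝ) ≤ k * s := by positivity
    have l1 := Nat.floor_le hp
    have l2 := (Nat.lt_floor_add_one ((k:ℝ) * s)).le
    have := hk k s hs
    rw [e, hadd _ _ (by positivity) (by linarith), hk _ _ zero_le_one, h1, mul_zero, zero_add] at this
    have h3 := hb _ (by linarith : 0 ≤ (k:ℝ) * s - ⌊(k:ℝ) * s⌋₊) (by linarith)
    rw [this, abs_mul, Nat.abs_cast] at h3
    exact h3
  by_contra hne
  have hp : 0 < |g s| := abs_pos.2 hne
  obtain ⟨k, hk⟩ := exists_nat_gt (B / |g s|)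
  rw [div_lt_iff₀ hp] at hk
  linarith [hB k]

lemma box_zero {φ : Set (EN n) → ℝ} (h : TE φ) (h0 : φ (box 1) = 0) {a : Fin n → ℝ}
    (ha : ∀ i, 0 ≤ a i) : φ (box a) = 0 := by
  classical
  have key : ∀ S : Finset (Fin n), φ (box (fun j => if j ∈ S then a j else 1)) = 0 := by
    intro S
    induction S using Finset.induction_on with
    | empty =>
      have : (fun j => if j ∈ (∅ : Finset (Fin n)) then a j else 1) = (1 : Fin n → ℝ) := by ext; simp
      rw [this]; exact h0
    | insert i S hi ih =>
      set b : Fin n → ℝ := fun j => if j ∈ S then a j else 1 with hb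
      have b0 : ∀ j, 0 ≤ b j := fun j => by rw [hb]; simp only; split_ifs <;> simp [ha]
      have hbi : b i = 1 := by simp [hb, hi]
      have e1 : (fun j => if j ∈ insert i S then a j else 1) = Function.update b i (a i) := by
        ext j
        by_cases hj : j = i
        · subst hj; simp
        · simp [hj, hb]
      rw [e1]
      have u0 : ∀ s, 0 ≤ s → ∀ j, 0 ≤ Function.update b i s j := fun s hs j => by
        by_cases hj : j = i
        · subst hj; simpa using hs
        · simpa [hj] using b0 j
      obtain ⟨B, hB0, hB⟩ := h.bounded (C := box b) (box_body b0).cpt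
      apply additive_zero (g := fun s => φ (box (Function.update b i s))) (B := B) _ _ _ (ha i)
      · intro s t hs ht
        have hst := box_body (u0 (s + t) (by positivity))
        have := h.cut hst.cpt hst.cvx (coord_ne i) s
        rw [this]
        congr 1
        · congr 1
          ext x
          simp only [box, mem_inter_iff, mem_ofPred_eq]
          constructor
          · rintro ⟨h1, h2⟩ j
            by_cases hj : j = i
            · subst hj; simpa using ⟨(h1 j).1, h2⟩
            · simpa [hj] using h1 j
          · intro h1
            have := h1 i
            simp at this
            refine ⟨fun j => ?_, by simpa using this.2⟩
            by_cases hj : j = i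
            · subst hj; simp; exact ⟨this.1, by linarith⟩
            · simpa [hj] using h1 j
        · rw [← h.tr _ (box_body (u0 t ht)) (EuclideanSpace.single i s)]
          congr 1
          ext x
          simp only [box, mem_inter_iff, mem_ofPred_eq, mem_vadd_iff]
          constructor
          · rintro ⟨h1, h2⟩ j
            by_cases hj : j = i
            · subst hj
              have := h1 j
              simp at this h2 ⊢
              exact ⟨h2, by linarith⟩
            · simpa [hj] using h1 j
          · intro h1
            have := h1 i
            simp at this
            refine ⟨fun j => ?_, by simpa using this.1⟩
            by_cases hj : j = i
            · subst hj; simp; exact ⟨by linarith, by linarith⟩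
            · simpa [hj] using h1 j
      · intro s hs hs1
        have := box_body (u0 s hs)
        refine hB _ (fun x hx j => ?_) this.cpt this.cvx
        have := hx j
        by_cases hj : j = i
        · subst hj; simp at this; exact ⟨this.1, by rw [hbi]; linarith⟩
        · simpa [hj] using this
      · have : Function.update b i 1 = b := by rw [← hbi]; exact Function.update_eq_self i b
        simp only [this]; exact ih
  simpa using key Finset.univ

lemma TE.comp {φ : Set (EN n) → ℝ} (h : TE φ) (A : EN n ≃L[ℝ] EN n) : TE (fun X => φ (A '' X)) := by
  have hb : ∀ {K : Set (EN n)}, IsConvexBody K → IsConvexBody (A '' K) := fun hK =>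
    ⟨hK.ne.image _, hK.cpt.image A.continuous, hK.cvx.linear_image A.toLinearEquiv.toLinearMap⟩
  refine ⟨⟨?_, ?_, ?_, ?_⟩, ?_, ?_⟩
  · simp [h.empty]
  · intro K L hK hL hKL
    simp only [image_union, image_inter A.injective]
    refine h.val _ _ (hb hK) (hb hL) ?_
    rw [← image_union]
    exact hKL.linear_image A.toLinearEquiv.toLinearMap
  · intro K hK hs
    refine h.simple _ (hb hK) fun h' => hs ?_
    have h2 : (interior (A '' K)).Nonempty := (hb hK).cvx.interior_nonempty_iff_affineSpan_eq_top.2 h'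
    apply hK.cvx.interior_nonempty_iff_affineSpan_eq_top.1
    rw [← A.coe_toHomeomorph, ← Homeomorph.image_interior] at h2
    exact h2.of_image
  · intro K L hK hL hKL
    refine h.cont _ _ (fun m => hb (hK m)) (hb hL) ?_
    apply hc_of_approx
    intro r hr
    set c := ‖(A : EN n →L[ℝ] EN n)‖ + 1 with hc
    have c0 : 0 < c := by positivity
    have hA : ∀ x y, dist x y < r / c → dist (A x) (A y) ≤ r := by
      intro x y hxy
      rw [dist_eq_norm, ← map_sub]
      refine ((A : EN n →L[ℝ] EN n).le_opNorm _).trans ?_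
      rw [← dist_eq_norm]
      rw [lt_div_iff₀ c0] at hxy
      nlinarith [dist_nonneg (x := x) (y := y)]
    filter_upwards [HC.approx hKL hK hL (div_pos hr c0)] with m hm
    constructor
    · rintro _ ⟨x, hx, rfl⟩
      obtain ⟨y, hy, hxy⟩ := hm.1 x hx
      exact ⟨A y, mem_image_of_mem _ hy, hA _ _ hxy⟩
    · rintro _ ⟨y, hy, rfl⟩
      obtain ⟨x, hx, hxy⟩ := hm.2 y hy
      exact ⟨A x, mem_image_of_mem _ hx, hA _ _ (by rwa [dist_comm])⟩
  · intro K hK t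
    have : A '' (t +ᵥ K) = A t +ᵥ A '' K := by
      ext x
      constructor
      · rintro ⟨_, ⟨y, hy, rfl⟩, rfl⟩
        exact ⟨A y, mem_image_of_mem _ hy, by simp⟩
      · rintro ⟨_, ⟨y, hy, rfl⟩, rfl⟩
        exact ⟨t + y, ⟨y, hy, rfl⟩, by simp⟩
    simp only [this]
    exact h.tr _ (hb hK) _
  · intro K hK
    have : A '' (-K) = -(A '' K) := by
      ext x
      simp only [mem_image, Set.mem_neg]
      constructor
      · rintro ⟨y, hy, rfl⟩
        exact ⟨-y, hy, by simp⟩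
      · rintro ⟨y, hy, e⟩
        exact ⟨-y, by simpa using hy, by simp [e]⟩
    simp only [this]
    exact h.even _ (hb hK)

/-- matrices preserving vanishing on the cube -/
def PM (M : Matrix (Fin n) (Fin n) ℝ) : Prop :=
  ∀ φ : Set (EN n) → ℝ, TE φ → φ (box 1) = 0 → φ (Matrix.toEuclideanLin M '' box 1) = 0

lemma pm_mul {A B : Matrix (Fin n) (Fin n) ℝ} (hA : A.det ≠ 0) (h1 : PM A) (h2 : PM B) : PM (A * B) := by
  intro φ h h0
  let e : EN n ≃L[ℝ] EN n := (LinearEquiv.ofIsUnitDet (f := Matrix.toEuclideanLin A)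
    (v := (EuclideanSpace.basisFun (Fin n) ℝ).toBasis) (v' := (EuclideanSpace.basisFun (Fin n) ℝ).toBasis)
    (by
      rw [Matrix.toEuclideanLin_eq_toLin_orthonormal, LinearMap.toMatrix_toLin]
      exact isUnit_iff_ne_zero.2 hA)).toContinuousLinearEquiv
  have he : ∀ X, e '' X = Matrix.toEuclideanLin A '' X := fun X => rfl
  have := h2 _ (h.comp e) (by simp only [he]; exact h1 φ h h0)
  simp only [he, ← image_comp] at this
  convert this using 2
  ext x
  simp [Matrix.toEuclideanLin]

lemma pm_diag (D : Fin n → ℝ) : PM (Matrix.diagonal D) := by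
  intro φ h h0
  have e : Matrix.toEuclideanLin (Matrix.diagonal D) '' box 1 =
      (WithLp.toLp 2 (fun i => min (D i) 0) : EN n) +ᵥ box (fun i => |D i|) := by
    ext x
    rw [mem_vadd_iff]
    simp only [mem_image, box, mem_ofPred_eq, PiLp.sub_apply, Pi.one_apply]
    constructor
    · rintro ⟨y, hy, rfl⟩ i
      have := hy i
      have e0 : (Matrix.toEuclideanLin (Matrix.diagonal D) y) i = D i * y i := by
        simp [Matrix.toEuclideanLin, Matrix.toLin'_apply, Matrix.mulVec_diagonal]
      rw [e0]
      rcases le_total 0 (D i) with hd | hd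
      · rw [min_eq_right hd, abs_of_nonneg hd]; constructor <;> nlinarith
      · rw [min_eq_left hd, abs_of_nonpos hd]; constructor <;> nlinarith
    · intro hx
      refine ⟨WithLp.toLp 2 fun i => x i / D i, fun i => ?_, ?_⟩
      · have := hx i
        simp only
        rcases lt_trichotomy (D i) 0 with hd | hd | hd
        · rw [min_eq_left hd.le, abs_of_neg hd] at this
          exact ⟨div_nonneg_of_nonpos (by linarith) hd.le, by rw [div_le_one_of_neg hd]; linarith⟩
        · simp [hd]
        · rw [min_eq_right hd.le, abs_of_pos hd] at this
          exact ⟨div_nonneg (by linarith) hd.le, by rw [div_le_one hd]; linarith⟩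
      · ext i
        have := hx i
        simp [Matrix.toEuclideanLin, Matrix.toLin'_apply, Matrix.mulVec_diagonal]
        by_cases hd : D i = 0
        · simp [hd] at this ⊢; linarith
        · field_simp
  rw [e, h.tr _ (box_body fun i => abs_nonneg _)]
  exact box_zero h h0 fun i => abs_nonneg _

end PartA5

section PartA6

variable {n : ℕ}

lemma pm_transvection (i j : Fin n) (hij : i ≠ j) (c : ℝ) : PM (Matrix.transvection i j c) := by
  intro φ h h0
  let f : EN n →ₗ[ℝ] ℝ := (EuclideanSpace.proj i : EN n →L[ℝ] ℝ).toLinearMap -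
    c • (EuclideanSpace.proj j : EN n →L[ℝ] ℝ).toLinearMap
  have hf : ∀ x, f x = x i - c * x j := fun x => by simp [f]
  have hf0 : f ≠ 0 := fun h' => by
    have := hf (EuclideanSpace.single i 1)
    rw [h'] at this
    simp [hij.symm] at this
  set L := |c| + 1 with hL
  have hc1 := le_abs_self c
  have hc2 := neg_abs_le c
  let a : Fin n → ℝ := fun k => if k = i then -L else 0
  let b : Fin n → ℝ := fun k => if k = i then L else 1
  let A : Set (EN n) := {x | ∀ k, a k ≤ x k ∧ x k ≤ b k} ∩ {x | 0 ≤ f x}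
  have hAm : ∀ x : EN n, x ∈ A ↔ (∀ k, k ≠ i → 0 ≤ x k ∧ x k ≤ 1) ∧ c * x j ≤ x i ∧ x i ≤ L := by
    intro x
    simp only [A, mem_inter_iff, mem_ofPred_eq, hf]
    constructor
    · rintro ⟨h1, h2⟩
      refine ⟨fun k hk => by simpa [a, b, hk] using h1 k, by linarith, ?_⟩
      have := h1 i; simp [a, b] at this; exact this.2
    · rintro ⟨h1, h2, h3⟩
      have hj := h1 j hij.symm
      refine ⟨fun k => ?_, by linarith⟩
      by_cases hk : k = i
      · subst hk; simp [a, b]; exact ⟨by nlinarith, h3⟩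
      · simpa [a, b, hk] using h1 k hk
  have hfc : Continuous f := f.continuous_of_finiteDimensional
  have hA : IsConvexBody A := by
    refine ⟨⟨0, ?_⟩, (box_cpt a b).inter_right (isClosed_le continuous_const hfc),
      (box_cvx a b).inter (convex_halfSpace_ge f.isLinear 0)⟩
    rw [hAm]
    refine ⟨fun k _ => by simp, by simp, by simp [hL]; positivity⟩
  have c1 := h.cut hA.cpt hA.cvx hf0 1
  have hA1 : IsConvexBody (EuclideanSpace.single i (1:ℝ) +ᵥ A) := hA.vadd _
  have c2 := h.cut hA1.cpt hA1.cvx (coord_ne i) L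
  rw [h.tr _ hA] at c2
  have e1 : A ∩ {x | f x ≤ 1} = Matrix.toEuclideanLin (Matrix.transvection i j c) '' box 1 := by
    have hT : ∀ y : EN n, ∀ k, (Matrix.toEuclideanLin (Matrix.transvection i j c) y) k =
        if k = i then y i + c * y j else y k := by
      intro y k
      by_cases hk : k = i
      · subst hk
        simp [Matrix.toEuclideanLin, Matrix.toLin'_apply, Matrix.transvection, Matrix.add_mulVec,
          Matrix.single_mulVec]
      · simp [Matrix.toEuclideanLin, Matrix.toLin'_apply, Matrix.transvection, Matrix.add_mulVec,
          Matrix.single_mulVec, hk]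
    ext x
    simp only [mem_inter_iff, hAm, hf, mem_ofPred_eq, mem_image, box, Pi.one_apply]
    constructor
    · rintro ⟨⟨h1, h2, h3⟩, h4⟩
      refine ⟨WithLp.toLp 2 fun k => if k = i then x i - c * x j else x k, fun k => ?_, ?_⟩
      · by_cases hk : k = i
        · subst hk; simp only [if_true]; constructor <;> linarith
        · simp only [hk, if_false]; exact h1 k hk
      · ext k
        rw [hT]
        by_cases hk : k = i
        · subst hk; simp [hij.symm]
        · simp [hk]
    · rintro ⟨y, hy, rfl⟩
      simp only [hT, if_true, hij.symm, if_false]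
      have hi := hy i
      have hj := hy j
      refine ⟨⟨fun k hk => by simpa [hk] using hy k, by linarith, by nlinarith⟩, by linarith⟩
  have e2 : A ∩ {x | 1 ≤ f x} = (EuclideanSpace.single i (1:ℝ) +ᵥ A) ∩
      {x | (EuclideanSpace.proj i : EN n →L[ℝ] ℝ).toLinearMap x ≤ L} := by
    ext x
    simp only [mem_inter_iff, mem_vadd_iff, hAm, hf, mem_ofPred_eq]
    simp [hij.symm]
    constructor
    · rintro ⟨⟨h1, h2, h3⟩, h4⟩
      exact ⟨⟨fun k hk => by simpa [hk] using h1 k hk, by linarith, by linarith⟩, h3⟩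
    · rintro ⟨⟨h1, h2, h3⟩, h4⟩
      exact ⟨⟨fun k hk => by simpa [hk] using h1 k hk, by linarith, by linarith⟩, by linarith⟩
  have e3 : (EuclideanSpace.single i (1:ℝ) +ᵥ A) ∩
      {x | L ≤ (EuclideanSpace.proj i : EN n →L[ℝ] ℝ).toLinearMap x} =
      (EuclideanSpace.single i L : EN n) +ᵥ box 1 := by
    ext x
    simp only [mem_inter_iff, mem_vadd_iff, hAm, mem_ofPred_eq, box]
    simp [hij.symm]
    constructor
    · rintro ⟨⟨h1, h2, h3⟩, h4⟩ k
      by_cases hk : k = i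
      · subst hk; simp; exact ⟨h4, by linarith⟩
      · simpa [hk] using h1 k hk
    · intro h1
      have hi := h1 i
      have hj := h1 j
      simp [hij.symm] at hi hj
      exact ⟨⟨fun k hk => by simpa [hk] using h1 k, by nlinarith, by linarith⟩, by linarith⟩
  have e2' : φ ((EuclideanSpace.single i (1:ℝ) +ᵥ A) ∩
      {x | (EuclideanSpace.proj i : EN n →L[ℝ] ℝ).toLinearMap x ≤ L}) = φ (A ∩ {x | 1 ≤ f x}) := by rw [e2]
  have e3' : φ ((EuclideanSpace.single i (1:ℝ) +ᵥ A) ∩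
      {x | L ≤ (EuclideanSpace.proj i : EN n →L[ℝ] ℝ).toLinearMap x}) = 0 := by
    rw [e3, h.tr _ (box_body (a := 1) fun _ => zero_le_one), h0]
  rw [← e1]
  have c2' := c2.trans (congrArg₂ (· + ·) e2' e3')
  linarith

lemma zp_of_cube {φ : Set (EN n) → ℝ} (h : TE φ) (h0 : φ (box 1) = 0) : ZP φ := by
  intro u
  let M : Matrix (Fin n) (Fin n) ℝ := fun k i => u i k
  have e : parallelepiped u = Matrix.toEuclideanLin M '' box 1 := by
    ext x
    rw [mem_parallelepiped_iff]
    have hM : ∀ t : Fin n → ℝ, Matrix.toEuclideanLin M (WithLp.toLp 2 t) = ∑ i, t i • u i := by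
      intro t
      ext k
      have e0 : (Matrix.toEuclideanLin M (WithLp.toLp 2 t)) k = (M.mulVec t) k := by
        simp [Matrix.toEuclideanLin]
      rw [e0]
      simp [Matrix.mulVec, dotProduct, M, mul_comm]
    constructor
    · rintro ⟨t, ht, rfl⟩
      exact ⟨WithLp.toLp 2 t, fun i => ⟨ht.1 i, ht.2 i⟩, hM t⟩
    · rintro ⟨y, hy, rfl⟩
      exact ⟨fun i => y i, ⟨fun i => (hy i).1, fun i => (hy i).2⟩, hM y.ofLp⟩
  rw [e]
  by_cases hd : M.det = 0
  · have hb : IsConvexBody (Matrix.toEuclideanLin M '' box 1) := by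
      have := box_body (n := n) (a := 1) fun _ => zero_le_one
      exact ⟨this.ne.image _, this.cpt.image (LinearMap.continuous_of_finiteDimensional _),
        this.cvx.linear_image _⟩
    apply h.simple _ hb
    intro htop
    have hsub : Matrix.toEuclideanLin M '' box 1 ⊆
        ((LinearMap.range (Matrix.toEuclideanLin M)).toAffineSubspace : Set (EN n)) := by
      rintro _ ⟨y, -, rfl⟩; exact ⟨y, rfl⟩
    have hle := affineSpan_le.2 hsub
    rw [htop, top_le_iff] at hle
    have hr : LinearMap.range (Matrix.toEuclideanLin M) = ⊤ := by
      rw [eq_top_iff]; intro x _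
      have : x ∈ (LinearMap.range (Matrix.toEuclideanLin M)).toAffineSubspace := by
        rw [hle]; trivial
      exact this
    obtain ⟨w, hw, hw0⟩ := Matrix.exists_mulVec_eq_zero_iff.2 hd
    have hinj := LinearMap.injective_iff_surjective.2 (LinearMap.range_eq_top.1 hr)
    have : (WithLp.toLp 2 w : EN n) = 0 := by
      apply hinj
      rw [map_zero]
      ext k
      have := congrFun hw0 k
      simpa [Matrix.toEuclideanLin, Matrix.toLin'_apply] using this
    apply hw
    ext k
    have := congrArg (fun z : EN n => z k) this
    simpa using this
  · have : PM M := by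
      refine Matrix.diagonal_transvection_induction_of_det_ne_zero PM M hd (fun D _ => pm_diag D)
        (fun t => pm_transvection _ _ t.hij _) (fun A B hA _ h1 h2 => pm_mul hA h1 h2)
    exact this φ h h0

lemma te_zero {φ : Set (EN n) → ℝ} (h : TE φ) (h0 : φ (box 1) = 0) {K : Set (EN n)}
    (hK : IsConvexBody K) : φ K = 0 := klain_all n φ h (zp_of_cube h h0) K hK

end PartA6

section PartA7

variable {n : ℕ}

lemma hc_vadd {Q : ℕ → Set (EN n)} {Q₀ : Set (EN n)} (hQ : ∀ m, IsConvexBody (Q m))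
    (hQ₀ : IsConvexBody Q₀) (h : HC Q Q₀) {t : ℕ → EN n} {t₀ : EN n}
    (ht : Tendsto t atTop (nhds t₀)) : HC (fun m => t m +ᵥ Q m) (t₀ +ᵥ Q₀) := by
  apply hc_of_approx
  intro r hr
  filter_upwards [h.approx hQ hQ₀ (half_pos hr), (Metric.tendsto_nhds.1 ht) (r/2) (half_pos hr)] with m hm hm'
  constructor
  · rintro _ ⟨x, hx, rfl⟩
    obtain ⟨y, hy, hxy⟩ := hm.1 x hx
    refine ⟨t₀ + y, ⟨y, hy, rfl⟩, ?_⟩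
    have := dist_add_add_le (t m) x t₀ y
    simp only [vadd_eq_add]
    linarith
  · rintro _ ⟨y, hy, rfl⟩
    obtain ⟨x, hx, hxy⟩ := hm.2 y hy
    refine ⟨t m + x, ⟨x, hx, rfl⟩, ?_⟩
    have := dist_add_add_le (t m) x t₀ y
    simp only [vadd_eq_add]
    rw [dist_comm]
    linarith

lemma hc_const (Q : Set (EN n)) : HC (fun _ => Q) Q :=
  hc_of_approx fun r hr => Eventually.of_forall fun _ =>
    ⟨fun x hx => ⟨x, hx, by simp [hr.le]⟩, fun x hx => ⟨x, hx, by simp [hr.le]⟩⟩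

lemma hc_neg {Q : ℕ → Set (EN n)} {Q₀ : Set (EN n)} (hQ : ∀ m, IsConvexBody (Q m))
    (hQ₀ : IsConvexBody Q₀) (h : HC Q Q₀) : HC (fun m => -Q m) (-Q₀) := by
  apply hc_of_approx
  intro r hr
  filter_upwards [h.approx hQ hQ₀ hr] with m hm
  constructor
  · intro x hx
    obtain ⟨y, hy, hxy⟩ := hm.1 (-x) hx
    refine ⟨-y, by simpa using hy, ?_⟩
    rw [← dist_neg_neg, neg_neg]; exact hxy.le
  · intro y hy
    obtain ⟨x, hx, hxy⟩ := hm.2 (-y) hy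
    refine ⟨-x, by simpa using hx, ?_⟩
    rw [← dist_neg_neg, neg_neg, dist_comm]; exact hxy.le

section
variable {φ : Set (EN n) → ℝ}

lemma kin_cont (h : SV φ) {K Q : Set (EN n)} (hK : IsConvexBody K) (hQ : IsConvexBody Q) :
    Continuous (fun t : EN n => φ (K ∩ (t +ᵥ Q))) := by
  rw [continuous_iff_seqContinuous]
  intro t t₀ ht
  exact h.cap hK.cpt hK.cvx (fun m => hQ.vadd _) (hQ.vadd _) (hc_vadd (fun _ => hQ) hQ (hc_const Q) ht)

lemma kin_supp (h : SV φ) {K Q : Set (EN n)} {a b : ℝ} (hK : K ⊆ closedBall 0 a)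
    (hQ : Q ⊆ closedBall 0 b) {t : EN n} (ht : t ∉ closedBall (0 : EN n) (a + b)) :
    φ (K ∩ (t +ᵥ Q)) = 0 := by
  have : K ∩ (t +ᵥ Q) = ∅ := by
    rw [eq_empty_iff_forall_notMem]
    rintro x ⟨h1, h2⟩
    apply ht
    rw [mem_vadd_iff] at h2
    have h1 := hK h1
    have h2 := hQ h2
    rw [mem_closedBall_zero_iff] at *
    calc ‖t‖ = ‖x - (x - t)‖ := by congr 1; abel
      _ ≤ _ := norm_sub_le _ _
      _ ≤ _ := by linarith
  rw [this, h.empty]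

lemma body_ball {K : Set (EN n)} (hK : IsConvexBody K) : ∃ a, 0 < a ∧ K ⊆ closedBall 0 a := by
  obtain ⟨a, ha⟩ := hK.cpt.isBounded.subset_closedBall 0
  exact ⟨max a 1, by positivity, ha.trans (closedBall_subset_closedBall (le_max_left _ _))⟩

lemma kin_int (h : SV φ) {K Q : Set (EN n)} (hK : IsConvexBody K) (hQ : IsConvexBody Q) :
    Integrable (fun t : EN n => φ (K ∩ (t +ᵥ Q))) := by
  obtain ⟨a, -, ha⟩ := body_ball hK
  obtain ⟨b, -, hb⟩ := body_ball hQ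
  refine (kin_cont h hK hQ).integrable_of_hasCompactSupport ?_
  exact HasCompactSupport.intro (isCompact_closedBall 0 (a + b)) fun t ht => kin_supp h ha hb ht

/-- half kinematic integral -/
noncomputable def kinF (φ : Set (EN n) → ℝ) (K Q : Set (EN n)) : ℝ := ∫ t : EN n, φ (K ∩ (t +ᵥ Q))

lemma kinF_sv (h : SV φ) {K : Set (EN n)} (hK : IsConvexBody K) : SV (kinF φ K) := by
  refine ⟨?_, ?_, ?_, ?_⟩
  · simp [kinF, h.empty]
  · intro Q R hQ hR hQR
    have hu : IsConvexBody (Q ∪ R) := ⟨hQ.ne.inl, hQ.cpt.union hR.cpt, hQR⟩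
    have e : ∀ t : EN n, φ (K ∩ (t +ᵥ (Q ∪ R))) = φ (K ∩ (t +ᵥ Q)) + φ (K ∩ (t +ᵥ R)) -
        φ (K ∩ (t +ᵥ (Q ∩ R))) := by
      intro t
      have h1 : K ∩ (t +ᵥ (Q ∪ R)) = K ∩ (t +ᵥ Q) ∪ K ∩ (t +ᵥ R) := by
        rw [vadd_set_union, inter_union_distrib_left]
      have h2 : K ∩ (t +ᵥ (Q ∩ R)) = K ∩ (t +ᵥ Q) ∩ (K ∩ (t +ᵥ R)) := by
        rw [vadd_set_inter]; ext; simp; tauto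
      rw [h1, h2]
      apply h.val' (hK.cpt.inter (hQ.vadd t).cpt) (hK.cvx.inter (hQ.vadd t).cvx)
        (hK.cpt.inter (hR.vadd t).cpt) (hK.cvx.inter (hR.vadd t).cvx)
      rw [← h1]
      exact hK.cvx.inter (hu.vadd t).cvx
    have e3 : ∀ t : EN n, φ (K ∩ (t +ᵥ (Q ∩ R))) = φ (K ∩ (t +ᵥ Q)) + φ (K ∩ (t +ᵥ R)) -
        φ (K ∩ (t +ᵥ (Q ∪ R))) := fun t => by rw [e t]; ring
    unfold kinF
    simp only [e3]
    have i1 := integral_sub ((kin_int h hK hQ).add (kin_int h hK hR)) (kin_int h hK hu)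
    have i2 := integral_add (kin_int h hK hQ) (kin_int h hK hR)
    simp only [Pi.add_apply] at i1
    rw [i1, i2]
    ring
  · intro Q hQ hs
    unfold kinF
    have : ∀ t : EN n, φ (K ∩ (t +ᵥ Q)) = 0 := by
      intro t
      apply h.zero_of_interior (hK.cpt.inter (hQ.vadd t).cpt) (hK.cvx.inter (hQ.vadd t).cvx)
      by_contra hne
      apply hs
      rw [← hQ.cvx.interior_nonempty_iff_affineSpan_eq_top]
      obtain ⟨x, hx⟩ := nonempty_iff_ne_empty.2 hne
      have hx := interior_mono inter_subset_right hx
      rw [interior_vadd] at hx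
      obtain ⟨y, hy, -⟩ := hx
      exact ⟨y, hy⟩
    simp [this]
  · intro Q R hQ hR hQR
    obtain ⟨a, a0, ha⟩ := body_ball hK
    obtain ⟨b, b0, hb⟩ := body_ball hR
    obtain ⟨B, B0, hB⟩ := h.bounded hK.cpt
    refine tendsto_integral_filter_of_dominated_convergence
      ((closedBall (0 : EN n) (a + (b + 1))).indicator fun _ => B) ?_ ?_ ?_ ?_
    · exact Eventually.of_forall fun m => (kin_cont h hK (hQ m)).aestronglyMeasurable
    · filter_upwards [HC.approx hQR hQ hR one_pos] with m hm
      refine Eventually.of_forall fun t => ?_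
      by_cases ht : t ∈ closedBall (0 : EN n) (a + (b + 1))
      · rw [indicator_of_mem ht]
        exact hB _ inter_subset_left (hK.cpt.inter ((hQ m).vadd t).cpt) (hK.cvx.inter ((hQ m).vadd t).cvx)
      · rw [indicator_of_notMem ht, kin_supp h ha _ ht, norm_zero]
        intro x hx
        obtain ⟨y, hy, hxy⟩ := hm.1 x hx
        have := hb hy
        rw [mem_closedBall] at *
        have := dist_triangle x y 0
        linarith
    · rw [integrable_indicator_iff measurableSet_closedBall]
      exact integrableOn_const (measure_closedBall_lt_top).ne
    · refine Eventually.of_forall fun t => ?_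
      exact h.cap hK.cpt hK.cvx (fun m => (hQ m).vadd _) (hR.vadd _) (hc_vadd hQ hR hQR tendsto_const_nhds)

lemma kinF_tr (K Q : Set (EN n)) (s : EN n) : kinF φ K (s +ᵥ Q) = kinF φ K Q := by
  unfold kinF
  simp only [vadd_vadd]
  exact integral_add_right_eq_self (fun t : EN n => φ (K ∩ (t +ᵥ Q))) s

lemma kin_te (h : SV φ) {K : Set (EN n)} (hK : IsConvexBody K) :
    TE (fun Q => kinF φ K Q + kinF φ K (-Q)) := by
  have hs := kinF_sv h hK
  refine ⟨⟨?_, ?_, ?_, ?_⟩, ?_, ?_⟩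
  · simp [hs.empty]
  · intro Q R hQ hR hQR
    rw [hs.val Q R hQ hR hQR, Set.union_neg, Set.inter_neg, hs.val _ _ hQ.neg hR.neg]
    · ring
    · rw [← Set.union_neg]; exact hQR.neg
  · intro Q hQ hd
    rw [hs.simple Q hQ hd]
    have : kinF φ K (-Q) = 0 := by
      apply hs.zero_of_interior hQ.neg.cpt hQ.neg.cvx
      by_contra hne
      apply hd
      rw [← hQ.cvx.interior_nonempty_iff_affineSpan_eq_top]
      obtain ⟨x, hx⟩ := nonempty_iff_ne_empty.2 hne
      have := (Homeomorph.neg (EN n)).preimage_interior Q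
      have hx' : x ∈ interior ((Homeomorph.neg (EN n)) ⁻¹' Q) := hx
      rw [← this] at hx'
      exact ⟨_, hx'⟩
    rw [this, add_zero]
  · intro Q R hQ hR hQR
    exact (hs.cont _ _ hQ hR hQR).add (hs.cont _ _ (fun m => (hQ m).neg) hR.neg (hc_neg hQ hR hQR))
  · intro Q hQ t
    have : -(t +ᵥ Q) = (-t) +ᵥ (-Q) := by
      ext x; simp only [Set.mem_neg, mem_vadd_iff]; rw [show -(x - -t) = -x - t by abel]
    rw [this, kinF_tr, kinF_tr]
  · intro Q hQ
    simp only [neg_neg]; ring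
end

lemma ind_lim {Q : ℕ → Set (EN n)} {R : Set (EN n)} (hQ : ∀ m, IsConvexBody (Q m))
    (hR : IsConvexBody R) (hQR : HC Q R) : ∀ᵐ x : EN n, Tendsto (fun m => (Q m).indicator (fun _ => (1:ℝ)) x)
      atTop (nhds (R.indicator (fun _ => 1) x)) := by
  have : ∀ᵐ x : EN n, x ∉ frontier R := by
    rw [ae_iff]; simpa using hR.cvx.addHaar_frontier volume
  filter_upwards [this] with x hx
  apply tendsto_const_nhds.congr'
  by_cases hxR : x ∈ R
  · have hi : x ∈ interior R := by
      by_contra hi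
      exact hx ⟨subset_closure hxR, hi⟩
    filter_upwards [hQR.eventually_mem hQ hR hi] with m hm
    rw [indicator_of_mem hm, indicator_of_mem hxR]
  · obtain ⟨r, r0, hr⟩ := Metric.isOpen_iff.1 hR.cpt.isClosed.isOpen_compl x hxR
    filter_upwards [hQR.approx hQ hR r0] with m hm
    rw [indicator_of_notMem hxR, indicator_of_notMem]
    intro hxm
    obtain ⟨y, hy, hxy⟩ := hm.1 x hxm
    exact hr (by rwa [mem_ball, dist_comm]) hy

lemma vol_te : TE (fun Q : Set (EN n) => volume.real Q) := by
  refine ⟨⟨?_, ?_, ?_, ?_⟩, ?_, ?_⟩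
  · simp
  · intro Q R hQ hR _
    have := measureReal_union_add_inter (μ := (volume : Measure (EN n))) (s := Q) (t := R) hR.cpt.measurableSet
      hQ.cpt.measure_ne_top hR.cpt.measure_ne_top
    linarith
  · intro Q hQ hs
    simp only [measureReal_def]
    rw [measure_mono_null (subset_affineSpan ℝ Q) (Measure.addHaar_affineSubspace _ _ hs)]; simp
  · intro Q R hQ hR hQR
    obtain ⟨b, b0, hb⟩ := body_ball hR
    have e : ∀ X : Set (EN n), IsConvexBody X → volume.real X = ∫ x, X.indicator (fun _ => (1:ℝ)) x := by
      intro X hX; rw [integral_indicator hX.cpt.measurableSet]; simp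
    simp only [e _ (hQ _), e _ hR]
    refine tendsto_integral_filter_of_dominated_convergence
      ((closedBall (0 : EN n) (b + 1)).indicator fun _ => 1) ?_ ?_ ?_ (ind_lim hQ hR hQR)
    · exact Eventually.of_forall fun m =>
        (stronglyMeasurable_const.indicator (hQ m).cpt.measurableSet).aestronglyMeasurable
    · filter_upwards [HC.approx hQR hQ hR one_pos] with m hm
      refine Eventually.of_forall fun t => ?_
      by_cases ht : t ∈ Q m
      · rw [indicator_of_mem ht, indicator_of_mem, norm_one]
        obtain ⟨y, hy, hxy⟩ := hm.1 t ht
        have := hb hy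
        rw [mem_closedBall] at *
        have := dist_triangle t y 0
        linarith
      · rw [indicator_of_notMem ht, norm_zero]
        exact indicator_nonneg (fun _ _ => zero_le_one) _
    · rw [integrable_indicator_iff measurableSet_closedBall]
      exact integrableOn_const (measure_closedBall_lt_top).ne
  · intro Q _ t
    simp [measureReal_def]
  · intro Q _
    simp [measureReal_def]

end PartA7

section PartA8

variable {n : ℕ}

lemma TE.lin {φ ψ : Set (EN n) → ℝ} (h : TE φ) (h' : TE ψ) (a b : ℝ) :
    TE (fun Q => a * φ Q + b * ψ Q) := by
  refine ⟨⟨?_, ?_, ?_, ?_⟩, ?_, ?_⟩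
  · simp [h.empty, h'.empty]
  · intro Q R hQ hR hQR
    simp only [h.val Q R hQ hR hQR, h'.val Q R hQ hR hQR]; ring
  · intro Q hQ hs
    simp [h.simple Q hQ hs, h'.simple Q hQ hs]
  · intro Q R hQ hR hQR
    exact ((h.cont _ _ hQ hR hQR).const_mul a).add ((h'.cont _ _ hQ hR hQR).const_mul b)
  · intro Q hQ t
    simp only [h.tr Q hQ t, h'.tr Q hQ t]
  · intro Q hQ
    simp only [h.even Q hQ, h'.even Q hQ]

lemma vol_box_pos : 0 < volume.real (box (n := n) 1) := by
  have hb := box_body (n := n) (a := 1) fun _ => zero_le_one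
  have hsub : closedBall (WithLp.toLp 2 fun _ => (1/2 : ℝ) : EN n) (1/2) ⊆ box 1 := by
    intro x hx i
    rw [mem_closedBall, dist_eq_norm] at hx
    have := (PiLp.norm_apply_le (x - WithLp.toLp 2 fun _ => (1/2 : ℝ)) i).trans hx
    rw [Real.norm_eq_abs, abs_le] at this
    simp at this ⊢
    constructor <;> linarith
  have h1 := measure_closedBall_pos (volume : Measure (EN n)) (WithLp.toLp 2 fun _ => (1/2 : ℝ) : EN n)
    (by norm_num : (0:ℝ) < 1/2)
  exact ENNReal.toReal_pos (h1.trans_le (measure_mono hsub)).ne' hb.cpt.measure_ne_top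

lemma ball_body (c : EN n) {r : ℝ} (hr : 0 ≤ r) : IsConvexBody (closedBall c r) :=
  ⟨⟨c, mem_closedBall_self hr⟩, isCompact_closedBall c r, convex_closedBall c r⟩

lemma vadd_cball (t : EN n) (r : ℝ) : t +ᵥ closedBall (0 : EN n) r = closedBall t r := by
  ext x; rw [mem_vadd_iff]; simp [dist_eq_norm]

lemma neg_cball (r : ℝ) : -closedBall (0 : EN n) r = closedBall 0 r := by
  ext x; simp

lemma kin_ball_lim {φ : Set (EN n) → ℝ} (h : SV φ) {K : Set (EN n)} (hK : IsConvexBody K) :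
    Tendsto (fun m : ℕ => ∫ t : EN n, φ (K ∩ ((((m:ℝ) + 1) • t) +ᵥ closedBall (0 : EN n) ((m:ℝ) + 1)))) atTop
      (nhds (φ K * volume.real (closedBall (0 : EN n) 1))) := by
  obtain ⟨a, a0, ha⟩ := body_ball hK
  obtain ⟨B, B0, hB⟩ := h.bounded hK.cpt
  have hlim : φ K * volume.real (closedBall (0 : EN n) 1) =
      ∫ t : EN n, (closedBall (0 : EN n) 1).indicator (fun _ => φ K) t := by
    rw [integral_indicator measurableSet_closedBall]; simp [mul_comm]
  rw [hlim]
  refine tendsto_integral_filter_of_dominated_convergence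
      ((closedBall (0 : EN n) (a + 1)).indicator fun _ => B) ?_ ?_ ?_ ?_
  · refine Eventually.of_forall fun m => Continuous.aestronglyMeasurable ?_
    exact (kin_cont h hK (ball_body 0 (by positivity : (0:ℝ) ≤ (m:ℝ) + 1))).comp (continuous_const_smul ((m:ℝ) + 1))
  · refine Eventually.of_forall fun m => Eventually.of_forall fun t => ?_
    have hm : (0:ℝ) < (m:ℝ) + 1 := by positivity
    have hb := ball_body (0 : EN n) hm.le
    by_cases ht : t ∈ closedBall (0 : EN n) (a + 1)
    · rw [indicator_of_mem ht]
      exact hB _ inter_subset_left (hK.cpt.inter (hb.vadd _).cpt) (hK.cvx.inter (hb.vadd _).cvx)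
    · rw [indicator_of_notMem ht, kin_supp h ha subset_rfl, norm_zero]
      rw [mem_closedBall_zero_iff, not_le] at *
      rw [norm_smul, Real.norm_of_nonneg hm.le]
      have : (0:ℝ) ≤ m := by positivity
      nlinarith
  · rw [integrable_indicator_iff measurableSet_closedBall]
    exact integrableOn_const (measure_closedBall_lt_top).ne
  · have : ∀ᵐ x : EN n, x ∉ frontier (closedBall (0 : EN n) 1) := by
      rw [ae_iff]; simpa using (convex_closedBall (0 : EN n) 1).addHaar_frontier volume
    filter_upwards [this] with t ht
    rw [frontier_closedBall _ one_ne_zero] at ht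
    rw [mem_sphere_zero_iff_norm] at ht
    apply tendsto_const_nhds.congr'
    rcases lt_or_gt_of_ne ht with h1 | h1
    · rw [indicator_of_mem (by rw [mem_closedBall_zero_iff]; exact h1.le)]
      obtain ⟨N, hN⟩ := exists_nat_gt (a / (1 - ‖t‖))
      rw [div_lt_iff₀ (by linarith)] at hN
      filter_upwards [eventually_ge_atTop N] with m hm
      congr 1
      symm
      rw [inter_eq_left]
      intro x hx
      have hx := ha hx
      have hm' : (N:ℝ) ≤ m := by exact_mod_cast hm
      rw [vadd_cball, mem_closedBall, dist_eq_norm]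
      rw [mem_closedBall_zero_iff] at hx
      have := norm_sub_le x (((m:ℝ) + 1) • t)
      rw [norm_smul, Real.norm_of_nonneg (by positivity)] at this
      nlinarith
    · rw [indicator_of_notMem (by rw [mem_closedBall_zero_iff]; exact not_le.2 h1)]
      obtain ⟨N, hN⟩ := exists_nat_gt (a / (‖t‖ - 1))
      rw [div_lt_iff₀ (by linarith)] at hN
      filter_upwards [eventually_ge_atTop N] with m hm
      have hm' : (N:ℝ) ≤ m := by exact_mod_cast hm
      symm
      apply kin_supp h ha subset_rfl
      rw [mem_closedBall_zero_iff, not_le, norm_smul, Real.norm_of_nonneg (by positivity)]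
      nlinarith

theorem kin {φ : Set (EN n) → ℝ} (h : SV φ) {K Q : Set (EN n)} (hK : IsConvexBody K)
    (hQ : IsConvexBody Q) : kinF φ K Q + kinF φ K (-Q) = 2 * φ K * volume.real Q := by
  set w := volume.real (box (n := n) 1) with hw
  have w0 : 0 < w := vol_box_pos
  set c := kinF φ K (box 1) + kinF φ K (-box 1) with hc
  have key : ∀ {Q : Set (EN n)}, IsConvexBody Q →
      w * (kinF φ K Q + kinF φ K (-Q)) + (-c) * volume.real Q = 0 := by
    intro Q hQ
    exact te_zero ((kin_te h hK).lin vol_te w (-c)) (by simp only [← hw, ← hc]; ring) hQ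
  set ω := volume.real (closedBall (0 : EN n) 1) with hω
  have ω0 : 0 < ω := ENNReal.toReal_pos (measure_closedBall_pos _ _ one_pos).ne'
    (measure_closedBall_lt_top).ne
  have e1 : ∀ m : ℕ, ∫ t : EN n, φ (K ∩ ((((m:ℝ) + 1) • t) +ᵥ closedBall (0 : EN n) ((m:ℝ) + 1))) =
      c * ω / (2 * w) := by
    intro m
    have hm : (0:ℝ) < (m:ℝ) + 1 := by positivity
    have := Measure.integral_comp_smul (volume : Measure (EN n))
      (fun t => φ (K ∩ (t +ᵥ closedBall (0 : EN n) ((m:ℝ) + 1)))) ((m:ℝ) + 1)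
    rw [this]
    have k := key (ball_body 0 hm.le)
    rw [neg_cball, Measure.addHaar_real_closedBall' volume _ hm.le, ← hω] at k
    rw [abs_of_pos (by positivity), smul_eq_mul]
    change _ * kinF φ K _ = _
    have hp : (0:ℝ) < ((m:ℝ) + 1) ^ Module.finrank ℝ (EN n) := by positivity
    field_simp
    linarith
  have l := kin_ball_lim h hK
  simp only [e1] at l
  have l' := tendsto_nhds_unique l tendsto_const_nhds
  have hcw : c = 2 * w * φ K := by
    rw [← hω] at l'
    field_simp at l'
    linarith
  have k := key hQ
  rw [hcw] at k
  have : w * (kinF φ K Q + kinF φ K (-Q) - 2 * φ K * volume.real Q) = 0 := by linarith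
  rcases mul_eq_zero.1 this with h' | h'
  · exact absurd h' w0.ne'
  · linarith

end PartA8

section PartB1

variable {n : ℕ}

/-- quasi-invariance under translations and point reflections on a ball -/
structure QI {n : ℕ} (v : Set (EN n) → ℝ) (δ ε : ℝ) : Prop where
  sv : SV v
  δ0 : 0 ≤ δ
  δ1 : δ < 1
  ε0 : 0 < ε
  tr : ∀ (X : Set (EN n)) (t : EN n), IsCompact X → Convex ℝ X → X ⊆ ball 0 ε → t +ᵥ X ⊆ ball 0 ε →
    |v (t +ᵥ X) - v X| ≤ δ * |v X|
  ref : ∀ (X : Set (EN n)) (t : EN n), IsCompact X → Convex ℝ X → X ⊆ ball 0 ε → t +ᵥ -X ⊆ ball 0 ε →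
    |v (t +ᵥ -X) - v X| ≤ δ * |v X|

lemma exists_poly_seq {X : Set (EN n)} (hX : IsConvexBody X) : ∃ P : ℕ → Set (EN n),
    (∀ m, IsPolytope (P m)) ∧ (∀ m, P m ⊆ X) ∧ (∀ m, IsConvexBody (P m)) ∧
      (∀ m : ℕ, ∀ x ∈ X, ∃ y ∈ P m, dist x y ≤ 1 / ((m:ℝ) + 1)) := by
  have : ∀ m : ℕ, ∃ P : Set (EN n), IsPolytope P ∧ P ⊆ X ∧ IsConvexBody P ∧
      ∀ x ∈ X, ∃ y ∈ P, dist x y ≤ 1 / ((m:ℝ) + 1) := by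
    intro m
    obtain ⟨t, htX, htf, ht⟩ := hX.cpt.finite_cover_balls (e := 1 / ((m:ℝ) + 1)) (by positivity)
    have hne : t.Nonempty := by
      obtain ⟨x, hx⟩ := hX.ne
      have := ht hx
      simp only [mem_iUnion] at this
      obtain ⟨y, hy, -⟩ := this
      exact ⟨y, hy⟩
    refine ⟨convexHull ℝ t, ⟨htf.toFinset, by simp⟩, convexHull_min htX hX.cvx,
      ⟨convexHull_nonempty_iff.2 hne, htf.isCompact_convexHull ℝ, convex_convexHull ℝ t⟩, fun x hx => ?_⟩
    have := ht hx
    simp only [mem_iUnion] at this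
    obtain ⟨y, hy, hxy⟩ := this
    exact ⟨y, subset_convexHull ℝ t hy, (mem_ball.1 hxy).le⟩
  choose P h1 h2 h3 h4 using this
  exact ⟨P, h1, h2, h3, h4⟩

lemma qi_iso {v : Set (EN n) → ℝ} (hv : SV v) {M ε : ℝ} (hε : 0 < ε)
    (hstar : ∀ P : Set (EN n), IsPolytope P → ∀ g : EN n ≃ᵢ EN n,
        P ⊆ Metric.ball 0 ε → g '' P ⊆ Metric.ball 0 ε →
        ∃ a : ℝ, |a| ≤ M ∧ v (g '' P) = v P * (1 + a * ε)) {X : Set (EN n)} (hX : IsCompact X)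
    (hX' : Convex ℝ X) (g : EN n ≃ᵢ EN n) (h1 : X ⊆ ball 0 ε) (h2 : g '' X ⊆ ball 0 ε) :
    |v (g '' X) - v X| ≤ M * ε * |v X| := by
  rcases X.eq_empty_or_nonempty with rfl | hne
  · simp [hv.empty]
  have hb : IsConvexBody X := ⟨hne, hX, hX'⟩
  obtain ⟨P, p1, p2, p3, p4⟩ := exists_poly_seq hb
  have gb : ∀ {Y : Set (EN n)}, IsConvexBody Y → IsConvexBody (g '' Y) := by
    intro Y hY
    refine ⟨hY.ne.image _, hY.cpt.image g.continuous, ?_⟩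
    have : g '' Y = (g.toRealAffineIsometryEquiv.toAffineEquiv.toAffineMap) '' Y := by
      rfl
    rw [this]
    exact hY.cvx.affine_image _
  have ev : ∀ r > 0, ∀ᶠ m : ℕ in atTop, 1 / ((m:ℝ) + 1) ≤ r := fun r hr =>
    (tendsto_one_div_add_atTop_nhds_zero_nat.eventually (gt_mem_nhds hr)).mono fun _ h => h.le
  have c1 : HC P X := hc_of_approx fun r hr => (ev r hr).mono fun m hm =>
    ⟨fun x hx => ⟨x, p2 m hx, by simp [hr.le]⟩, fun y hy => by
      obtain ⟨z, hz, hyz⟩ := p4 m y hy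
      exact ⟨z, hz, hyz.trans hm⟩⟩
  have c2 : HC (fun m => g '' P m) (g '' X) := hc_of_approx fun r hr => (ev r hr).mono fun m hm =>
    ⟨fun x hx => ⟨x, image_mono (p2 m) hx, by simp [hr.le]⟩, by
      rintro _ ⟨y, hy, rfl⟩
      obtain ⟨z, hz, hyz⟩ := p4 m y hy
      exact ⟨g z, mem_image_of_mem _ hz, by rw [g.isometry.dist_eq]; exact hyz.trans hm⟩⟩
  have l1 := hv.cont _ _ p3 hb c1
  have l2 := hv.cont _ _ (fun m => gb (p3 m)) (gb hb) c2
  refine le_of_tendsto_of_tendsto' (l2.sub l1).abs (l1.abs.const_mul (M * ε)) fun m => ?_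
  obtain ⟨a, ha, e⟩ := hstar (P m) (p1 m) g ((p2 m).trans h1) ((image_mono (p2 m)).trans h2)
  rw [e, show v (P m) * (1 + a * ε) - v (P m) = a * ε * v (P m) by ring, abs_mul, abs_mul, abs_of_pos hε]
  gcongr

lemma qi_of_star {v : Set (EN n) → ℝ} (hv : SV v) {M ε : ℝ} (hM : 0 < M) (hε : 0 < ε) (hMε : M * ε < 1)
    (hstar : ∀ P : Set (EN n), IsPolytope P → ∀ g : EN n ≃ᵢ EN n,
        P ⊆ Metric.ball 0 ε → g '' P ⊆ Metric.ball 0 ε →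
        ∃ a : ℝ, |a| ≤ M ∧ v (g '' P) = v P * (1 + a * ε)) : QI v (M * ε) ε := by
  refine ⟨hv, by positivity, hMε, hε, ?_, ?_⟩
  · intro X t hX hX' h1 h2
    have e : IsometryEquiv.addLeft t '' X = t +ᵥ X := rfl
    have := qi_iso hv hε hstar hX hX' (IsometryEquiv.addLeft t) h1 (by rw [e]; exact h2)
    rwa [e] at this
  · intro X t hX hX' h1 h2
    have e : IsometryEquiv.subLeft t '' X = t +ᵥ -X := by
      ext x
      simp only [mem_image, mem_vadd_iff, Set.mem_neg, IsometryEquiv.subLeft_apply]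
      constructor
      · rintro ⟨y, hy, rfl⟩; simpa using hy
      · intro hx; exact ⟨-(x - t), hx, by abel⟩
    have := qi_iso hv hε hstar hX hX' (IsometryEquiv.subLeft t) h1 (by rw [e]; exact h2)
    rwa [e] at this

section
variable {v : Set (EN n) → ℝ} {δ ε : ℝ}

lemma QI.cap_bound (h : QI v δ ε) {T Q : Set (EN n)} (hT : IsCompact T) (hT' : Convex ℝ T)
    (hQ : IsCompact Q) (hQ' : Convex ℝ Q) (hTε : T ⊆ ball 0 ε) (hQε : Q ⊆ ball 0 ε) {β : ℝ}
    (hβ : ∀ Y ⊆ Q, IsCompact Y → Convex ℝ Y → |v Y| ≤ β) (t : EN n) : |v (T ∩ (t +ᵥ Q))| ≤ 2 * β := by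
  set Y := Q ∩ (-t +ᵥ T) with hY
  have e : T ∩ (t +ᵥ Q) = t +ᵥ Y := by
    ext x
    simp only [hY, mem_inter_iff, mem_vadd_iff]
    rw [show x - t - -t = x by abel]; tauto
  have yc : IsCompact Y := hQ.inter (hT.vadd _)
  have yv : Convex ℝ Y := hQ'.inter (hT'.vadd _)
  have h1 := h.tr Y t yc yv (inter_subset_left.trans hQε) (by rw [← e]; exact inter_subset_left.trans hTε)
  have h2 := hβ Y inter_subset_left yc yv
  rw [e]
  have h3 := abs_sub_abs_le_abs_sub (v (t +ᵥ Y)) (v Y)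
  have := h.δ1
  nlinarith [abs_nonneg (v Y)]

lemma QI.small (h : QI v δ ε) : ∃ C s₀ : ℝ, 0 < s₀ ∧ s₀ < ε ∧ ∀ s, 0 < s → s ≤ s₀ → ∀ X ⊆ closedBall (0 : EN n) s,
    IsCompact X → Convex ℝ X → |v X| ≤ C * s ^ n := by
  have ε0 := h.ε0
  have δ0 := h.δ0
  have δ1 := h.δ1
  set r := ε / 2 with hr
  have r0 : 0 < r := by positivity
  set K := closedBall (0 : EN n) r with hK
  have Kb : IsConvexBody K := ball_body 0 r0.le
  have Kε : K ⊆ ball 0 ε := closedBall_subset_ball (by linarith)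
  set ω := volume.real (closedBall (0 : EN n) 1) with hω
  have ω0 : 0 < ω := ENNReal.toReal_pos (measure_closedBall_pos _ _ one_pos).ne'
    (measure_closedBall_lt_top).ne
  have hvol : ∀ s, 0 ≤ s → volume.real (closedBall (0 : EN n) s) = s ^ n * ω := by
    intro s hs
    rw [Measure.addHaar_real_closedBall' volume _ hs]; simp [hω]
  -- main inequality
  have main : ∀ s, 0 < s → s ≤ r → ∀ β, 0 ≤ β → (∀ Y ⊆ closedBall (0 : EN n) s, IsCompact Y → Convex ℝ Y → |v Y| ≤ β) →
      ∀ X ⊆ closedBall (0 : EN n) s, IsCompact X → Convex ℝ X →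
      2 * (1 - δ) * |v X| * (r - s) ^ n ≤ 2 * |v K| * s ^ n + 4 * β * ((r + s) ^ n - (r - s) ^ n) := by
    intro s s0 sr β β0 hβ X hX hXc hXv
    have srn : (r - s) ^ n ≤ (r + s) ^ n := pow_le_pow_left₀ (by linarith) (by linarith) n
    rcases X.eq_empty_or_nonempty with rfl | hne
    · rw [h.sv.empty]
      simp only [abs_zero, mul_zero, zero_mul]
      have := mul_nonneg (mul_nonneg (by norm_num : (0:ℝ) ≤ 4) β0) (sub_nonneg.2 srn)
      positivity
    have Xb : IsConvexBody X := ⟨hne, hXc, hXv⟩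
    have sε : closedBall (0 : EN n) s ⊆ ball 0 ε := closedBall_subset_ball (by linarith)
    have Xε := hX.trans sε
    have hXn : -X ⊆ closedBall (0 : EN n) s := by
      intro x hx; have := hX hx; simpa using this
    have k := kin h.sv Kb Xb
    obtain ⟨σ, hσ, hσ1⟩ : ∃ σ : ℝ, σ * v X = |v X| ∧ |σ| = 1 := by
      rcases le_total 0 (v X) with h' | h'
      · exact ⟨1, by rw [abs_of_nonneg h']; ring, by simp⟩
      · exact ⟨-1, by rw [abs_of_nonpos h']; ring, by simp⟩
    unfold kinF at k
    rw [← integral_add (kin_int h.sv Kb Xb) (kin_int h.sv Kb Xb.neg)] at k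
    set A := 2 * (1 - δ) * |v X| + 4 * β with hA
    have A0 : 0 ≤ A := by
      have := mul_nonneg (by linarith : 0 ≤ 2 * (1 - δ)) (abs_nonneg (v X))
      linarith
    have ind_int : ∀ (s c : ℝ), Integrable ((closedBall (0 : EN n) s).indicator fun _ => c) := by
      intro s c
      rw [integrable_indicator_iff measurableSet_closedBall]
      exact integrableOn_const (measure_closedBall_lt_top).ne
    have le : ∫ t : EN n, ((closedBall (0 : EN n) (r + s)).indicator (fun _ => -(4 * β)) t +
        (closedBall (0 : EN n) (r - s)).indicator (fun _ => A) t) ≤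
        ∫ t : EN n, σ * (v (K ∩ (t +ᵥ X)) + v (K ∩ (t +ᵥ -X))) := by
      apply integral_mono ((ind_int _ _).add (ind_int _ _))
        (((kin_int h.sv Kb Xb).add (kin_int h.sv Kb Xb.neg)).const_mul σ)
      intro t
      change (closedBall (0 : EN n) (r + s)).indicator (fun _ => -(4 * β)) t +
        (closedBall (0 : EN n) (r - s)).indicator (fun _ => A) t ≤
        σ * (v (K ∩ (t +ᵥ X)) + v (K ∩ (t +ᵥ -X)))
      by_cases ht : t ∈ closedBall (0 : EN n) (r + s)
      · by_cases ht' : t ∈ closedBall (0 : EN n) (r - s)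
        · simp only [indicator_of_mem ht, indicator_of_mem ht']
          have sub : ∀ Y ⊆ closedBall (0 : EN n) s, t +ᵥ Y ⊆ K := by
            intro Y hY x hx
            rw [mem_vadd_iff] at hx
            have := hY hx
            rw [hK]
            rw [mem_closedBall_zero_iff] at *
            have := norm_add_le (x - t) t
            rw [sub_add_cancel] at this
            linarith
          rw [inter_eq_right.2 (sub X hX), inter_eq_right.2 (sub (-X) hXn)]
          have q1 := h.tr X t hXc hXv Xε ((sub X hX).trans Kε)
          have q2 := h.ref X t hXc hXv Xε ((sub _ hXn).trans Kε)
          have hy : ∀ y, |y - v X| ≤ δ * |v X| → (1 - δ) * |v X| ≤ σ * y := by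
            intro y hy
            have : |σ * (y - v X)| ≤ δ * |v X| := by rw [abs_mul, hσ1, one_mul]; exact hy
            have := (abs_le.1 this).1
            rw [mul_sub, hσ] at this
            linarith
          have := hy _ q1
          have := hy _ q2
          rw [hA]
          linarith
        · simp only [indicator_of_mem ht, indicator_of_notMem ht']
          have b1 := h.cap_bound Kb.cpt Kb.cvx hXc hXv Kε Xε (fun Y hY => hβ Y (hY.trans hX)) t
          have b2 := h.cap_bound Kb.cpt Kb.cvx Xb.neg.cpt Xb.neg.cvx Kε (hXn.trans sε)
            (fun Y hY => hβ Y (hY.trans hXn)) t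
          have : |σ * (v (K ∩ (t +ᵥ X)) + v (K ∩ (t +ᵥ -X)))| ≤ 4 * β := by
            rw [abs_mul, hσ1, one_mul]
            refine (abs_add_le _ _).trans (by linarith)
          linarith [(abs_le.1 this).1]
      · have ht' : t ∉ closedBall (0 : EN n) (r - s) := fun h' => ht (closedBall_subset_closedBall (by linarith) h')
        simp only [indicator_of_notMem ht, indicator_of_notMem ht']
        rw [kin_supp (K := K) h.sv subset_rfl hX ht, kin_supp (K := K) h.sv subset_rfl hXn ht]
        simp
    rw [integral_add (ind_int _ _) (ind_int _ _), integral_indicator measurableSet_closedBall,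
      integral_indicator measurableSet_closedBall, integral_const_mul, k] at le
    simp only [setIntegral_const, smul_eq_mul] at le
    rw [hvol _ (by linarith), hvol _ (by linarith)] at le
    have hvX : volume.real X ≤ s ^ n * ω := by
      rw [← hvol s s0.le]
      exact measureReal_mono hX (measure_closedBall_lt_top).ne
    have up : σ * (2 * v K * volume.real X) ≤ 2 * |v K| * (s ^ n * ω) := by
      refine (le_abs_self _).trans ?_
      rw [abs_mul, hσ1, one_mul, abs_mul, abs_mul, abs_of_nonneg measureReal_nonneg,
        abs_of_pos (by norm_num : (0:ℝ) < 2)]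
      gcongr
    have fin := le.trans up
    rw [hA] at fin
    have : ω * (2 * (1 - δ) * |v X| * (r - s) ^ n) ≤
        ω * (2 * |v K| * s ^ n + 4 * β * ((r + s) ^ n - (r - s) ^ n)) := by linarith
    exact le_of_mul_le_mul_left this ω0
  -- choose s₀
  have cont : Tendsto (fun s : ℝ => (1 - δ) * (r - s) ^ n - 4 * ((r + s) ^ n - (r - s) ^ n)) (nhds 0)
      (nhds ((1 - δ) * (r - 0) ^ n - 4 * ((r + 0) ^ n - (r - 0) ^ n))) := by
    apply Continuous.tendsto
    fun_prop
  have pos : (0:ℝ) < (1 - δ) * (r - 0) ^ n - 4 * ((r + 0) ^ n - (r - 0) ^ n) := by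
    simp; exact mul_pos (by linarith) (by positivity)
  obtain ⟨η, η0, hη⟩ := Metric.eventually_nhds_iff.1 (cont.eventually (lt_mem_nhds pos))
  refine ⟨2 * |v K| / ((1 - δ) * (r / 2) ^ n), min (η / 2) (r / 2), by positivity, ?_, ?_⟩
  · exact (min_le_right _ _).trans_lt (by linarith)
  intro s s0 hs X hX hXc hXv
  have hs1 : s ≤ η / 2 := hs.trans (min_le_left _ _)
  have hs2 : s ≤ r / 2 := hs.trans (min_le_right _ _)
  have hη' := hη (y := s) (by rw [Real.dist_eq, sub_zero, abs_of_pos s0]; linarith)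
  obtain ⟨B, B0, hB⟩ := h.sv.bounded (isCompact_closedBall (0 : EN n) s)
  set S := {y : ℝ | ∃ Y ⊆ closedBall (0 : EN n) s, IsCompact Y ∧ Convex ℝ Y ∧ y = |v Y|} with hS
  have Sb : BddAbove S := ⟨B, by rintro _ ⟨Y, h1, h2, h3, rfl⟩; exact hB Y h1 h2 h3⟩
  have hβ : ∀ Y ⊆ closedBall (0 : EN n) s, IsCompact Y → Convex ℝ Y → |v Y| ≤ sSup S :=
    fun Y h1 h2 h3 => le_csSup Sb ⟨Y, h1, h2, h3, rfl⟩
  have Sne : S.Nonempty := ⟨_, X, hX, hXc, hXv, rfl⟩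
  set β := sSup S with hβdef
  have β0 : 0 ≤ β := (abs_nonneg _).trans (hβ X hX hXc hXv)
  have hp : 0 < (r - s) ^ n := pow_pos (by linarith) n
  have up : β ≤ (2 * |v K| * s ^ n + 4 * β * ((r + s) ^ n - (r - s) ^ n)) / (2 * (1 - δ) * (r - s) ^ n) := by
    apply csSup_le Sne
    rintro _ ⟨Y, h1, h2, h3, rfl⟩
    rw [le_div_iff₀ (mul_pos (by linarith) hp)]
    have := main s s0 (by linarith) β β0 hβ Y h1 h2 h3
    linarith
  rw [le_div_iff₀ (mul_pos (by linarith) hp)] at up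
  have up2 : (1 - δ) * (r - s) ^ n * β ≤ 2 * |v K| * s ^ n := by nlinarith
  have hpr : (r / 2) ^ n ≤ (r - s) ^ n := pow_le_pow_left₀ (by positivity) (by linarith) n
  have up3 : (1 - δ) * (r / 2) ^ n * β ≤ 2 * |v K| * s ^ n := by
    refine le_trans ?_ up2
    have : 0 ≤ 1 - δ := by linarith
    gcongr
  refine (hβ X hX hXc hXv).trans ?_
  rw [div_mul_eq_mul_div, le_div_iff₀ (mul_pos (by linarith) (by positivity))]
  linarith
end

end PartB1

section PartB2

variable {n : ℕ}

section
variable {v : Set (EN n) → ℝ} {δ ε : ℝ}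

lemma kin_ball (h : SV v) {K : Set (EN n)} (hK : IsConvexBody K) {s : ℝ} (hs : 0 < s) :
    ∫ t : EN n, v (K ∩ (t +ᵥ closedBall (0 : EN n) s)) = v K * (s ^ n * volume.real (closedBall (0 : EN n) 1)) := by
  have k := kin h hK (ball_body (0 : EN n) hs.le)
  rw [neg_cball, Measure.addHaar_real_closedBall' volume _ hs.le] at k
  simp only [finrank_euclideanSpace, Fintype.card_fin] at k
  unfold kinF at k
  linarith

lemma half_mem {T : Set (EN n)} {x : EN n} : x ∈ (1 / 2 : ℝ) • T ↔ (2 : ℝ) • x ∈ T := by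
  rw [mem_smul_set_iff_inv_smul_mem₀ (by norm_num)]; norm_num

lemma half_body {T : Set (EN n)} (hT : IsConvexBody T) : IsConvexBody ((1 / 2 : ℝ) • T) :=
  ⟨hT.ne.smul_set, hT.cpt.smul _, hT.cvx.smul _⟩

lemma QI.half (h : QI v δ ε) {T : Set (EN n)} (hT : IsConvexBody T) (hTε : T ⊆ ball 0 ε) :
    |v T - 2 ^ n * v ((1 / 2 : ℝ) • T)| ≤ δ * (2 ^ n * |v ((1 / 2 : ℝ) • T)|) := by
  have δ0 := h.δ0
  have δ1 := h.δ1
  set U := (1 / 2 : ℝ) • T with hU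
  have Ub : IsConvexBody U := half_body hT
  have Uε : U ⊆ ball 0 ε := by
    intro x hx
    have := hTε (half_mem.1 hx)
    rw [mem_ball_zero_iff, norm_smul] at *
    simp at this
    linarith [norm_nonneg x]
  obtain ⟨C, s₀, s₀0, s₀ε, hC⟩ := h.small
  obtain ⟨a, a0, ha⟩ := body_ball hT
  have haU : U ⊆ closedBall 0 a := by
    intro x hx
    have := ha (half_mem.1 hx)
    rw [mem_closedBall_zero_iff, norm_smul] at *
    simp at this
    linarith [norm_nonneg x]
  set ω := volume.real (closedBall (0 : EN n) 1) with hω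
  have ω0 : 0 < ω := ENNReal.toReal_pos (measure_closedBall_pos _ _ one_pos).ne'
    (measure_closedBall_lt_top).ne
  let s : ℕ → ℝ := fun m => s₀ / ((m:ℝ) + 1)
  have s0 : ∀ m, 0 < s m := fun m => by positivity
  have ss : ∀ m, s m ≤ s₀ := fun m => div_le_self s₀0.le (by linarith [(Nat.cast_nonneg m : (0:ℝ) ≤ m)])
  have slim : Tendsto s atTop (nhds 0) := by
    have := (tendsto_one_div_add_atTop_nhds_zero_nat (𝕜 := ℝ)).const_mul s₀
    simpa [s, div_eq_mul_inv] using this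
  let c : ℕ → ℝ := fun m => s m ^ n * ω
  have c0 : ∀ m, 0 < c m := fun m => mul_pos (pow_pos (s0 m) n) ω0
  let g : ℕ → EN n → ℝ := fun m t => v (T ∩ (t +ᵥ closedBall (0 : EN n) (s m))) / c m
  let k : ℕ → EN n → ℝ := fun m t => v (U ∩ (((1 / 2 : ℝ) • t) +ᵥ closedBall (0 : EN n) (s m))) / c m
  have Bb : ∀ m, IsConvexBody (closedBall (0 : EN n) (s m)) := fun m => ball_body 0 (s0 m).le
  have gi : ∀ m, Integrable (g m) := fun m => (kin_int h.sv hT (Bb m)).div_const _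
  have ki : ∀ m, Integrable (k m) := fun m =>
    ((kin_int h.sv Ub (Bb m)).comp_smul (by norm_num : (1 / 2 : ℝ) ≠ 0)).div_const _
  have gI : ∀ m, ∫ t, g m t = v T := by
    intro m
    simp only [g]
    rw [integral_div, kin_ball h.sv hT (s0 m)]
    exact mul_div_cancel_right₀ _ (c0 m).ne'
  have kI : ∀ m, ∫ t, k m t = 2 ^ n * v U := by
    intro m
    simp only [k]
    rw [integral_div]
    have := Measure.integral_comp_smul (volume : Measure (EN n))
      (fun t => v (U ∩ (t +ᵥ closedBall (0 : EN n) (s m)))) (1 / 2 : ℝ)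
    rw [this, kin_ball h.sv Ub (s0 m)]
    simp only [finrank_euclideanSpace, Fintype.card_fin, smul_eq_mul]
    rw [abs_of_pos (by positivity), mul_div_assoc]
    change _ * (v U * c m / c m) = _
    rw [mul_div_cancel_right₀ _ (c0 m).ne']
    simp
  have hsub : ∀ m, closedBall (0 : EN n) (s m) ⊆ ball 0 ε := fun m =>
    closedBall_subset_ball ((ss m).trans_lt s₀ε)
  have bd : ∀ m (X : Set (EN n)), IsConvexBody X → X ⊆ ball 0 ε → ∀ t : EN n,
      |v (X ∩ (t +ᵥ closedBall (0 : EN n) (s m))) / c m| ≤ 2 * C / ω := by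
    intro m X hX hXε t
    rw [abs_div, abs_of_pos (c0 m), div_le_div_iff₀ (c0 m) ω0]
    have := h.cap_bound hX.cpt hX.cvx (Bb m).cpt (Bb m).cvx hXε (hsub m) (hC (s m) (s0 m) (ss m)) t
    have := mul_le_mul_of_nonneg_right this ω0.le
    simp only [c]
    linarith
  have hσ : ∀ m, ∃ σ : ℝ, σ * v (closedBall (0 : EN n) (s m)) = |v (closedBall (0 : EN n) (s m))| ∧ |σ| = 1 := by
    intro m
    rcases le_total 0 (v (closedBall (0 : EN n) (s m))) with h' | h'
    · exact ⟨1, by rw [abs_of_nonneg h']; ring, by simp⟩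
    · exact ⟨-1, by rw [abs_of_nonpos h']; ring, by simp⟩
  choose σ hσ hσ1 using hσ
  let D : ℕ → EN n → ℝ := fun m t => |g m t - k m t| - δ * σ m * k m t
  have Di : ∀ m, Integrable (D m) := fun m => ((gi m).sub (ki m)).abs.sub ((ki m).const_mul _)
  let E : ℕ → EN n → ℝ := fun m t => max (D m t) 0
  have Ei : ∀ m, Integrable (E m) := fun m => (Di m).pos_part
  have hlim : Tendsto (fun m => ∫ t, E m t) atTop (nhds (∫ _ : EN n, (0:ℝ))) := by
    refine tendsto_integral_filter_of_dominated_convergence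
      ((closedBall (0 : EN n) (2 * (a + s₀))).indicator fun _ => 3 * (2 * C / ω)) ?_ ?_ ?_ ?_
    · exact Eventually.of_forall fun m => (Ei m).aestronglyMeasurable
    · refine Eventually.of_forall fun m => Eventually.of_forall fun t => ?_
      have g1 : |g m t| ≤ 2 * C / ω := bd m T hT hTε t
      have k1 : |k m t| ≤ 2 * C / ω := bd m U Ub Uε _
      by_cases ht : t ∈ closedBall (0 : EN n) (2 * (a + s₀))
      · rw [indicator_of_mem ht, Real.norm_of_nonneg (le_max_right _ _)]
        have q1 := abs_sub (g m t) (k m t)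
        have q2 : |δ * σ m * k m t| ≤ |k m t| := by
          rw [abs_mul, abs_mul, hσ1, mul_one, abs_of_nonneg δ0]
          nlinarith [abs_nonneg (k m t)]
        have q3 := (abs_le.1 q2).1
        apply max_le
        · simp only [D]; linarith
        · linarith [abs_nonneg (k m t)]
      · rw [indicator_of_notMem ht]
        rw [mem_closedBall_zero_iff, not_le] at ht
        have z1 : g m t = 0 := by
          simp only [g]
          rw [kin_supp h.sv ha subset_rfl, zero_div]
          rw [mem_closedBall_zero_iff, not_le]
          linarith [ss m]
        have z2 : k m t = 0 := by
          simp only [k]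
          rw [kin_supp h.sv haU subset_rfl, zero_div]
          rw [mem_closedBall_zero_iff, not_le, norm_smul]
          norm_num
          linarith [ss m]
        simp [E, D, z1, z2]
    · rw [integrable_indicator_iff measurableSet_closedBall]
      exact integrableOn_const (measure_closedBall_lt_top).ne
    · have : ∀ᵐ x : EN n, x ∉ frontier T := by
        rw [ae_iff]; simpa using hT.cvx.addHaar_frontier volume
      filter_upwards [this] with t ht
      apply tendsto_const_nhds.congr'
      have dd : ∀ x : EN n, dist ((2:ℝ) • x) t = 2 * dist x ((1/2:ℝ) • t) := by
        intro x
        rw [dist_eq_norm, dist_eq_norm, show (2:ℝ) • x - t = (2:ℝ) • (x - (1/2:ℝ) • t) by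
          rw [smul_sub, smul_smul]; norm_num, norm_smul]
        norm_num
      by_cases htT : t ∈ T
      · have hi : t ∈ interior T := by
          by_contra hi
          exact ht ⟨subset_closure htT, hi⟩
        obtain ⟨ρ, ρ0, hρ⟩ := Metric.isOpen_iff.1 isOpen_interior t hi
        filter_upwards [slim.eventually (gt_mem_nhds (half_pos ρ0))] with m hm
        have i1 : t +ᵥ closedBall (0 : EN n) (s m) ⊆ T := by
          rw [vadd_cball]
          intro x hx
          exact interior_subset (hρ (by rw [mem_ball]; rw [mem_closedBall] at hx; linarith))
        have i2 : ((1/2:ℝ) • t) +ᵥ closedBall (0 : EN n) (s m) ⊆ U := by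
          rw [vadd_cball]
          intro x hx
          rw [hU, half_mem]
          refine interior_subset (hρ ?_)
          rw [mem_ball, dd]; rw [mem_closedBall] at hx; linarith
        have ge : g m t = v (t +ᵥ closedBall (0 : EN n) (s m)) / c m := by
          simp only [g]; rw [inter_eq_right.2 i1]
        have ke : k m t = v (((1/2:ℝ) • t) +ᵥ closedBall (0 : EN n) (s m)) / c m := by
          simp only [k]; rw [inter_eq_right.2 i2]
        set Y := ((1/2:ℝ) • t) +ᵥ closedBall (0 : EN n) (s m) with hY
        have hYb : IsConvexBody Y := (Bb m).vadd _
        have e1 : t +ᵥ closedBall (0 : EN n) (s m) = ((1/2:ℝ) • t) +ᵥ Y := by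
          rw [hY, vadd_vadd, ← add_smul]; norm_num
        have q1 := h.tr Y ((1/2:ℝ) • t) hYb.cpt hYb.cvx (i2.trans Uε) (by rw [← e1]; exact i1.trans hTε)
        have q2 := h.tr (closedBall (0 : EN n) (s m)) ((1/2:ℝ) • t) (Bb m).cpt (Bb m).cvx (hsub m) (i2.trans Uε)
        rw [← e1] at q1
        rw [← hY] at q2
        have q3 : 0 ≤ σ m * v Y := by
          have : |σ m * (v Y - v (closedBall (0 : EN n) (s m)))| ≤ δ * |v (closedBall (0 : EN n) (s m))| := by
            rw [abs_mul, hσ1, one_mul]; exact q2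
          have := (abs_le.1 this).1
          rw [mul_sub, hσ] at this
          nlinarith [abs_nonneg (v (closedBall (0 : EN n) (s m)))]
        have q4 : |v Y| = σ m * v Y := by
          rw [← abs_of_nonneg q3, abs_mul, hσ1, one_mul]
        have : D m t ≤ 0 := by
          simp only [D]
          rw [ge, ke, ← sub_div, abs_div, abs_of_pos (c0 m), ← mul_div_assoc, ← sub_div]
          apply div_nonpos_of_nonpos_of_nonneg _ (c0 m).le
          rw [q4] at q1
          linarith
        exact (max_eq_right this).symm
      · obtain ⟨ρ, ρ0, hρ⟩ := Metric.isOpen_iff.1 hT.cpt.isClosed.isOpen_compl t htT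
        filter_upwards [slim.eventually (gt_mem_nhds (half_pos ρ0))] with m hm
        have i1 : T ∩ (t +ᵥ closedBall (0 : EN n) (s m)) = ∅ := by
          rw [vadd_cball, eq_empty_iff_forall_notMem]
          rintro x ⟨hx, hx'⟩
          exact hρ (by rw [mem_ball]; rw [mem_closedBall] at hx'; linarith) hx
        have i2 : U ∩ (((1/2:ℝ) • t) +ᵥ closedBall (0 : EN n) (s m)) = ∅ := by
          rw [vadd_cball, eq_empty_iff_forall_notMem]
          rintro x ⟨hx, hx'⟩
          refine hρ ?_ (half_mem.1 hx)
          rw [mem_ball, dd]; rw [mem_closedBall] at hx'; linarith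
        have z1 : g m t = 0 := by simp only [g]; rw [i1, h.sv.empty, zero_div]
        have z2 : k m t = 0 := by simp only [k]; rw [i2, h.sv.empty, zero_div]
        simp [E, D, z1, z2]
  rw [integral_zero] at hlim
  have fin : ∀ m, |v T - 2 ^ n * v U| - δ * (2 ^ n * |v U|) ≤ ∫ t, E m t := by
    intro m
    have l1 : ∫ t, D m t ≤ ∫ t, E m t := integral_mono (Di m) (Ei m) fun t => le_max_left _ _
    have l2 : ∫ t, D m t = (∫ t, |g m t - k m t|) - δ * σ m * (2 ^ n * v U) := by
      have := integral_sub ((gi m).sub (ki m)).abs ((ki m).const_mul (δ * σ m))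
      rw [integral_const_mul, kI] at this
      exact this
    have l3 : |∫ t, (g m t - k m t)| ≤ ∫ t, |g m t - k m t| := abs_integral_le_integral_abs
    rw [integral_sub (gi m) (ki m), gI, kI] at l3
    have l4 : δ * σ m * (2 ^ n * v U) ≤ δ * (2 ^ n * |v U|) := by
      refine (le_abs_self _).trans ?_
      rw [abs_mul, abs_mul, hσ1, mul_one, abs_of_nonneg δ0, abs_mul, abs_of_pos (by positivity : (0:ℝ) < 2 ^ n)]
    linarith
  have := ge_of_tendsto' hlim fin
  linarith
end

end PartB2

lemma QI.step {n : ℕ} {v : Set (EN n) → ℝ} {M ε : ℝ} (h : QI v (M * ε) ε) (hM : 0 < M) {T : Set (EN n)}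
    (hT : IsConvexBody T) (hTε : T ⊆ ball 0 ε) :
    ∃ a : ℝ, |a| ≤ M ∧ v T = 2 ^ n * v ((1 / 2 : ℝ) • T) * (1 + a * ε) := by
  have hh := h.half hT hTε
  have ε0 := h.ε0
  set W := 2 ^ n * v ((1 / 2 : ℝ) • T) with hW
  have eW : 2 ^ n * |v ((1 / 2 : ℝ) • T)| = |W| := by
    rw [hW, abs_mul, abs_of_pos (by positivity : (0:ℝ) < 2 ^ n)]
  rw [eW] at hh
  by_cases hW0 : W = 0
  · refine ⟨0, by simpa using hM.le, ?_⟩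
    rw [hW0] at hh ⊢
    simpa using hh
  · refine ⟨(v T - W) / (W * ε), ?_, by field_simp; ring⟩
    rw [abs_div, div_le_iff₀ (by positivity), abs_mul, abs_of_pos ε0]
    linarith

lemma prod_aux {x : ℕ → ℝ} {δ : ℝ} (δ1 : δ < 1) (hx : ∀ i : ℕ, |x i| ≤ (1 / 2 : ℝ) ^ i * δ) (δ0 : 0 ≤ δ) :
    (∀ i, 0 < 1 + x i) ∧ Multipliable (fun i => (1 + x i)⁻¹) := by
  have h1 : ∀ i, |x i| ≤ δ := fun i => (hx i).trans
    (mul_le_of_le_one_left δ0 (pow_le_one₀ (by norm_num) (by norm_num)))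
  have h2 : ∀ i, 1 - δ ≤ 1 + x i := fun i => by linarith [(abs_le.1 (h1 i)).1]
  have h3 : ∀ i, 0 < 1 + x i := fun i => by linarith [h2 i]
  refine ⟨h3, ?_⟩
  have e : (fun i => (1 + x i)⁻¹) = fun i => 1 + (-(x i) / (1 + x i)) := by
    ext i; have := (h3 i).ne'; field_simp; ring
  rw [e]
  apply multipliable_one_add_of_summable
  have sg : Summable (fun i : ℕ => (1 / 2 : ℝ) ^ i * (δ / (1 - δ))) :=
    (summable_geometric_of_lt_one (by norm_num) (by norm_num)).mul_right _
  refine Summable.of_nonneg_of_le (fun i => norm_nonneg _) (fun i => ?_) sg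
  rw [Real.norm_eq_abs, abs_div, abs_neg, abs_of_pos (h3 i), ← mul_div_assoc]
  have : (0:ℝ) ≤ (1 / 2 : ℝ) ^ i * δ := by positivity
  exact div_le_div₀ this (hx i) (by linarith) (h2 i)

/-- for a simple, continuous valuation `v` satisfying condition (*)
(uniformly bounded on polytopes in the unit ball and almost invariant under
isometries on small balls), for every `n`-simplex `T` contained in a small ball
`B(0,ε)`, the rescaled sequence `v_p(T) = 2^{np} v(2^{-p} T)` converges, with limit
`v(T) · ∏_{i} 1/(1 + 2^{-i} αᵢ ε)` for some sequence `(αᵢ)` with `|αᵢ| ≤ M`. -/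
theorem stmt9 {n : ℕ} (v : Set (EuclideanSpace ℝ (Fin n)) → ℝ)
    (hempty : v ∅ = 0)
    (hval : ∀ K L : Set (EuclideanSpace ℝ (Fin n)), IsConvexBody K → IsConvexBody L →
      Convex ℝ (K ∪ L) → v (K ∪ L) = v K + v L - v (K ∩ L))
    (hsimple : ∀ K : Set (EuclideanSpace ℝ (Fin n)), IsConvexBody K →
      affineSpan ℝ K ≠ ⊤ → v K = 0)
    (hcont : ∀ (K : ℕ → Set (EuclideanSpace ℝ (Fin n))) (L : Set (EuclideanSpace ℝ (Fin n))),
      (∀ m, IsConvexBody (K m)) → IsConvexBody L →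
      Tendsto (fun m => Metric.hausdorffDist (K m) L) atTop (nhds 0) →
      Tendsto (fun m => v (K m)) atTop (nhds (v L)))
    (hbd : ∃ B : ℝ, ∀ P : Set (EuclideanSpace ℝ (Fin n)), IsPolytope P →
      P ⊆ Metric.closedBall 0 1 → |v P| ≤ B)
    (M ε₀ : ℝ) (hM : 0 < M) (hε₀ : 0 < ε₀)
    (hstar : ∀ ε : ℝ, 0 < ε → ε < ε₀ →
      ∀ P : Set (EuclideanSpace ℝ (Fin n)), IsPolytope P →
      ∀ g : EuclideanSpace ℝ (Fin n) ≃ᵢ EuclideanSpace ℝ (Fin n),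
        P ⊆ Metric.ball 0 ε → g '' P ⊆ Metric.ball 0 ε →
        ∃ a : ℝ, |a| ≤ M ∧ v (g '' P) = v P * (1 + a * ε)) :
    ∀ ε : ℝ, 0 < ε → ε < ε₀ → M * ε < 1 →
      ∀ T : Set (EuclideanSpace ℝ (Fin n)), IsSimplex T → T ⊆ Metric.ball 0 ε →
        ∃ a : ℕ → ℝ, (∀ i, |a i| ≤ M) ∧
          Multipliable (fun i : ℕ => (1 + (2 : ℝ) ^ (-(i : ℤ)) * a i * ε)⁻¹) ∧
          Tendsto (fun p : ℕ => (2 : ℝ) ^ (n * p) * v (((2 : ℝ) ^ (-(p : ℤ))) • T)) atTop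
            (nhds (v T * ∏' i : ℕ, (1 + (2 : ℝ) ^ (-(i : ℤ)) * a i * ε)⁻¹)) := by
  intro ε hε hεε₀ hMε T hT hTε
  have hv : SV v := ⟨hempty, hval, hsimple, hcont⟩
  obtain ⟨q, -, rfl⟩ := hT
  set T := convexHull ℝ (Set.range q) with hTdef
  have Tb : IsConvexBody T := ⟨convexHull_nonempty_iff.2 (range_nonempty q),
    (finite_range q).isCompact_convexHull ℝ, convex_convexHull ℝ _⟩
  have e2 : ∀ p : ℕ, (2:ℝ) ^ (-(p:ℤ)) = (1 / 2 : ℝ) ^ p := by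
    intro p; rw [zpow_neg, zpow_natCast, one_div, inv_pow]
  simp only [e2]
  have key : ∀ p : ℕ, ∃ a : ℝ, |a| ≤ M ∧ v ((1 / 2 : ℝ) ^ p • T) =
      2 ^ n * v ((1 / 2 : ℝ) ^ (p + 1) • T) * (1 + (1 / 2 : ℝ) ^ p * a * ε) := by
    intro p
    have hp0 : (0:ℝ) < (1 / 2 : ℝ) ^ p := by positivity
    have hp1 : (1 / 2 : ℝ) ^ p ≤ 1 := pow_le_one₀ (by norm_num) (by norm_num)
    have hle : (1 / 2 : ℝ) ^ p * ε ≤ ε := mul_le_of_le_one_left hε.le hp1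
    have q := qi_of_star hv hM (ε := (1 / 2 : ℝ) ^ p * ε) (by positivity)
      (lt_of_le_of_lt (by gcongr) hMε) (hstar _ (by positivity) (hle.trans_lt hεε₀))
    have hb : IsConvexBody ((1 / 2 : ℝ) ^ p • T) := ⟨Tb.ne.smul_set, Tb.cpt.smul _, Tb.cvx.smul _⟩
    obtain ⟨a, ha, e⟩ := q.step hM hb (by
      rintro _ ⟨x, hx, rfl⟩
      have := hTε hx
      rw [mem_ball_zero_iff] at *
      simp only [norm_smul, Real.norm_of_nonneg hp0.le]
      gcongr)
    refine ⟨a, ha, ?_⟩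
    rw [e, smul_smul, pow_succ']
    ring
  choose a ha hstep using key
  obtain ⟨pos, mult⟩ := prod_aux (x := fun i => (1 / 2 : ℝ) ^ i * a i * ε) hMε (fun i => by
    rw [abs_mul, abs_mul, abs_of_pos hε, abs_of_pos (by positivity), mul_assoc]
    gcongr
    exact ha i) (by positivity)
  refine ⟨a, ha, mult, ?_⟩
  have e : ∀ p : ℕ, (2:ℝ) ^ (n * p) * v ((1 / 2 : ℝ) ^ p • T) =
      v T * ∏ i ∈ Finset.range p, (1 + (1 / 2 : ℝ) ^ i * a i * ε)⁻¹ := by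
    intro p
    induction p with
    | zero => simp
    | succ p ih =>
      rw [Finset.prod_range_succ, ← mul_assoc, ← ih, hstep p]
      have := (pos p).ne'
      field_simp
      ring
  simp only [e]
  exact mult.hasProd.tendsto_prod_nat.const_mul (v T)
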